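/- Let Q be a finite quiver with no oriented cycles, K an algebraically closed field, and let d' ≤ d be dimension vectors (componentwise). Then the following are equivalent: (a) generically, the representations of KQ of dimension vector d have a subrepresentation of dimension vector d', i.e., there is a dense open subset of Rep_d(KQ) each of whose points encodes a module possessing a submodule of dimension vector d'; (b) every representation of KQ of dimension vector d has a subrepresentation of dimension vector d'; (c) ext(d', d − d') = 0. -/

import Mathlib

open Finset

/-! # Varieties of representations of a quiver with relations: basic setup -/

/-- The Zariski topology on the affine space `ι → K`: it is generated by the basic open
sets `D(p) = {x | p(x) ≠ 0}`, where `p` ranges over multivariate polynomials. -/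
def zariskiTopology (ι K : Type) [CommSemiring K] : TopologicalSpace (ι → K) :=
  TopologicalSpace.generateFrom
    {U | ∃ p : MvPolynomial ι K, U = {x | MvPolynomial.eval x p ≠ 0}}

/-- A finite quiver `Q`: vertices `Fin n`, arrows `Fin numArrows` with source and
target maps. -/
structure QuiverData where
  n : ℕ
  numArrows : ℕ
  src : Fin numArrows → Fin n
  tgt : Fin numArrows → Fin n

namespace QuiverData

variable (Q : QuiverData) (d : Fin Q.n → ℕ) (K : Type) [Field K]

/-- Index of the coordinates of the affine space of `d`-dimensional representations:
for each arrow `a` a matrix entry index in `Fin (d (tgt a)) × Fin (d (src a))`. -/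
abbrev Coords := Σ a : Fin Q.numArrows, Fin (d (Q.tgt a)) × Fin (d (Q.src a))

/-- The affine space of `d`-dimensional representations of `Q`:
a point `x` assigns to each arrow `a` a `d (tgt a) × d (src a)` matrix over `K`. -/
abbrev RepSpace := Coords Q d → K

/-- `RepSpace` carries the Zariski topology. -/
noncomputable instance instRepTop : TopologicalSpace (RepSpace Q d K) :=
  zariskiTopology (Coords Q d) K

/-- The underlying `K`-vector space `⊕ᵢ K^{dᵢ}` of any `d`-dimensional representation. -/
abbrev Carrier := (Σ i : Fin Q.n, Fin (d i)) → K

/-- The projection onto the component of the `i`-th vertex (action of the primitive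
idempotent `eᵢ`). -/
def proj (i : Fin Q.n) : Carrier Q d K →ₗ[K] Carrier Q d K where
  toFun m := fun jv => if jv.1 = i then m jv else 0
  map_add' u v := by
    funext jv; by_cases h : jv.1 = i <;> simp [h]
  map_smul' c u := by
    funext jv; by_cases h : jv.1 = i <;> simp [h]

/-- The action of the arrow `a` on the carrier space of the representation `x`. -/
noncomputable def arrowMap (x : RepSpace Q d K) (a : Fin Q.numArrows) :
    Carrier Q d K →ₗ[K] Carrier Q d K where
  toFun m := fun jv =>
    if h : jv.1 = Q.tgt a then
      ∑ w : Fin (d (Q.src a)), x ⟨a, (Fin.cast (congrArg d h) jv.2, w)⟩ * m ⟨Q.src a, w⟩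
    else 0
  map_add' u v := by
    funext jv
    by_cases h : jv.1 = Q.tgt a <;> simp [h, mul_add, Finset.sum_add_distrib]
  map_smul' c u := by
    funext jv
    by_cases h : jv.1 = Q.tgt a <;>
      simp [h, Finset.mul_sum, mul_comm, mul_left_comm, mul_assoc]

/-- The action of a word `w = [a_k, …, a_1]` of arrows on the representation `x`
(the arrow `a_1` acts first; non-composable words act as `0`). -/
noncomputable def wordMap (x : RepSpace Q d K) (w : List (Fin Q.numArrows)) :
    Module.End K (Carrier Q d K) :=
  (w.map fun a => (arrowMap Q d K x a : Module.End K (Carrier Q d K))).prod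

/-- The submodule `J^l · M_x` of the module `M_x`: the sum of the images of all words of
arrows of length `l` (for an admissible ideal, the radical acts through the arrows). -/
noncomputable def radPow (x : RepSpace Q d K) (l : ℕ) : Submodule K (Carrier Q d K) :=
  ⨆ w : {w : List (Fin Q.numArrows) // w.length = l},
    LinearMap.range (wordMap Q d K x w.1)

/-- The socle series of `M_x`: `socPow x l = soc_l(M_x)`. -/
noncomputable def socPow (x : RepSpace Q d K) : ℕ → Submodule K (Carrier Q d K)
  | 0 => ⨅ a, LinearMap.ker (arrowMap Q d K x a)
  | (l+1) => ⨅ a, (socPow x l).comap (arrowMap Q d K x a)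

/-- The dimension, at the vertex `i`, of a (vertex-graded) subspace `N`. -/
noncomputable def vdim (N : Submodule K (Carrier Q d K)) (i : Fin Q.n) : ℕ :=
  Module.finrank K (N.map (proj Q d K i))

/-- The radical layering `S(M_x) = (M/JM, JM/J²M, …, J^L M/J^{L+1} M)` of the module `M_x`,
recorded through the dimension vectors of its semisimple layers. -/
noncomputable def radLayering (L : ℕ) (x : RepSpace Q d K) :
    Fin (L+1) → Fin Q.n → ℕ :=
  fun l i => vdim Q d K (radPow Q d K x l) i - vdim Q d K (radPow Q d K x (l+1)) i

/-- The socle layering `S*(M_x) = (soc₀M, soc₁M/soc₀M, …)` of the module `M_x`, recorded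
through the dimension vectors of its semisimple layers. -/
noncomputable def socLayering (L : ℕ) (x : RepSpace Q d K) :
    Fin (L+1) → Fin Q.n → ℕ :=
  fun l i => vdim Q d K (socPow Q d K x l) i -
    (if (l : ℕ) = 0 then 0 else vdim Q d K (socPow Q d K x ((l : ℕ) - 1)) i)

end QuiverData

/-- The dominance order on semisimple sequences (recorded as sequences of dimension
vectors): `dominates S S'` means `S ≤ S'`, i.e. `⊕_{j≤l} S_j ⊆ ⊕_{j≤l} S'_j` for all `l`. -/
def dominates {n L : ℕ} (S S' : Fin (L+1) → Fin n → ℕ) : Prop :=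
  ∀ (l : Fin (L+1)) (i : Fin n),
    ∑ j ∈ Finset.univ.filter (fun j => j ≤ l), S j i ≤
      ∑ j ∈ Finset.univ.filter (fun j => j ≤ l), S' j i

/-- A semisimple sequence has dimension vector `d` if its layers' dimension vectors sum
to `d`. -/
def hasDimVec {n L : ℕ} (S : Fin (L+1) → Fin n → ℕ) (d : Fin n → ℕ) : Prop :=
  ∀ i, ∑ l, S l i = d i

namespace QuiverData

variable (Q : QuiverData) (d : Fin Q.n → ℕ) (K : Type) [Field K]

/-- Evaluation of a formal noncommutative polynomial in the vertices (`Sum.inl`) and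
arrows (`Sum.inr`) of `Q` on the representation `x`; an element of the path algebra `KQ`
is represented by such a polynomial. -/
noncomputable def evalRel (x : RepSpace Q d K) :
    FreeAlgebra K (Fin Q.n ⊕ Fin Q.numArrows) →ₐ[K] Module.End K (Carrier Q d K) :=
  FreeAlgebra.lift K
    (Sum.elim (fun i => (proj Q d K i : Module.End K (Carrier Q d K)))
      (fun a => (arrowMap Q d K x a : Module.End K (Carrier Q d K))))

/-- The affine variety `Rep_d(Λ)` for `Λ = KQ/I`, where the ideal `I` is generated by the
set `R` of relations: the set of points of `RepSpace` annihilating every relation. -/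
def RepVar (R : Set (FreeAlgebra K (Fin Q.n ⊕ Fin Q.numArrows))) :
    Set (RepSpace Q d K) :=
  {x | ∀ r ∈ R, evalRel Q d K x r = 0}

/-- The affine variety `Rep_d(Λ)` for the truncated path algebra
`Λ = KQ/⟨all paths of length L+1⟩`. -/
def TruncRepVar (L : ℕ) : Set (RepSpace Q d K) :=
  {x | ∀ w : List (Fin Q.numArrows), w.length = L + 1 → wordMap Q d K x w = 0}

/-- A submodule of `M_x`, i.e. a subspace stable under the arrows and the vertex
idempotents. -/
def Stable (x : RepSpace Q d K) (N : Submodule K (Carrier Q d K)) : Prop :=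
  (∀ a, N.map (arrowMap Q d K x a) ≤ N) ∧ ∀ i, N.map (proj Q d K i) ≤ N

/-- A submodule `N` of `M_x` is indecomposable (as a module). -/
def IndecompSub (x : RepSpace Q d K) (N : Submodule K (Carrier Q d K)) : Prop :=
  N ≠ ⊥ ∧ ∀ N₁ N₂ : Submodule K (Carrier Q d K),
    Stable Q d K x N₁ → Stable Q d K x N₂ → N₁ ≤ N → N₂ ≤ N →
    N₁ ⊔ N₂ = N → N₁ ⊓ N₂ = ⊥ → N₁ = ⊥ ∨ N₂ = ⊥

/-- The module `M_x` is indecomposable. -/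
def IndecompRep (x : RepSpace Q d K) : Prop :=
  IndecompSub Q d K x ⊤

/-- The module `M_x` is uniserial: its submodules form a chain. -/
def UniserialRep (x : RepSpace Q d K) : Prop :=
  ∀ N₁ N₂ : Submodule K (Carrier Q d K),
    Stable Q d K x N₁ → Stable Q d K x N₂ → N₁ ≤ N₂ ∨ N₂ ≤ N₁

/-- `M_x` decomposes as a direct sum of `s` indecomposable submodules whose dimension
vectors are `D 0, …, D (s-1)`. -/
def DecompWith (x : RepSpace Q d K) (s : ℕ) (D : Fin s → Fin Q.n → ℕ) : Prop :=
  ∃ N : Fin s → Submodule K (Carrier Q d K),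
    (∀ r, Stable Q d K x (N r)) ∧
    (∀ r, Disjoint (N r) (⨆ t, ⨆ (_ : t ≠ r), N t)) ∧
    (⨆ r, N r) = ⊤ ∧
    (∀ r, IndecompSub Q d K x (N r)) ∧
    ∀ r i, vdim Q d K (N r) i = D r i

/-- A homomorphism of representations `M_x → M_y` (for possibly different dimension
vectors): a linear map commuting with the arrow actions and the vertex projections. -/
def RepHom (dx dy : Fin Q.n → ℕ) (x : RepSpace Q dx K) (y : RepSpace Q dy K)
    (φ : Carrier Q dx K →ₗ[K] Carrier Q dy K) : Prop :=
  (∀ a, φ ∘ₗ arrowMap Q dx K x a = arrowMap Q dy K y a ∘ₗ φ) ∧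
  ∀ i, φ ∘ₗ proj Q dx K i = proj Q dy K i ∘ₗ φ

/-- The submodule `N` of `M_x` is isomorphic, as a representation, to `M_y`. -/
def SubrepIso (dy : Fin Q.n → ℕ) (x : RepSpace Q d K)
    (N : Submodule K (Carrier Q d K)) (y : RepSpace Q dy K) : Prop :=
  ∃ φ : Carrier Q d K →ₗ[K] Carrier Q dy K,
    N ⊓ LinearMap.ker φ = ⊥ ∧ N.map φ = ⊤ ∧
    (∀ a, ∀ m ∈ N, φ (arrowMap Q d K x a m) = arrowMap Q dy K y a (φ m)) ∧
    (∀ i, ∀ m ∈ N, φ (proj Q d K i m) = proj Q dy K i (φ m))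

/-- The representations `M_x` and `M_y` are isomorphic; the isomorphism classes are
exactly the orbits of the `GL(d)`-action. -/
def IsoRep (x y : RepSpace Q d K) : Prop :=
  ∃ φ : Carrier Q d K ≃ₗ[K] Carrier Q d K,
    (∀ a m, φ (arrowMap Q d K x a m) = arrowMap Q d K y a (φ m)) ∧
    ∀ i m, φ (proj Q d K i m) = proj Q d K i (φ m)

/-- The `GL(d)`-orbit of the point `x`, i.e. the set of points encoding modules
isomorphic to `M_x`. -/
def orbitSet (x : RepSpace Q d K) : Set (RepSpace Q d K) :=
  {y | IsoRep Q d K x y}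

/-- Given a family `P` of varieties `Rep_dv(Λ)` (one for every dimension vector `dv`),
`Ext¹_Λ(M_x, M_y) = 0`: every extension `0 → M_y → E → M_x → 0` of `Λ`-modules splits. -/
def Ext1Zero (P : ∀ dv : Fin Q.n → ℕ, Set (RepSpace Q dv K))
    (dx dy : Fin Q.n → ℕ) (x : RepSpace Q dx K) (y : RepSpace Q dy K) : Prop :=
  ∀ z ∈ P (fun i => dx i + dy i),
    ∀ (ι : Carrier Q dy K →ₗ[K] Carrier Q (fun i => dx i + dy i) K)
      (π : Carrier Q (fun i => dx i + dy i) K →ₗ[K] Carrier Q dx K),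
      RepHom Q K dy (fun i => dx i + dy i) y z ι →
      RepHom Q K (fun i => dx i + dy i) dx z x π →
      Function.Injective ι → Function.Surjective π →
      LinearMap.ker π = LinearMap.range ι →
      ∃ σ : Carrier Q dx K →ₗ[K] Carrier Q (fun i => dx i + dy i) K,
        RepHom Q K dx (fun i => dx i + dy i) x z σ ∧ π ∘ₗ σ = LinearMap.id

/-- The direct sum `C₁ ⊕ ⋯ ⊕ C_s` of subvarieties `C_r ⊆ Rep_{D r}(Λ)`: the set of
points `x ∈ Rep_d(Λ)` whose module decomposes as `M_x ≅ ⊕_r M^{(r)}` with `M^{(r)}`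
encoded by a point of `C_r`. -/
def DirectSumSet (s : ℕ) (D : Fin s → Fin Q.n → ℕ)
    (Cs : ∀ r : Fin s, Set (RepSpace Q (D r) K)) : Set (RepSpace Q d K) :=
  {x | ∃ N : Fin s → Submodule K (Carrier Q d K),
    (∀ r, Stable Q d K x (N r)) ∧
    (∀ r, Disjoint (N r) (⨆ t, ⨆ (_ : t ≠ r), N t)) ∧
    (⨆ r, N r) = ⊤ ∧
    ∀ r, ∃ y ∈ Cs r, SubrepIso Q d K (D r) x (N r) y}

/-- The endomorphism space `End_Λ(M_x)` of the module `M_x`. -/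
def endSpace (x : RepSpace Q d K) :
    Submodule K (Carrier Q d K →ₗ[K] Carrier Q d K) where
  carrier := {φ | RepHom Q K d d x x φ}
  add_mem' := by
    intro φ ψ hφ hψ
    exact ⟨fun a => by rw [LinearMap.add_comp, LinearMap.comp_add, hφ.1 a, hψ.1 a],
      fun i => by rw [LinearMap.add_comp, LinearMap.comp_add, hφ.2 i, hψ.2 i]⟩
  zero_mem' := by
    exact ⟨fun a => by simp, fun i => by simp⟩
  smul_mem' := by
    intro c φ hφ
    exact ⟨fun a => by rw [LinearMap.smul_comp, LinearMap.comp_smul, hφ.1 a],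
      fun i => by rw [LinearMap.smul_comp, LinearMap.comp_smul, hφ.2 i]⟩

/-- A word of arrows is a (composable) path when read in function-composition order. -/
def IsPathWord (w : List (Fin Q.numArrows)) : Prop :=
  List.Chain' (fun a b => Q.src a = Q.tgt b) w

/-- The quiver `Q` has no oriented cycles. -/
def Acyclic : Prop :=
  ∀ (a : Fin Q.numArrows) (w : List (Fin Q.numArrows)),
    IsPathWord Q (a :: w) →
      Q.tgt a ≠ Q.src ((a :: w).getLast (List.cons_ne_nil a w))

/-- A filtration `M_x = F 0 ⊇ F 1 ⊇ ⋯ ⊇ F (L+1) = 0` by submodules which is governed by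
the semisimple sequence `S`: each layer `F l / F (l+1)` is semisimple, isomorphic to `S l`. -/
def Governed (L : ℕ) (x : RepSpace Q d K) (S : Fin (L+1) → Fin Q.n → ℕ)
    (F : Fin (L+2) → Submodule K (Carrier Q d K)) : Prop :=
  F 0 = ⊤ ∧ F (Fin.last (L+1)) = ⊥ ∧
  (∀ l : Fin (L+1), F l.succ ≤ F l.castSucc) ∧
  (∀ (l : Fin (L+2)) (i : Fin Q.n), (F l).map (proj Q d K i) ≤ F l) ∧
  (∀ (l : Fin (L+1)) (a : Fin Q.numArrows),
      (F l.castSucc).map (arrowMap Q d K x a) ≤ F l.succ) ∧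
  ∀ (l : Fin (L+1)) (i : Fin Q.n),
      vdim Q d K (F l.castSucc) i = S l i + vdim Q d K (F l.succ) i

/-- `Filt S`: the set of points whose module has a filtration governed by `S`. -/
def FiltSet (L : ℕ) (S : Fin (L+1) → Fin Q.n → ℕ) : Set (RepSpace Q d K) :=
  {x | ∃ F, Governed Q d K L x S F}

/-- `Γ(M_x)`: the number of semisimple sequences which are realizable (i.e. occur as the
radical layering of a module in the variety `P`) and which govern some filtration of `M_x`. -/
noncomputable def gammaCount (L : ℕ) (P : Set (RepSpace Q d K))
    (x : RepSpace Q d K) : ℕ :=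
  Set.ncard {S : Fin (L+1) → Fin Q.n → ℕ |
    (∃ y ∈ P, radLayering Q d K L y = S) ∧ ∃ F, Governed Q d K L x S F}

/-- `Sstar` is the generic (= minimal, attained) socle layering of the modules in `W`. -/
def GenSoc (L : ℕ) (W : Set (RepSpace Q d K))
    (Sstar : Fin (L+1) → Fin Q.n → ℕ) : Prop :=
  (∀ x ∈ W, dominates Sstar (socLayering Q d K L x)) ∧
  ∃ x ∈ W, socLayering Q d K L x = Sstar

end QuiverData

namespace QuiverData

variable (Q : QuiverData)

/-- The `i`-th entry of the row vector `e·A` (over `ℤ`), where `A` is the adjacency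
matrix of `Q`: the sum of `e (src a)` over all arrows `a` ending at `i`. -/
def inflowZ (e : Fin Q.n → ℤ) (i : Fin Q.n) : ℤ :=
  ∑ a ∈ Finset.univ.filter (fun a => Q.tgt a = i), e (Q.src a)

/-- The `i`-th entry of the row vector `e·B` (over `ℤ`), where `B` is the transpose of
the adjacency matrix of `Q`. -/
def outflowZ (e : Fin Q.n → ℤ) (i : Fin Q.n) : ℤ :=
  ∑ a ∈ Finset.univ.filter (fun a => Q.src a = i), e (Q.tgt a)

/-- Partial sums `t⁽⁰⁾ + ⋯ + t⁽ˡ⁾` of the recursion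
`t⁽⁰⁾ = sup{0, d − d·A}`, `t⁽ˡ⁺¹⁾ = sup{0, (d − ∑_{k≤l} t⁽ᵏ⁾) − (d − ∑_{k≤l} t⁽ᵏ⁾)·A}`
(computed componentwise). -/
def cumLayer (dz : Fin Q.n → ℤ) : ℕ → Fin Q.n → ℤ
  | 0 => fun i => max 0 (dz i - inflowZ Q dz i)
  | (l+1) => fun i =>
      cumLayer dz l i +
        max 0 ((dz i - cumLayer dz l i) -
          inflowZ Q (fun j => dz j - cumLayer dz l j) i)

/-- The positive part `∑ᵢ eᵢ fᵢ` of the Euler form of `Q`. -/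
def eulerHomPart (e f : Fin Q.n → ℕ) : ℕ := ∑ i, e i * f i

/-- The negative part `∑_{α} e_{src α} f_{tgt α}` of the Euler form of `Q`, so that
`⟨e, f⟩ = eulerHomPart e f − eulerExtPart e f`. -/
def eulerExtPart (e f : Fin Q.n → ℕ) : ℕ :=
  ∑ a, e (Q.src a) * f (Q.tgt a)

end QuiverData

/-- The quiver with a single vertex and `r` loops. -/
def QuiverData.loopQuiver (r : ℕ) : QuiverData :=
  ⟨1, r, fun _ => 0, fun _ => 0⟩

namespace QuiverData

variable (Q : QuiverData) (d : Fin Q.n → ℕ) (K : Type) [Field K]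

/-- The variety `Rep_d(Λ)` for `Λ = KQ/⟨Rels⟩`, regarded as a topological space with the
(subspace) Zariski topology. -/
abbrev GenV (Rels : Set (FreeAlgebra K (Fin Q.n ⊕ Fin Q.numArrows))) :=
  {y : RepSpace Q d K // y ∈ RepVar Q d K Rels}

/-- The variety `Rep_d(Λ)` for the truncated path algebra
`Λ = KQ/⟨paths of length L+1⟩`, regarded as a topological space. -/
abbrev TruncV (L : ℕ) := {y : RepSpace Q d K // y ∈ TruncRepVar Q d K L}

end QuiverData

namespace SchQ
open Finset

set_option linter.unusedSectionVars false
set_option linter.unusedDecidableInType false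
set_option linter.unusedFintypeInType false

/-- Combinatorial data: a finite index set of basis vectors with vertices, and arrows. -/
structure QD (I V Arr : Type) where
  v : I → V
  src : Arr → V
  tgt : Arr → V

section basics
variable {I V Arr : Type} [Fintype I] [DecidableEq I] (D : QD I V Arr)

abbrev HI (s : I → I → Prop) := {t : I × I // D.v t.1 = D.v t.2 ∧ s t.1 t.2}

abbrev AI (s : I → I → Prop) :=
  {t : Arr × I × I // (D.v t.2.1 = D.tgt t.1 ∧ D.v t.2.2 = D.src t.1) ∧ s t.2.1 t.2.2}

abbrev Co := AI D (fun _ _ => True)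

def HS {R : Type} [Zero R] (s : I → I → Prop) (m : Matrix I I R) : Prop :=
  ∀ p q, ¬ (D.v p = D.v q ∧ s p q) → m p q = 0

def AS {R : Type} [Zero R] (s : I → I → Prop) (X : Arr → Matrix I I R) : Prop :=
  ∀ a p q, ¬ ((D.v p = D.tgt a ∧ D.v q = D.src a) ∧ s p q) → X a p q = 0

open Classical in
noncomputable def hM {R : Type} [Zero R] (s : I → I → Prop) (w : HI D s → R) : Matrix I I R :=
  Matrix.of fun p q => if h : D.v p = D.v q ∧ s p q then w ⟨(p, q), h⟩ else 0

open Classical in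
noncomputable def aM {R : Type} [Zero R] (s : I → I → Prop) (w : AI D s → R) :
    Arr → Matrix I I R := fun a =>
  Matrix.of fun p q => if h : (D.v p = D.tgt a ∧ D.v q = D.src a) ∧ s p q
    then w ⟨(a, p, q), h⟩ else 0

open Classical in
/-- Restriction of a matrix to a relation. -/
noncomputable def rst {R : Type} [Zero R] (s : I → I → Prop) (m : Matrix I I R) : Matrix I I R :=
  Matrix.of fun p q => if s p q then m p q else 0

variable {D}
variable {R : Type} [CommRing R] {s s' : I → I → Prop} {m n : Matrix I I R}
  {X Y : Arr → Matrix I I R}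

lemma HS_hM (w : HI D s → R) : HS D s (hM D s w) := by
  intro p q h; simp [hM, h]

lemma AS_aM (w : AI D s → R) : AS D s (aM D s w) := by
  intro a p q h; simp only [aM, Matrix.of_apply, dif_neg h]

lemma hM_of (h : HS D s m) : hM D s (fun t => m t.1.1 t.1.2) = m := by
  ext p q
  by_cases hh : D.v p = D.v q ∧ s p q
  · simp [hM, hh]
  · rw [h p q hh]; simp [hM, hh]

lemma aM_of (h : AS D s X) : aM D s (fun t => X t.1.1 t.1.2.1 t.1.2.2) = X := by
  funext a; ext p q
  by_cases hh : (D.v p = D.tgt a ∧ D.v q = D.src a) ∧ s p q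
  · simp only [aM, Matrix.of_apply, dif_pos hh]
  · rw [h a p q hh]; simp only [aM, Matrix.of_apply, dif_neg hh]

lemma HS.mono (h : HS D s m) (hs : ∀ p q, s p q → s' p q) : HS D s' m :=
  fun p q hh => h p q fun h2 => hh ⟨h2.1, hs p q h2.2⟩

lemma AS.mono (h : AS D s X) (hs : ∀ p q, s p q → s' p q) : AS D s' X :=
  fun a p q hh => h a p q fun h2 => hh ⟨h2.1, hs p q h2.2⟩

lemma HS.add (h : HS D s m) (h' : HS D s n) : HS D s (m + n) :=
  fun p q hh => by simp [h p q hh, h' p q hh]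

lemma HS.sub (h : HS D s m) (h' : HS D s n) : HS D s (m - n) :=
  fun p q hh => by simp [h p q hh, h' p q hh]

lemma HS.neg (h : HS D s m) : HS D s (-m) :=
  fun p q hh => by simp [h p q hh]

lemma AS.add (h : AS D s X) (h' : AS D s Y) : AS D s (fun a => X a + Y a) :=
  fun a p q hh => by simp [h a p q hh, h' a p q hh]

lemma AS.sub (h : AS D s X) (h' : AS D s Y) : AS D s (fun a => X a - Y a) :=
  fun a p q hh => by simp [h a p q hh, h' a p q hh]

lemma HS_one : HS D (fun p q => p = q) (1 : Matrix I I R) := by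
  intro p q h
  by_cases hpq : p = q
  · subst hpq; simp at h
  · simp [hpq]

lemma HS.mul (h : HS D s m) (h' : HS D s' n) :
    HS D (fun p q => ∃ r, s p r ∧ s' r q) (m * n) := by
  intro p q hh
  rw [Matrix.mul_apply]
  refine Finset.sum_eq_zero fun r _ => ?_
  by_cases h1 : D.v p = D.v r ∧ s p r
  · by_cases h2 : D.v r = D.v q ∧ s' r q
    · exact absurd ⟨h1.1.trans h2.1, r, h1.2, h2.2⟩ hh
    · simp [h' r q h2]
  · simp [h p r h1]

lemma AS.mul_left (h : HS D s m) (h' : AS D s' X) :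
    AS D (fun p q => ∃ r, s p r ∧ s' r q) (fun a => m * X a) := by
  intro a p q hh
  show (m * X a) p q = 0
  rw [Matrix.mul_apply]
  refine Finset.sum_eq_zero fun r _ => ?_
  by_cases h1 : D.v p = D.v r ∧ s p r
  · by_cases h2 : (D.v r = D.tgt a ∧ D.v q = D.src a) ∧ s' r q
    · exact absurd ⟨⟨h1.1.trans h2.1.1, h2.1.2⟩, r, h1.2, h2.2⟩ hh
    · simp [h' a r q h2]
  · simp [h p r h1]

lemma AS.mul_right (h : HS D s m) (h' : AS D s' X) :
    AS D (fun p q => ∃ r, s' p r ∧ s r q) (fun a => X a * m) := by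
  intro a p q hh
  show (X a * m) p q = 0
  rw [Matrix.mul_apply]
  refine Finset.sum_eq_zero fun r _ => ?_
  by_cases h1 : D.v r = D.v q ∧ s r q
  · by_cases h2 : (D.v p = D.tgt a ∧ D.v r = D.src a) ∧ s' p r
    · exact absurd ⟨⟨h2.1.1, h1.1.symm.trans h2.1.2⟩, r, h2.2, h1.2⟩ hh
    · simp [h' a p r h2]
  · simp [h r q h1]

lemma HS.mul_eq_zero (h : HS D s m) (h' : HS D s' n) (hs : ∀ p r q, s p r → ¬ s' r q) :
    m * n = 0 := by
  ext p q
  exact h.mul h' p q fun ⟨_, r, h1, h2⟩ => hs p r q h1 h2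

lemma HS.rst (h : HS D s m) (s' : I → I → Prop) :
    HS D (fun p q => s p q ∧ s' p q) (rst s' m) := by
  intro p q hh
  by_cases h1 : s' p q
  · simp only [SchQ.rst, Matrix.of_apply, if_pos h1]
    exact h p q fun h2 => hh ⟨h2.1, h2.2, h1⟩
  · simp [SchQ.rst, h1]

lemma AS.rst (h : AS D s X) (s' : I → I → Prop) :
    AS D (fun p q => s p q ∧ s' p q) (fun a => rst s' (X a)) := by
  intro a p q hh
  by_cases h1 : s' p q
  · simp only [SchQ.rst, Matrix.of_apply, if_pos h1]
    exact h a p q fun h2 => hh ⟨h2.1, h2.2, h1⟩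
  · simp [SchQ.rst, h1]

lemma HS.rst_eq (h : HS D s m) (hs : ∀ p q, s p q → s' p q) : SchQ.rst s' m = m := by
  ext p q
  by_cases h1 : s' p q
  · simp [SchQ.rst, h1]
  · rw [h p q fun h2 => h1 (hs p q h2.2)]; simp [SchQ.rst, h1]

end basics

section phi
variable {I V Arr : Type} [Fintype I] [DecidableEq I] (D : QD I V Arr)

/-- strictly lower / weakly upper relations of a class function -/
abbrev lo (c : I → Fin 3) : I → I → Prop := fun p q => c q < c p
abbrev up (c : I → Fin 3) : I → I → Prop := fun p q => c p ≤ c q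

abbrev Par (c : I → Fin 3) := HI D (lo c) ⊕ AI D (up c)

variable {R : Type} [CommRing R]

noncomputable def mP (c : I → Fin 3) (w : Par D c → R) : Matrix I I R :=
  hM D (lo c) (fun t => w (Sum.inl t))

noncomputable def bP (c : I → Fin 3) (w : Par D c → R) : Arr → Matrix I I R :=
  aM D (up c) (fun t => w (Sum.inr t))

/-- the conjugated generic block upper triangular representation -/
noncomputable def PhiM (c : I → Fin 3) (w : Par D c → R) : Arr → Matrix I I R := fun a =>
  (1 + mP D c w) * bP D c w a * (1 - mP D c w + mP D c w * mP D c w)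

noncomputable def Phi (c : I → Fin 3) (w : Par D c → R) : Co D → R := fun t =>
  PhiM D c w t.1.1 t.1.2.1 t.1.2.2

/-- a representation lies in the cell `c` -/
def Cell (c : I → Fin 3) (X : Arr → Matrix I I R) : Prop :=
  ∃ (m : Matrix I I R) (B : Arr → Matrix I I R), HS D (lo c) m ∧ AS D (up c) B ∧
    ∀ a, X a * (1 + m) = (1 + m) * B a

variable {D}

lemma cube_zero {c : I → Fin 3} {m : Matrix I I R} (h : HS D (lo c) m) : m * m * m = 0 := by
  refine (h.mul h).mul_eq_zero h ?_
  rintro p r q ⟨x, h1, h2⟩ h3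
  simp only [lo] at h1 h2 h3
  omega

lemma inv_right {c : I → Fin 3} {m : Matrix I I R} (h : HS D (lo c) m) :
    (1 + m) * (1 - m + m * m) = 1 := by
  have : (1 + m) * (1 - m + m * m) = 1 + m * m * m := by noncomm_ring
  rw [this, cube_zero h, add_zero]

lemma inv_left {c : I → Fin 3} {m : Matrix I I R} (h : HS D (lo c) m) :
    (1 - m + m * m) * (1 + m) = 1 := by
  have : (1 - m + m * m) * (1 + m) = 1 + m * m * m := by noncomm_ring
  rw [this, cube_zero h, add_zero]

lemma PhiM_AS (c : I → Fin 3) (w : Par D c → R) : AS D (fun _ _ => True) (PhiM D c w) := by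
  have h1 : HS D (fun _ _ => True) (1 + mP D c w) :=
    (HS_one.mono fun _ _ _ => trivial).add ((HS_hM _).mono fun _ _ _ => trivial)
  have h2 : HS D (fun _ _ => True) (1 - mP D c w + mP D c w * mP D c w) :=
    ((HS_one.mono fun _ _ _ => trivial).sub ((HS_hM _).mono fun _ _ _ => trivial)).add
      (((HS_hM _).mul (HS_hM _)).mono fun _ _ _ => trivial)
  exact (AS.mul_right h2 (AS.mul_left h1 (AS_aM _))).mono fun _ _ _ => trivial

lemma aM_Phi (c : I → Fin 3) (w : Par D c → R) :
    aM D (fun _ _ => True) (Phi D c w) = PhiM D c w := aM_of (PhiM_AS c w)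

lemma PhiM_mul (c : I → Fin 3) (w : Par D c → R) (a : Arr) :
    PhiM D c w a * (1 + mP D c w) = (1 + mP D c w) * bP D c w a := by
  have h : HS D (lo c) (mP D c w) := HS_hM _
  rw [PhiM, mul_assoc, inv_left h, mul_one]

lemma exists_Phi {c : I → Fin 3} {x : Co D → R} (h : Cell D c (aM D (fun _ _ => True) x)) :
    ∃ w, Phi D c w = x := by
  obtain ⟨m, B, hm, hB, hX⟩ := h
  refine ⟨Sum.elim (fun t => m t.1.1 t.1.2) (fun t => B t.1.1 t.1.2.1 t.1.2.2), ?_⟩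
  have e1 : mP D c (Sum.elim (fun t => m t.1.1 t.1.2) (fun t => B t.1.1 t.1.2.1 t.1.2.2)) = m := by
    simp only [mP, Sum.elim_inl]; exact hM_of hm
  have e2 : bP D c (Sum.elim (fun t => m t.1.1 t.1.2) (fun t => B t.1.1 t.1.2.1 t.1.2.2)) = B := by
    simp only [bP, Sum.elim_inr]; exact aM_of hB
  funext t
  rw [Phi, PhiM, e1, e2, ← hX, mul_assoc, inv_right hm, mul_one]
  obtain ⟨⟨a, p, q⟩, ht⟩ := t
  simp only [aM, Matrix.of_apply, dif_pos ht]

variable {S : Type} [CommRing S]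

lemma hM_map (f : R →+* S) (s : I → I → Prop) (w : HI D s → R) :
    (hM D s w).map f = hM D s (fun t => f (w t)) := by
  ext p q
  by_cases h : D.v p = D.v q ∧ s p q <;> simp [hM, h]

lemma aM_map (f : R →+* S) (s : I → I → Prop) (w : AI D s → R) (a : Arr) :
    (aM D s w a).map f = aM D s (fun t => f (w t)) a := by
  ext p q
  by_cases h : (D.v p = D.tgt a ∧ D.v q = D.src a) ∧ s p q
  · simp only [aM, Matrix.of_apply, dif_pos h, Matrix.map_apply]
  · simp only [aM, Matrix.of_apply, dif_neg h, Matrix.map_apply, map_zero]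

lemma Phi_map (f : R →+* S) (c : I → Fin 3) (w : Par D c → R) (t : Co D) :
    f (Phi D c w t) = Phi D c (fun i => f (w i)) t := by
  have h1 : (mP D c w).map f = mP D c (fun i => f (w i)) := hM_map f _ _
  have h2 : (bP D c w t.1.1).map f = bP D c (fun i => f (w i)) t.1.1 := aM_map f _ _ _
  have : (PhiM D c w t.1.1).map f = PhiM D c (fun i => f (w i)) t.1.1 := by
    rw [PhiM, PhiM, ← h1, ← h2]
    simp only [← RingHom.mapMatrix_apply, map_mul, map_add, map_sub, map_one]
  exact congrFun (congrFun this t.1.2.1) t.1.2.2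

end phi
end SchQ

namespace SchQ
open Finset
set_option linter.unusedSectionVars false
set_option linter.unusedDecidableInType false
set_option linter.unusedFintypeInType false

section LD
open MvPolynomial
variable {K : Type} [Field K] [Infinite K] {σ : Type}

lemma aeval_smul_homog {S : Type} [CommRing S] [Algebra K S] {q : MvPolynomial σ K} {k : ℕ}
    (hq : q.IsHomogeneous k) (e : S) (u : σ → S) :
    aeval (fun i => e * u i) q = e ^ k * aeval u q := by
  rw [aeval_def, aeval_def, eval₂_eq, eval₂_eq, Finset.mul_sum]
  refine Finset.sum_congr rfl fun s hs => ?_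
  have h1 : ∏ i ∈ s.support, (e * u i) ^ s i = e ^ k * ∏ i ∈ s.support, (u i) ^ s i := by
    simp only [mul_pow, Finset.prod_mul_distrib, Finset.prod_pow_eq_pow_sum]
    congr 2
    have := hq (mem_support_iff.mp hs)
    rw [← this, Finsupp.weight_apply, Finsupp.sum]; simp
  rw [h1]; ring

lemma LD0 (q : MvPolynomial σ K)
    (h : ∀ y : σ → K, ∃ w : σ → Polynomial K,
      aeval (fun i => Polynomial.X * (Polynomial.C (y i) + Polynomial.X * w i)) q = 0) : q = 0 := by
  have key : ∀ k, homogeneousComponent k q = 0 := by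
    intro k
    induction k using Nat.strong_induction_on with
    | _ k ih =>
    apply MvPolynomial.funext
    intro y
    rw [map_zero]
    obtain ⟨w, hw⟩ := h y
    set u : σ → Polynomial K := fun i => Polynomial.C (y i) + Polynomial.X * w i with hu
    have e1 : ∑ i ∈ Finset.range (k + 1 + q.totalDegree), homogeneousComponent i q = q := by
      conv_rhs => rw [← sum_homogeneousComponent q]
      symm
      apply Finset.sum_subset
      · intro i hi; simp at hi ⊢; omega
      · intro i _ hi; apply homogeneousComponent_eq_zero; simp at hi; omega
    have e2 : ∑ i ∈ Finset.range (k + 1 + q.totalDegree),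
        Polynomial.X ^ i * aeval u (homogeneousComponent i q) = 0 := by
      rw [← hw]
      conv_rhs => rw [← e1]
      rw [map_sum]
      refine Finset.sum_congr rfl fun i _ => ?_
      rw [aeval_smul_homog (homogeneousComponent_isHomogeneous i q)]
    have e3 : Polynomial.X ^ k * ∑ i ∈ Finset.range (1 + q.totalDegree),
        Polynomial.X ^ i * aeval u (homogeneousComponent (k + i) q) = 0 := by
      rw [← e2, add_assoc, Finset.sum_range_add _ k, Finset.mul_sum]
      rw [Finset.sum_eq_zero (s := Finset.range k), zero_add]
      · refine Finset.sum_congr rfl fun i _ => ?_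
        rw [pow_add, mul_assoc]
      · intro i hi
        rw [ih i (Finset.mem_range.mp hi)]; simp
    have e4 := (mul_eq_zero.mp e3).resolve_left (pow_ne_zero _ Polynomial.X_ne_zero)
    have e5 := congrArg (Polynomial.aeval (0 : K)) e4
    rw [map_sum, map_zero, Finset.sum_eq_single 0] at e5
    · simp only [pow_zero, one_mul, add_zero] at e5
      rw [MvPolynomial.comp_aeval_apply] at e5
      rw [← e5]
      have : (fun i => Polynomial.aeval (0 : K) (u i)) = y := by funext i; simp [hu]
      rw [this]; rfl
    · intro i _ hi; simp [hi]
    · simp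
  rw [← sum_homogeneousComponent q]
  exact Finset.sum_eq_zero fun i _ => key i

lemma LD (p : MvPolynomial σ K) (x0 : σ → K)
    (h : ∀ y : σ → K, ∃ w : σ → Polynomial K,
      aeval (fun i => Polynomial.C (x0 i) +
        Polynomial.X * (Polynomial.C (y i) + Polynomial.X * w i)) p = 0) : p = 0 := by
  have h0 : aeval (fun i => C (x0 i) + X i : σ → MvPolynomial σ K) p = 0 := by
    apply LD0
    intro y
    obtain ⟨w, hw⟩ := h y
    refine ⟨w, ?_⟩
    rw [← hw, MvPolynomial.comp_aeval_apply]
    congr 2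
    funext i
    simp
  have h1 := congrArg (aeval (fun i => X i - C (x0 i) : σ → MvPolynomial σ K)) h0
  rw [MvPolynomial.comp_aeval_apply, map_zero] at h1
  rw [← h1]
  conv_lhs => rw [← MvPolynomial.aeval_X_left_apply p]
  congr 2
  funext i
  simp

end LD

section surj
variable {I V Arr : Type} [Fintype I] [DecidableEq I] (D : QD I V Arr)

def SurjAt {R : Type} [CommRing R] (c : I → Fin 3) (X : Arr → Matrix I I R) : Prop :=
  ∀ y : Co D → R, ∃ m : Matrix I I R, HS D (lo c) m ∧ ∀ t : Co D, ¬ up c t.1.2.1 t.1.2.2 →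
    (m * X t.1.1 - X t.1.1 * m) t.1.2.1 t.1.2.2 = y t

variable {D} {K : Type} [Field K]

lemma Phi_vanish {c : I → Fin 3} {p : MvPolynomial (Co D) K} {R : Type} [CommRing R] [Algebra K R]
    (hp : MvPolynomial.aeval (Phi D c (MvPolynomial.X : Par D c → MvPolynomial (Par D c) K)) p = 0)
    (w : Par D c → R) : MvPolynomial.aeval (Phi D c w) p = 0 := by
  have := congrArg (MvPolynomial.aeval w) hp
  rw [MvPolynomial.comp_aeval_apply, map_zero] at this
  rw [← this]
  congr 2
  funext t
  have h := Phi_map (MvPolynomial.aeval w : MvPolynomial (Par D c) K →ₐ[K] R).toRingHom c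
    MvPolynomial.X t
  simp only [AlgHom.toRingHom_eq_coe, RingHom.coe_coe, MvPolynomial.aeval_X] at h
  exact h.symm

lemma expand {S : Type} [CommRing S] (e : S) (m A B : Matrix I I S) :
    (1 + e • m) * (A + e • B) * (1 - e • m + (e • m) * (e • m)) =
    A + e • ((m * A - A * m) + B + e • (m * B - m * A * m - B * m + A * m * m +
      e • (m * A * m * m - m * B * m + B * m * m) + e ^ 2 • (m * B * m * m))) := by
  simp only [mul_add, add_mul, mul_sub, smul_mul_assoc, mul_smul_comm, one_mul, mul_one,
    smul_add, smul_sub, smul_smul, ← mul_assoc]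
  module

lemma expand_ent {S : Type} [CommRing S] (e : S) (A N W : Matrix I I S) (i j : I) :
    (A + e • (N + e • W)) i j = A i j + e * (N i j + e * W i j) := rfl

lemma algInd_of_surj [Infinite K] {c : I → Fin 3} {X : Arr → Matrix I I K} (hX : AS D (up c) X)
    (hs : SurjAt D c X) :
    AlgebraicIndependent K
      (Phi D c (MvPolynomial.X : Par D c → MvPolynomial (Par D c) K)) := by
  rw [algebraicIndependent_iff]
  intro p hp
  apply LD p (fun t => X t.1.1 t.1.2.1 t.1.2.2)
  intro y
  obtain ⟨m, hm, hmy⟩ := hs y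
  -- B1 = y - [m, X] on the upper part
  let B : Arr → Matrix I I K := aM D (up c) (fun t => y ⟨t.1, t.2.1, trivial⟩ -
    (m * X t.1.1 - X t.1.1 * m) t.1.2.1 t.1.2.2)
  have hB : AS D (up c) B := AS_aM _
  let ε : Polynomial K := Polynomial.X
  let ml := m.map (Polynomial.C : K →+* Polynomial K)
  let Xl := fun a => (X a).map (Polynomial.C : K →+* Polynomial K)
  let Bl := fun a => (B a).map (Polynomial.C : K →+* Polynomial K)
  let M : Matrix I I (Polynomial K) := ε • ml
  let Y : Arr → Matrix I I (Polynomial K) := fun a => Xl a + ε • Bl a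
  have hM : HS D (lo c) M := fun p q h => by simp [M, ml, hm p q h]
  have hY : AS D (up c) Y := fun a p q h => by simp [Y, Xl, Bl, hX a p q h, hB a p q h]
  let w : Par D c → Polynomial K :=
    Sum.elim (fun t => M t.1.1 t.1.2) (fun t => Y t.1.1 t.1.2.1 t.1.2.2)
  have e1 : mP D c w = M := by simp only [mP, w, Sum.elim_inl]; exact hM_of hM
  have e2 : bP D c w = Y := by simp only [bP, w, Sum.elim_inr]; exact aM_of hY
  refine ⟨fun t => (ml * Bl t.1.1 - ml * Xl t.1.1 * ml - Bl t.1.1 * ml + Xl t.1.1 * ml * ml +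
      ε • (ml * Xl t.1.1 * ml * ml - ml * Bl t.1.1 * ml + Bl t.1.1 * ml * ml) +
      ε ^ 2 • (ml * Bl t.1.1 * ml * ml)) t.1.2.1 t.1.2.2, ?_⟩
  rw [← Phi_vanish hp w]
  congr 2
  funext t
  obtain ⟨⟨a, i, j⟩, ht⟩ := t
  simp only [Phi, PhiM, e1, e2]
  simp only [M, Y]
  rw [expand]
  have e3 : (ml * Xl a - Xl a * ml + Bl a) i j = Polynomial.C (y ⟨(a, i, j), ht⟩) := by
    have : ml * Xl a - Xl a * ml + Bl a =
        (m * X a - X a * m + B a).map (Polynomial.C : K →+* Polynomial K) := by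
      simp only [ml, Xl, Bl, ← RingHom.mapMatrix_apply, map_mul, map_add, map_sub]
    rw [this, Matrix.map_apply, Matrix.add_apply]
    congr 1
    by_cases hc : up c i j
    · have : B a i j = y ⟨(a, i, j), ht⟩ - (m * X a - X a * m) i j := by
        simp only [B, aM, Matrix.of_apply, dif_pos (And.intro ht.1 hc)]
      rw [this]; ring
    · rw [hB a i j (fun h => hc h.2), add_zero]
      exact hmy ⟨(a, i, j), ht⟩ hc
  refine Eq.trans ?_ (expand_ent _ _ _ _ i j).symm
  rw [e3]
  rfl

end surj
end SchQ

namespace SchQ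
open Finset
set_option linter.style.haveILetI false
set_option linter.unusedSectionVars false
set_option linter.unusedDecidableInType false
set_option linter.unusedFintypeInType false

section val
variable {K F σ τ : Type} [Field K] [Field F] [Algebra K F]

lemma exists_val {M : σ → F} (hM : AlgebraicIndependent K M) (x : σ → K) :
    ∃ O : ValuationSubring F, (∀ k, algebraMap K F k ∈ O) ∧
      ∀ t, M t - algebraMap K F (x t) ∈ O.nonunits := by
  let A := (Algebra.adjoin K (Set.range M)).toSubring
  let f : A →+* K :=
    ((MvPolynomial.aeval x).comp hM.aevalEquiv.symm.toAlgHom :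
      Algebra.adjoin K (Set.range M) →ₐ[K] K).toRingHom
  obtain ⟨O, h1, h2⟩ := Ideal.image_subset_nonunits_valuationSubring (A := A) (RingHom.ker f)
    (RingHom.ker_ne_top f)
  refine ⟨O, fun k => h1 ((Algebra.adjoin K (Set.range M)).algebraMap_mem k), fun t => h2 ?_⟩
  have hmem : M t ∈ Algebra.adjoin K (Set.range M) := Algebra.subset_adjoin ⟨t, rfl⟩
  let g : Algebra.adjoin K (Set.range M) →ₐ[K] K :=
    (MvPolynomial.aeval x).comp hM.aevalEquiv.symm.toAlgHom
  let r : Algebra.adjoin K (Set.range M) := ⟨M t, hmem⟩ - algebraMap K _ (x t)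
  refine ⟨r, ?_, rfl⟩
  show g r = 0
  have e1 : hM.aevalEquiv.symm ⟨M t, hmem⟩ = MvPolynomial.X t := by
    rw [AlgEquiv.symm_apply_eq]
    apply Subtype.ext
    simp
  have e2 : g ⟨M t, hmem⟩ = x t := by
    show MvPolynomial.aeval x (hM.aevalEquiv.symm ⟨M t, hmem⟩) = x t
    rw [e1]; simp
  rw [map_sub, e2, AlgHom.commutes]; simp

lemma exists_spec [IsAlgClosed K] [Finite σ] [Finite τ] (O : ValuationSubring F)
    (hK : ∀ k, algebraMap K F k ∈ O) (M : σ → F) (x : σ → K)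
    (hM : ∀ t, M t - algebraMap K F (x t) ∈ O.nonunits) (Z : τ → F) (hZ : ∀ t, Z t ∈ O) :
    ∃ φ : Algebra.adjoin K (Set.range M ∪ Set.range Z) →ₐ[K] K,
      ∀ t h, φ ⟨M t, h⟩ = x t := by
  set R := Algebra.adjoin K (Set.range M ∪ Set.range Z) with hR
  have hMO : ∀ t, M t ∈ O := fun t => by
    have := O.add_mem _ _ (ValuationSubring.nonunits_subset (hM t)) (hK (x t))
    simpa using this
  have hRO : ∀ r ∈ R, r ∈ O := by
    intro r hr
    induction hr using Algebra.adjoin_induction with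
    | mem y hy =>
      rcases hy with ⟨t, rfl⟩ | ⟨t, rfl⟩
      · exact hMO t
      · exact hZ t
    | algebraMap k => exact hK k
    | add _ _ _ _ h1 h2 => exact O.add_mem _ _ h1 h2
    | mul _ _ _ _ h1 h2 => exact O.mul_mem _ _ h1 h2
  let N : Ideal R :=
    { carrier := {r | (r : F) ∈ O.nonunits}
      add_mem' := fun {a b} ha hb => O.nonunits.add_mem ha hb
      zero_mem' := O.nonunits.zero_mem
      smul_mem' := fun r s hs => by
        show O.valuation ((r : F) * s) < 1
        rw [map_mul]
        exact (mul_le_of_le_one_left' ((O.valuation_le_one_iff _).mpr (hRO r r.2))).trans_lt hs }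
  have hN : N ≠ ⊤ := by
    rw [Ideal.ne_top_iff_one]
    intro h
    have : O.valuation (1 : F) < 1 := h
    simp at this
  obtain ⟨m, hm, hNm⟩ := N.exists_le_maximal hN
  letI : Field (R ⧸ m) := Ideal.Quotient.field m
  haveI : Algebra.FiniteType K R := by
    rw [← Subalgebra.fg_iff_finiteType]
    exact ⟨(Set.toFinite (Set.range M ∪ Set.range Z)).toFinset, by simp [hR]⟩
  haveI : Algebra.FiniteType K (R ⧸ m) :=
    Algebra.FiniteType.of_surjective (Ideal.Quotient.mkₐ K m) (Ideal.Quotient.mkₐ_surjective K m)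
  haveI : Module.Finite K (R ⧸ m) := finite_of_finite_type_of_isJacobsonRing K (R ⧸ m)
  have hb : Function.Bijective (algebraMap K (R ⧸ m)) :=
    IsAlgClosed.algebraMap_bijective_of_isIntegral
  let e : K ≃ₐ[K] (R ⧸ m) := AlgEquiv.ofBijective (Algebra.ofId K (R ⧸ m)) hb
  refine ⟨e.symm.toAlgHom.comp (Ideal.Quotient.mkₐ K m), fun t h => ?_⟩
  have h1 : (⟨M t, h⟩ - algebraMap K R (x t) : R) ∈ m := hNm (hM t)
  have h2 : Ideal.Quotient.mkₐ K m ⟨M t, h⟩ = algebraMap K (R ⧸ m) (x t) := by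
    have := (Ideal.Quotient.eq_zero_iff_mem).mpr h1
    rw [map_sub, sub_eq_zero] at this
    exact this
  show e.symm (Ideal.Quotient.mkₐ K m ⟨M t, h⟩) = x t
  rw [h2]
  exact e.symm.commutes (x t)

lemma cramer_entry {I J : Type} [Fintype J] [DecidableEq J] (Y : Matrix I J F) (e : J → I)
    (p : I) (q : J) : (Y * (Y.submatrix e id)⁻¹) p q =
      (Y.submatrix (Function.update e q p) id).det / (Y.submatrix e id).det := by
  have h1 : Y.submatrix (Function.update e q p) id = (Y.submatrix e id).updateRow q (Y p) := by
    ext i j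
    by_cases h : i = q
    · subst h; simp
    · simp [h]
  rw [h1, ← Matrix.cramer_transpose_apply, Matrix.cramer_eq_adjugate_mulVec, Matrix.inv_def,
    ← Matrix.adjugate_transpose, Matrix.mul_apply, Matrix.mulVec, dotProduct, Finset.sum_div]
  refine Finset.sum_congr rfl fun j _ => ?_
  simp [Ring.inverse_eq_inv']
  ring

lemma exists_best {I J : Type} [Finite I] [Fintype J] [DecidableEq J] (O : ValuationSubring F)
    (Y : Matrix I J F) (P : (J → I) → Prop) (e0 : J → I) (h0 : P e0)
    (hd : (Y.submatrix e0 id).det ≠ 0) :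
    ∃ e, P e ∧ (Y.submatrix e id).det ≠ 0 ∧ ∀ p q, P (Function.update e q p) →
      (Y * (Y.submatrix e id)⁻¹) p q ∈ O := by
  classical
  haveI := Fintype.ofFinite I
  obtain ⟨e, he, hmax⟩ := Finset.exists_max_image (Finset.univ.filter P)
    (fun e => O.valuation (Y.submatrix e id).det) ⟨e0, by simp [h0]⟩
  have hne : (Y.submatrix e id).det ≠ 0 := by
    intro h
    have := hmax e0 (by simp [h0])
    rw [h, map_zero] at this
    exact hd ((map_eq_zero O.valuation).mp (le_antisymm this zero_le))
  refine ⟨e, by simpa using he, hne, fun p q hP => ?_⟩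
  rw [cramer_entry, ← ValuationSubring.valuation_le_one_iff, map_div₀]
  exact div_le_one_of_le₀ (hmax _ (by simp [hP])) zero_le

end val

section main
variable {I V Arr : Type} [Fintype I] [DecidableEq I] [Finite Arr] {D : QD I V Arr}
  {K : Type} [Field K]

lemma inv_graded {J : Type} [Fintype J] [DecidableEq J] {F : Type} [Field F] (g : J → V)
    (S : Matrix J J F) (hS : ∀ p q, g p ≠ g q → S p q = 0) (hd : S.det ≠ 0) :
    ∀ p q, g p ≠ g q → S⁻¹ p q = 0 := by
  classical
  intro p q hpq
  let Dg : Matrix J J F := Matrix.diagonal fun j => if g j = g p then 1 else 0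
  have hc : S * Dg = Dg * S := by
    ext i j
    simp only [Dg, Matrix.mul_diagonal, Matrix.diagonal_mul]
    by_cases h : g i = g j
    · rw [h]; ring
    · simp [hS i j h]
  have hu : IsUnit S.det := isUnit_iff_ne_zero.mpr hd
  have h2 : S⁻¹ * Dg = Dg * S⁻¹ := by
    calc S⁻¹ * Dg = S⁻¹ * (Dg * S) * S⁻¹ := by
          rw [mul_assoc, mul_assoc, Matrix.mul_nonsing_inv _ hu, mul_one]
      _ = S⁻¹ * S * Dg * S⁻¹ := by rw [← hc]; simp only [mul_assoc]
      _ = Dg * S⁻¹ := by rw [Matrix.nonsing_inv_mul _ hu, one_mul]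
  have h3 := congrFun (congrFun h2 p) q
  simp only [Dg, Matrix.mul_diagonal, Matrix.diagonal_mul, if_neg (Ne.symm hpq), mul_zero] at h3
  simpa using h3.symm

abbrev J0 (c : I → Fin 3) := {q : I // c q = 0}

theorem exists_sub [IsAlgClosed K] {c : I → Fin 3}
    (hc : AlgebraicIndependent K (Phi D c (MvPolynomial.X : Par D c → MvPolynomial (Par D c) K)))
    (x : Co D → K) :
    ∃ (e : J0 c → I) (z : Matrix I (J0 c) K)
      (b : Arr → Matrix (J0 c) (J0 c) K),
      (∀ q, D.v (e q) = D.v q) ∧ (∀ p (q : J0 c), D.v p ≠ D.v q → z p q = 0) ∧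
      z.submatrix e id = 1 ∧ ∀ a, aM D (fun _ _ => True) x a * z = z * b a := by
  classical
  let A := MvPolynomial (Par D c) K
  let F := FractionRing A
  let w : Par D c → F := fun i => algebraMap A F (MvPolynomial.X i)
  let M : Co D → F := Phi D c w
  have hM : AlgebraicIndependent K M := by
    have h1 := hc.map' (f := (IsScalarTower.toAlgHom K A F)) (IsFractionRing.injective A F)
    convert h1 using 1
    funext t
    exact (Phi_map (algebraMap A F) c MvPolynomial.X t).symm
  obtain ⟨O, hK, hO⟩ := exists_val hM x
  let m := mP D c w
  let B := bP D c w
  have hm : HS D (lo c) m := HS_hM _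
  have hB : AS D (up c) B := AS_aM _
  have hMB : ∀ a, PhiM D c w a * (1 + m) = (1 + m) * B a := PhiM_mul c w
  let Y : Matrix I (J0 c) F := (1 + m).submatrix id Subtype.val
  have hY : ∀ p (q : J0 c), D.v p ≠ D.v q → Y p q = 0 := by
    intro p q h
    have h1 : p ≠ q := fun h2 => h (by rw [h2])
    simp [Y, h1, hm p q (fun h2 => h h2.1)]
  have hS0 : Y.submatrix (Subtype.val : J0 c → I) id = (1 : Matrix (J0 c) (J0 c) F) := by
    ext p q
    have : m p q = 0 := hm p q (fun h2 => by
      have := h2.2; simp only [lo, p.2, q.2] at this; exact lt_irrefl _ this)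
    simp [Y, this, Matrix.one_apply, Subtype.ext_iff]
  obtain ⟨e, he, hdet, hZO⟩ := exists_best O Y (fun e => ∀ q, D.v (e q) = D.v q)
    Subtype.val (fun q => rfl) (by rw [hS0]; simp)
  have hu : IsUnit (Y.submatrix e id).det := isUnit_iff_ne_zero.mpr hdet
  let S := Y.submatrix e id
  let Z : Matrix I (J0 c) F := Y * S⁻¹
  have hSg : ∀ p q : J0 c, D.v p ≠ D.v q → S p q = 0 := fun p q h => hY _ _ (by rw [he]; exact h)
  have hSi := inv_graded (fun j : J0 c => D.v j) S hSg hdet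
  have hZg : ∀ p (q : J0 c), D.v p ≠ D.v q → Z p q = 0 := by
    intro p q h
    show (Y * S⁻¹) p q = 0
    rw [Matrix.mul_apply]
    refine Finset.sum_eq_zero fun j _ => ?_
    by_cases h1 : D.v p = D.v j
    · rw [hSi j q (h1 ▸ h), mul_zero]
    · rw [hY p j h1, zero_mul]
  have hZO' : ∀ p q, Z p q ∈ O := by
    intro p q
    by_cases h : D.v p = D.v q
    · apply hZO
      intro q'
      by_cases h1 : q' = q
      · subst h1; simpa using h
      · simp [h1, he]
    · rw [hZg p q h]; exact O.zero_mem
  have hZe : Z.submatrix e id = 1 := by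
    have : Z.submatrix e id = S * S⁻¹ := by
      ext i j; simp [Z, S, Matrix.mul_apply]
    rw [this]; exact Matrix.mul_nonsing_inv _ hu
  let BJ : Arr → Matrix (J0 c) (J0 c) F := fun a => (B a).submatrix Subtype.val Subtype.val
  have hMY : ∀ a, PhiM D c w a * Y = Y * BJ a := by
    intro a
    ext p q
    have h1 := congrFun (congrFun (hMB a) p) q
    have h2 : (PhiM D c w a * Y) p q = (PhiM D c w a * (1 + m)) p q := by
      simp only [Matrix.mul_apply, Y, Matrix.submatrix_apply, id]
    rw [h2, h1]
    simp only [Matrix.mul_apply, Y, BJ, Matrix.submatrix_apply, id]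
    rw [← Finset.sum_subset (Finset.subset_univ (Finset.univ.filter (fun r => c r = 0))),
      Finset.sum_subtype (p := fun r => c r = 0) _ (by simp)]
    intro r _ hr
    rw [hB a r q, mul_zero]
    intro h
    simp only [Finset.mem_filter, Finset.mem_univ, true_and] at hr
    have := h.2
    simp only [up, q.2] at this
    omega
  have hMZ : ∀ a, PhiM D c w a * Z = Z * (PhiM D c w a * Z).submatrix e id := by
    intro a
    have h1 : PhiM D c w a * Z = Z * (S * BJ a * S⁻¹) := by
      simp only [Z]
      rw [← Matrix.mul_assoc, hMY a, Matrix.mul_assoc Y S⁻¹, ← Matrix.mul_assoc S⁻¹,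
        ← Matrix.mul_assoc S⁻¹, Matrix.nonsing_inv_mul _ hu, Matrix.one_mul, Matrix.mul_assoc]
    have h2 : (PhiM D c w a * Z).submatrix e id =
        S * BJ a * S⁻¹ := by
      rw [h1, ← Matrix.submatrix_mul_equiv _ _ e (Equiv.refl (J0 c)) id]
      have : Z.submatrix e (Equiv.refl (J0 c)) = 1 := hZe
      rw [this, Matrix.one_mul]
      rfl
    rw [h2, ← h1]
  obtain ⟨φ, hφ⟩ := exists_spec O hK M x hO (fun t : I × J0 c => Z t.1 t.2) (fun t => hZO' t.1 t.2)
  let R := Algebra.adjoin K (Set.range M ∪ Set.range fun t : I × J0 c => Z t.1 t.2)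
  have memM : ∀ t, M t ∈ R := fun t => Algebra.subset_adjoin (Or.inl ⟨t, rfl⟩)
  have memZ : ∀ p q, Z p q ∈ R := fun p q => Algebra.subset_adjoin (Or.inr ⟨(p, q), rfl⟩)
  let MR : Co D → R := fun t => ⟨M t, memM t⟩
  let ZR : Matrix I (J0 c) R := Matrix.of fun p q => ⟨Z p q, memZ p q⟩
  let ι : R →+* F := R.subtype
  have hι : Function.Injective ι := Subtype.val_injective
  have eM : ∀ a, (aM D (fun _ _ => True) MR a).map ι = PhiM D c w a := by
    intro a
    rw [aM_map, ← aM_Phi]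
    rfl
  have eZ : ZR.map ι = Z := rfl
  have hRel : ∀ a, aM D (fun _ _ => True) MR a * ZR =
      ZR * (aM D (fun _ _ => True) MR a * ZR).submatrix e id := by
    intro a
    apply Matrix.map_injective hι
    have h1 := hMZ a
    rw [← eM a, ← eZ] at h1
    show (aM D (fun _ _ => True) MR a * ZR).map ι = (ZR * (aM D (fun _ _ => True) MR a * ZR).submatrix e id).map ι
    rw [Matrix.map_mul, Matrix.map_mul, h1]
    congr 1
    ext i j
    simp [Matrix.map_apply, Matrix.mul_apply, Matrix.submatrix_apply]
  let z : Matrix I (J0 c) K := ZR.map φ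
  have ex : ∀ a, (aM D (fun _ _ => True) MR a).map φ = aM D (fun _ _ => True) x a := by
    intro a
    have h := aM_map (φ : R →+* K) (fun _ _ => True) MR a
    have h2 : (fun t => (φ : R →+* K) (MR t)) = x := funext fun t => hφ t _
    rw [h2] at h
    exact h
  refine ⟨e, z, fun a => (aM D (fun _ _ => True) x a * z).submatrix e id, he, ?_, ?_, ?_⟩
  · intro p q h
    show φ (ZR p q) = 0
    have : ZR p q = 0 := Subtype.ext (hZg p q h)
    rw [this, map_zero]
  · have : ZR.submatrix e id = 1 := by
      apply Matrix.map_injective hι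
      have h2 : (ZR.submatrix e id).map ι = Z.submatrix e id := rfl
      show (ZR.submatrix e id).map ι = (1 : Matrix (J0 c) (J0 c) R).map ι
      rw [h2, hZe, Matrix.map_one _ (map_zero _) (map_one _)]
    have h2 : z.submatrix e id = (ZR.submatrix e id).map φ := rfl
    rw [h2, this, Matrix.map_one _ (map_zero _) (map_one _)]
  · intro a
    have h1 := congrArg (fun N => N.map φ) (hRel a)
    simp only [Matrix.map_mul] at h1
    have h2 : ((aM D (fun _ _ => True) MR a * ZR).submatrix e id).map φ =
        ((aM D (fun _ _ => True) MR a * ZR).map φ).submatrix e id := rfl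
    rw [h2, Matrix.map_mul, ex] at h1
    exact h1

end main
end SchQ

namespace SchQ
open Finset
set_option linter.style.haveILetI false
set_option linter.unusedSectionVars false
set_option linter.unusedDecidableInType false
set_option linter.unusedFintypeInType false

section cl
variable (K : Type) {F : Type} [Field K] [Field F] [Algebra K F]

/-- Relative algebraic closure of the field generated by a set. -/
noncomputable def Cl (S : Set F) : Subfield F :=
  { (Subalgebra.algebraicClosure (Algebra.adjoin K S) F).toSubring with
    inv_mem' := fun x hx => by
      have h : IsAlgebraic (Algebra.adjoin K S) x := hx
      exact h.inv }

lemma coe_Cl (S : Set F) : (Cl K S : Set F) = (AlgebraicIndependent.matroid K F).closure S := by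
  rw [AlgebraicIndependent.matroid_closure_eq]; rfl

lemma subset_Cl (S : Set F) : S ⊆ Cl K S := by
  rw [coe_Cl]; exact Matroid.subset_closure _ _ (by simp)

lemma Cl_le {S T : Set F} (h : S ⊆ Cl K T) : Cl K S ≤ Cl K T := by
  rw [← SetLike.coe_subset_coe, coe_Cl, coe_Cl]
  rw [coe_Cl] at h
  exact Matroid.closure_subset_closure_of_subset_closure h

lemma algebraMap_mem_Cl (S : Set F) (k : K) : algebraMap K F k ∈ Cl K S := by
  show algebraMap K F k ∈ Subalgebra.algebraicClosure (Algebra.adjoin K S) F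
  rw [IsScalarTower.algebraMap_apply K (Algebra.adjoin K S) F]
  exact Subalgebra.algebraMap_mem _ _

noncomputable def rk (S : Set F) : ℕ∞ := (AlgebraicIndependent.matroid K F).eRk S

lemma rk_le {ι : Type} [Finite ι] (w : ι → F) {Y : Set F} (h : Y ⊆ Cl K (Set.range w)) :
    rk K Y ≤ Nat.card ι := by
  have h1 : rk K Y ≤ rk K (Set.range w) := by
    rw [coe_Cl] at h
    have := (AlgebraicIndependent.matroid K F).eRk_mono h
    rwa [Matroid.eRk_closure_eq] at this
  refine h1.trans ((Matroid.eRk_le_encard _ _).trans ?_)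
  haveI := Fintype.ofFinite ι
  rw [Nat.card_eq_fintype_card, ← Set.image_univ]
  refine (Set.encard_image_le _ _).trans ?_
  simp [Set.encard_univ, ENat.card_eq_coe_fintype_card]

lemma le_rk {ι : Type} [Finite ι] {w : ι → F} (hw : AlgebraicIndependent K w) {Y : Set F}
    (h : Set.range w ⊆ Cl K Y) : (Nat.card ι : ℕ∞) ≤ rk K Y := by
  rw [coe_Cl] at h
  have h1 := (AlgebraicIndependent.matroid K F).eRk_mono h
  rw [Matroid.eRk_closure_eq] at h1
  refine le_trans ?_ h1
  have hi : (AlgebraicIndependent.matroid K F).Indep (Set.range w) := hw.coe_range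
  rw [hi.eRk_eq_encard]
  haveI := Fintype.ofFinite ι
  rw [Nat.card_eq_fintype_card, ← Set.image_univ, hw.injective.encard_image]
  simp [Set.encard_univ, ENat.card_eq_coe_fintype_card]

lemma rk_submod (X Y : Set F) : rk K (X ∩ Y) + rk K (X ∪ Y) ≤ rk K X + rk K Y :=
  (AlgebraicIndependent.matroid K F).eRk_inter_add_eRk_union_le X Y

end cl

section In
variable {I : Type} [Fintype I] [DecidableEq I] {F : Type} [Field F]

def In (L : Subfield F) (m : Matrix I I F) : Prop := ∀ p q, m p q ∈ L

variable {L : Subfield F} {m n : Matrix I I F}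

lemma In.add (h : In L m) (h' : In L n) : In L (m + n) := fun p q => L.add_mem (h p q) (h' p q)
lemma In.sub (h : In L m) (h' : In L n) : In L (m - n) := fun p q => L.sub_mem (h p q) (h' p q)
lemma In.mul (h : In L m) (h' : In L n) : In L (m * n) := fun p q => by
  rw [Matrix.mul_apply]; exact L.sum_mem fun r _ => L.mul_mem (h p r) (h' r q)
lemma In_one : In L (1 : Matrix I I F) := fun p q => by
  rw [Matrix.one_apply]; split_ifs; exacts [L.one_mem, L.zero_mem]
lemma In.rst (h : In L m) (s : I → I → Prop) : In L (rst s m) := fun p q => by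
  simp only [SchQ.rst, Matrix.of_apply]; split_ifs; exacts [h p q, L.zero_mem]
lemma In.mono {L' : Subfield F} (h : In L m) (hL : L ≤ L') : In L' m := fun p q => hL (h p q)

variable {V Arr : Type} {D : QD I V Arr} {s : I → I → Prop}

lemma In_of_HS (h : HS D s m) (h' : ∀ t : HI D s, m t.1.1 t.1.2 ∈ L) : In L m := fun p q => by
  by_cases hh : D.v p = D.v q ∧ s p q
  · exact h' ⟨(p, q), hh⟩
  · rw [h p q hh]; exact L.zero_mem

lemma In_of_AS {X : Arr → Matrix I I F} (h : AS D s X)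
    (h' : ∀ t : AI D s, X t.1.1 t.1.2.1 t.1.2.2 ∈ L) (a : Arr) : In L (X a) := fun p q => by
  by_cases hh : (D.v p = D.tgt a ∧ D.v q = D.src a) ∧ s p q
  · exact h' ⟨(a, p, q), hh⟩
  · rw [h a p q hh]; exact L.zero_mem

end In

section count
variable {I V Arr : Type} [Fintype I] [DecidableEq I] [Finite Arr] (D : QD I V Arr)

lemma card_HI_split {s s1 s2 : I → I → Prop} (h : ∀ p q, s p q ↔ s1 p q ∨ s2 p q)
    (h' : ∀ p q, s1 p q → ¬ s2 p q) :
    Nat.card (HI D s) = Nat.card (HI D s1) + Nat.card (HI D s2) := by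
  classical
  haveI := Fintype.ofFinite Arr
  simp only [Nat.card_eq_fintype_card, Fintype.card_subtype]
  rw [← Finset.card_union_of_disjoint]
  · congr 1; ext t; simp [h]; tauto
  · rw [Finset.disjoint_left]; intro t ht ht2
    simp at ht ht2; exact h' _ _ ht.2 ht2.2

lemma card_AI_split {s s1 s2 : I → I → Prop} (h : ∀ p q, s p q ↔ s1 p q ∨ s2 p q)
    (h' : ∀ p q, s1 p q → ¬ s2 p q) :
    Nat.card (AI D s) = Nat.card (AI D s1) + Nat.card (AI D s2) := by
  classical
  haveI := Fintype.ofFinite Arr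
  simp only [Nat.card_eq_fintype_card, Fintype.card_subtype]
  rw [← Finset.card_union_of_disjoint]
  · congr 1; ext t; simp [h]; tauto
  · rw [Finset.disjoint_left]; intro t ht ht2
    simp at ht ht2; exact h' _ _ ht.2 ht2.2

end count

section misc
variable {I V Arr : Type} [Fintype I] [DecidableEq I] {D : QD I V Arr}
  {R : Type} [CommRing R] {s : I → I → Prop} {m : Matrix I I R}

lemma HS.one_add (h : HS D s m) : HS D (fun p q => p = q ∨ s p q) (1 + m) :=
  (HS_one.mono fun _ _ h => Or.inl h).add (h.mono fun _ _ h => Or.inr h)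

lemma HS.one_sub (h : HS D s m) : HS D (fun p q => p = q ∨ s p q) (1 - m) :=
  (HS_one.mono fun _ _ h => Or.inl h).sub (h.mono fun _ _ h => Or.inr h)

lemma sq_inv {m : Matrix I I R} (h : m * m = 0) : (1 + m) * (1 - m) = 1 := by
  have : (1 + m) * (1 - m) = 1 - m * m := by noncomm_ring
  rw [this, h, sub_zero]

lemma sq_inv2 {m : Matrix I I R} (h : m * m = 0) : (1 - m) * (1 + m) = 1 := by
  have : (1 - m) * (1 + m) = 1 - m * m := by noncomm_ring
  rw [this, h, sub_zero]

end misc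

section flag
variable {I V Arr : Type} [Fintype I] [DecidableEq I] [Finite Arr] {D : QD I V Arr}
  {K : Type} [Field K]

theorem flag_ineq {c : I → Fin 3}
    (hc : AlgebraicIndependent K (Phi D c (MvPolynomial.X : Par D c → MvPolynomial (Par D c) K))) :
    Nat.card (AI D (fun p q => c p = 2 ∧ c q = 0)) ≤
      Nat.card (HI D (fun p q => c p = 2 ∧ c q = 0)) := by
  classical
  let A := MvPolynomial (Par D c) K
  let F := FractionRing A
  let w : Par D c → F := fun i => algebraMap A F (MvPolynomial.X i)
  have hw : AlgebraicIndependent K w :=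
    (MvPolynomial.algebraicIndependent_X (Par D c) K).map'
      (f := (IsScalarTower.toAlgHom K A F)) (IsFractionRing.injective A F)
  have hM : AlgebraicIndependent K (Phi D c w) := by
    have h1 := hc.map' (f := (IsScalarTower.toAlgHom K A F)) (IsFractionRing.injective A F)
    convert h1 using 1
    funext t
    exact (Phi_map (algebraMap A F) c MvPolynomial.X t).symm
  let M := PhiM D c w
  let m := mP D c w
  let B := bP D c w
  have hm : HS D (lo c) m := HS_hM _
  have hB : AS D (up c) B := AS_aM _
  have hMA : AS D (fun _ _ => True) M := PhiM_AS c w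
  have hMB : ∀ a, M a * (1 + m) = (1 + m) * B a := PhiM_mul c w
  let nS := rst (fun p q => c q = 0) m
  let na := rst (fun p q => c p = 1) m
  let nc := rst (fun p q => c q = 1) m
  let nT := m - na - nc * na
  have hnS : HS D (fun p q => c p ≠ 0 ∧ c q = 0) nS :=
    (hm.rst _).mono fun p q h => by simp only [lo] at h; omega
  have hna : HS D (fun p q => c p = 1 ∧ c q = 0) na :=
    (hm.rst _).mono fun p q h => by simp only [lo] at h; omega
  have hnc : HS D (fun p q => c p = 2 ∧ c q = 1) nc :=
    (hm.rst _).mono fun p q h => by simp only [lo] at h; omega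
  have em : m = nS + nc := by
    ext p q
    simp only [nS, nc, rst, Matrix.add_apply, Matrix.of_apply]
    by_cases h0 : c q = 0
    · have : c q ≠ 1 := by omega
      simp [h0]
    · by_cases h1 : c q = 1
      · simp [h1]
      · simp only [h0, h1, if_false, add_zero]
        exact hm p q fun h => by have := h.2; simp only [lo] at this; omega
  have hmna : HS D (fun p q => c p = 2 ∧ c q ≠ 2) (m - na) := by
    intro p q hh
    simp only [na, rst, Matrix.sub_apply, Matrix.of_apply]
    by_cases h0 : c p = 1
    · simp [h0]
    · simp only [h0, if_false, sub_zero]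
      exact hm p q fun h => hh ⟨h.1, by have := h.2; simp only [lo] at this; omega⟩
  have hnT : HS D (fun p q => c p = 2 ∧ c q ≠ 2) nT :=
    hmna.sub ((hnc.mul hna).mono fun p q ⟨r, h1, h2⟩ => by omega)
  have ncnT : rst (fun p q => c q = 1) nT = nc := by
    ext p q
    simp only [nT, nc, rst, Matrix.of_apply, Matrix.sub_apply]
    by_cases h1 : c q = 1
    · simp only [h1, if_true]
      have e1 : na p q = 0 := hna p q fun h => by have := h.2; omega
      have e2 : (nc * na) p q = 0 := (hnc.mul hna) p q fun h => by
        obtain ⟨_, r, h1, h2⟩ := h; omega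
      have e2' : (rst (fun p q => c q = 1) m * na) p q = 0 := e2
      rw [e1]
      change m p q - 0 - (rst (fun p q => c q = 1) m * na) p q = m p q
      rw [e2']; ring
    · simp [h1]
  -- factorizations
  have hSc : nS * nc = 0 := hnS.mul_eq_zero hnc fun p r q h1 h2 => by omega
  have hSS : nS * nS = 0 := hnS.mul_eq_zero hnS fun p r q h1 h2 => by omega
  have hcc : nc * nc = 0 := hnc.mul_eq_zero hnc fun p r q h1 h2 => by omega
  have haa : na * na = 0 := hna.mul_eq_zero hna fun p r q h1 h2 => by omega
  have hTT : nT * nT = 0 := hnT.mul_eq_zero hnT fun p r q h1 h2 => by omega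
  have f1 : 1 + m = (1 + nS) * (1 + nc) := by
    have : (1 + nS) * (1 + nc) = 1 + (nS + nc) + nS * nc := by noncomm_ring
    rw [this, hSc, ← em, add_zero]
  have hTna : nT * na = nc * na := by
    have h1 : (m - na) * na = nc * na := by
      have h2 : nS * na = 0 := hnS.mul_eq_zero hna fun p r q h1 h2 => by omega
      rw [sub_mul, haa, sub_zero, em, add_mul, h2, zero_add]
    have h3 : nc * na * na = 0 := by rw [mul_assoc, haa, mul_zero]
    show (m - na - nc * na) * na = nc * na
    rw [sub_mul, h1, h3, sub_zero]
  have f2 : 1 + m = (1 + nT) * (1 + na) := by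
    have : (1 + nT) * (1 + na) = 1 + nT + na + nT * na := by noncomm_ring
    rw [this, hTna]
    show 1 + m = 1 + (m - na - nc * na) + na + nc * na
    abel
  let BS : Arr → Matrix I I F := fun a => (1 + nc) * B a * (1 - nc)
  let BT : Arr → Matrix I I F := fun a => (1 + na) * B a * (1 - na)
  have hBS : AS D (fun p q => ¬ (c p ≠ 0 ∧ c q = 0)) BS := by
    refine (AS.mul_right hnc.one_sub (AS.mul_left hnc.one_add hB)).mono ?_
    rintro p q ⟨r, ⟨r', h1, h2⟩, h3⟩
    simp only [up] at h2
    rcases h1 with rfl | h1 <;> rcases h3 with rfl | h3 <;> omega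
  have hBT : AS D (fun p q => ¬ (c p = 2 ∧ c q ≠ 2)) BT := by
    refine (AS.mul_right hna.one_sub (AS.mul_left hna.one_add hB)).mono ?_
    rintro p q ⟨r, ⟨r', h1, h2⟩, h3⟩
    simp only [up] at h2
    rcases h1 with rfl | h1 <;> rcases h3 with rfl | h3 <;> omega
  have gen : ∀ u v a, u * u = 0 → v * v = 0 → 1 + m = (1 + u) * (1 + v) →
      M a = (1 + u) * ((1 + v) * B a * (1 - v)) * (1 - u) := by
    intro u v a hu hv h
    have h1 := hMB a
    rw [h] at h1
    calc M a = M a * ((1 + u) * ((1 + v) * (1 - v)) * (1 - u)) := by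
          rw [sq_inv hv, mul_one, sq_inv hu, mul_one]
      _ = (M a * ((1 + u) * (1 + v))) * (1 - v) * (1 - u) := by simp only [mul_assoc]
      _ = _ := by rw [h1]; simp only [mul_assoc]
  have gS : ∀ a, M a = (1 + nS) * BS a * (1 - nS) := fun a => gen nS nc a hSS hcc f1
  have gT : ∀ a, M a = (1 + nT) * BT a * (1 - nT) := fun a => gen nT na a hTT haa f2
  -- the sets
  let EM : Set F := Set.range (Phi D c w)
  let ES : Set F := Set.range fun t : I × I => nS t.1 t.2
  let ET : Set F := Set.range fun t : I × I => nT t.1 t.2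
  have i1 : (Nat.card (Co D) : ℕ∞) ≤ rk K ((EM ∪ ES) ∩ (EM ∪ ET)) :=
    le_rk K hM (Set.Subset.trans (Set.subset_inter Set.subset_union_left Set.subset_union_left)
      (subset_Cl K _))
  have i2 : (Nat.card (Par D c) : ℕ∞) ≤ rk K ((EM ∪ ES) ∪ (EM ∪ ET)) := by
    refine le_rk K hw ?_
    set L := Cl K ((EM ∪ ES) ∪ (EM ∪ ET)) with hL
    have s1 := subset_Cl K ((EM ∪ ES) ∪ (EM ∪ ET))
    have inS : In L nS := fun p q => s1 (Or.inl (Or.inr ⟨(p, q), rfl⟩))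
    have inT : In L nT := fun p q => s1 (Or.inr (Or.inr ⟨(p, q), rfl⟩))
    have inM : ∀ a, In L (M a) := In_of_AS hMA fun t => s1 (Or.inl (Or.inl (Set.mem_range_self (f := Phi D c w) t)))
    have inc : In L nc := ncnT ▸ inT.rst _
    have inm : In L m := em ▸ inS.add inc
    have inB : ∀ a, In L (B a) := fun a => by
      have : B a = (1 - m + m * m) * (M a * (1 + m)) := by
        rw [hMB a, ← mul_assoc, inv_left hm, one_mul]
      rw [this]
      exact ((In_one.sub inm).add (inm.mul inm)).mul ((inM a).mul (In_one.add inm))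
    rintro _ ⟨t | t, rfl⟩
    · have := inm t.1.1 t.1.2
      simp only [m, mP, SchQ.hM, Matrix.of_apply, dif_pos t.2] at this
      exact this
    · have := inB t.1.1 t.1.2.1 t.1.2.2
      simp only [B, bP, aM, Matrix.of_apply, dif_pos t.2] at this
      exact this
  have key : ∀ (s1 s2 : I → I → Prop) (u : Matrix I I F) (X : Arr → Matrix I I F),
      HS D s1 u → AS D s2 X → (∀ a, M a = (1 + u) * X a * (1 - u)) →
      rk K (EM ∪ Set.range fun t : I × I => u t.1 t.2) ≤
        ((Nat.card (HI D s1) + Nat.card (AI D s2) : ℕ) : ℕ∞) := by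
    intro s1 s2 u X hu hX h
    rw [← Nat.card_sum]
    let g : HI D s1 ⊕ AI D s2 → F :=
      Sum.elim (fun t => u t.1.1 t.1.2) (fun t => X t.1.1 t.1.2.1 t.1.2.2)
    have s1 := subset_Cl K (Set.range g)
    have inu : In (Cl K (Set.range g)) u := In_of_HS hu fun t => s1 ⟨Sum.inl t, rfl⟩
    have inX : ∀ a, In (Cl K (Set.range g)) (X a) := In_of_AS hX fun t => s1 ⟨Sum.inr t, rfl⟩
    have inM : ∀ a, In (Cl K (Set.range g)) (M a) := fun a => by
      rw [h a]; exact ((In_one.add inu).mul (inX a)).mul (In_one.sub inu)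
    refine rk_le K g ?_
    intro x hx
    rcases hx with ⟨t, rfl⟩ | ⟨t, rfl⟩
    · exact inM _ _ _
    · exact inu _ _
  have i3 := key _ _ nS BS hnS hBS gS
  have i4 := key _ _ nT BT hnT hBT gT
  have fin := (add_le_add i1 i2).trans ((rk_submod K (EM ∪ ES) (EM ∪ ET)).trans (add_le_add i3 i4))
  simp only [← Nat.cast_add] at fin
  have fin' := Nat.cast_le.mp fin
  rw [show Nat.card (Par D c) = Nat.card (HI D (lo c)) + Nat.card (AI D (up c)) from
    Nat.card_sum] at fin'
  have a1 := card_HI_split D (s := lo c) (s1 := fun p q => c p ≠ 0 ∧ c q = 0)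
    (s2 := fun p q => c p = 2 ∧ c q = 1) (by intro p q; simp only [lo]; omega)
    (by intro p q; omega)
  have a2 := card_HI_split D (s := fun p q => c p = 2 ∧ c q ≠ 2)
    (s1 := fun p q => c p = 2 ∧ c q = 0)
    (s2 := fun p q => c p = 2 ∧ c q = 1) (by intro p q; omega) (by intro p q; omega)
  have b1 := card_AI_split D (s := fun _ _ => True) (s1 := fun p q => ¬ (c p ≠ 0 ∧ c q = 0))
    (s2 := fun p q => c p ≠ 0 ∧ c q = 0) (by intro p q; simp only [true_iff]; tauto) (by tauto)
  have b2 := card_AI_split D (s := fun p q => ¬ (c p = 2 ∧ c q ≠ 2)) (s1 := up c)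
    (s2 := fun p q => c p = 1 ∧ c q = 0) (by intro p q; simp only [up]; omega)
    (by intro p q; simp only [up]; omega)
  have b3 := card_AI_split D (s := fun p q => c p ≠ 0 ∧ c q = 0)
    (s1 := fun p q => c p = 1 ∧ c q = 0)
    (s2 := fun p q => c p = 2 ∧ c q = 0) (by intro p q; omega) (by intro p q; omega)
  have b4 : Nat.card (Co D) = Nat.card (AI D fun _ _ => True) := rfl
  omega

end flag
end SchQ

namespace SchQ
open Finset
set_option linter.style.haveILetI false
set_option linter.unusedSectionVars false
set_option linter.unusedDecidableInType false
set_option linter.unusedFintypeInType false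

section nf
variable {I V Arr : Type} [Fintype I] [DecidableEq I] {D : QD I V Arr}
  {F : Type} [Field F]

open Classical in
/-- Coordinate projection. -/
noncomputable def Ed {R : Type} [Zero R] [One R] (P : I → Prop) : Matrix I I R :=
  Matrix.diagonal fun p => if P p then 1 else 0

lemma Ed_mul {R : Type} [CommRing R] (P : I → Prop) (m : Matrix I I R) :
    Ed P * m = rst (fun p _ => P p) m := by
  classical
  ext p q
  simp only [Ed, Matrix.diagonal_mul, rst, Matrix.of_apply]
  split_ifs <;> simp

lemma mul_Ed {R : Type} [CommRing R] (P : I → Prop) (m : Matrix I I R) :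
    m * Ed P = rst (fun _ q => P q) m := by
  classical
  ext p q
  simp only [Ed, Matrix.mul_diagonal, rst, Matrix.of_apply]
  split_ifs <;> simp

lemma Ed_T {R : Type} [CommRing R] (P : I → Prop) : (Ed P : Matrix I I R).transpose = Ed P := by
  simp [Ed]

lemma Ed_Ed {R : Type} [CommRing R] (P : I → Prop) : (Ed P : Matrix I I R) * Ed P = Ed P := by
  classical
  rw [Ed, Matrix.diagonal_mul_diagonal]
  congr 1; funext p; split_ifs <;> simp

lemma exists_col (f : Matrix I I F) : ∃ (b : I → Prop) (A : Matrix I I F),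
    Ed b * A = A ∧ A * f * Ed b = Ed b ∧ f * A * f = f := by
  classical
  obtain ⟨b, -, -, h1, h2⟩ := exists_linearIndepOn_extension (K := F) (v := f.col)
    (linearIndepOn_empty F _) (Set.empty_subset Set.univ)
  have h2' : LinearIndependent F (fun q : b => f.col q) := h2
  let T : (b → F) →ₗ[F] (I → F) := Fintype.linearCombination F (fun q : b => f.col q)
  obtain ⟨G, hG⟩ := T.exists_leftInverse_of_injective
    (by
      rw [LinearMap.ker_eq_bot]
      exact h2'.fintypeLinearCombination_injective)
  have hG' : ∀ q r : b, G (f.col q) r = if r = q then 1 else 0 := by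
    intro q r
    have := congrArg (fun u => u (Pi.single q 1) r) hG
    simpa [T, Fintype.linearCombination_apply, Pi.single_apply] using this
  let A : Matrix I I F := Matrix.of fun p q => if h : p ∈ b then G (Pi.single q 1) ⟨p, h⟩ else 0
  have hA : ∀ (p : I) (h : p ∈ b) (x : I → F), A.mulVec x p = G x ⟨p, h⟩ := by
    intro p h x
    have e : x = ∑ q, x q • (Pi.single q 1 : I → F) := by
      funext r; simp [Finset.sum_apply, Pi.single_apply]
    conv_rhs => rw [e]
    rw [map_sum, Finset.sum_apply]
    simp only [Matrix.mulVec, dotProduct, A, Matrix.of_apply, h, dif_pos, map_smul,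
      Pi.smul_apply, smul_eq_mul]
    exact Finset.sum_congr rfl fun q _ => mul_comm _ _
  have hAf : ∀ p q, p ∈ b → q ∈ b → (A * f) p q = if p = q then 1 else 0 := by
    intro p q hp hq
    have : (A * f) p q = A.mulVec (f.col q) p := rfl
    rw [this, hA p hp, hG' ⟨q, hq⟩ ⟨p, hp⟩]
    simp
  have hA0 : Ed (fun p => p ∈ b) * A = A := by
    rw [Ed_mul]; ext p q
    simp only [rst, Matrix.of_apply, A]
    split_ifs <;> simp
  have hAE : A * f * Ed (fun p => p ∈ b) = Ed fun p => p ∈ b := by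
    rw [mul_Ed]; ext p q
    simp only [rst, Matrix.of_apply]
    by_cases hp : p ∈ b
    · by_cases hq : q ∈ b
      · simp [hq, hAf p q hp hq, Ed, Matrix.diagonal_apply, hp]
      · have : p ≠ q := fun h => hq (h ▸ hp)
        simp [hq, Ed, this]
    · have : (A * f) p q = 0 := by
        simp [Matrix.mul_apply, A, hp]
      simp [this, Ed, Matrix.diagonal_apply, hp]
  refine ⟨fun p => p ∈ b, A, hA0, hAE, ?_⟩
  have h3 : ∀ q, ∃ x : b → F, ∑ r, x r • f.col r = f.col q := by
    intro q
    have : f.col q ∈ Submodule.span F (f.col '' b) := h1 ⟨q, trivial, rfl⟩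
    rw [Set.image_eq_range] at this
    exact (Submodule.mem_span_range_iff_exists_fun F).mp this
  choose x hx using h3
  let H : Matrix I I F := Matrix.of fun p q => if h : p ∈ b then x q ⟨p, h⟩ else 0
  have hH : f * H = f := by
    ext p q
    have h4 := congrFun (hx q) p
    rw [Finset.sum_apply] at h4
    rw [Matrix.mul_apply]
    refine Eq.trans ?_ h4
    symm
    refine Fintype.sum_of_injective (Subtype.val : b → I) Subtype.val_injective _ _ ?_ ?_
    · intro r hr
      have : r ∉ b := by simpa using hr
      simp [H, this]
    · intro r
      simp [H, Matrix.col, mul_comm]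
  have hEH : Ed (fun p => p ∈ b) * H = H := by
    rw [Ed_mul]; ext p q
    simp only [rst, Matrix.of_apply, H]
    split_ifs <;> simp
  have : A * f = H := by
    conv_lhs => rw [← hH, ← hEH, ← mul_assoc, ← mul_assoc, hAE, hEH]
  rw [mul_assoc, this, hH]


lemma exists_row (f : Matrix I I F) : ∃ (b : I → Prop) (A : Matrix I I F),
    A * Ed b = A ∧ Ed b * (f * A) = Ed b ∧ f * A * f = f := by
  obtain ⟨b, A, h1, h2, h3⟩ := exists_col f.transpose
  refine ⟨b, A.transpose, ?_, ?_, ?_⟩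
  · have := congrArg Matrix.transpose h1
    rwa [Matrix.transpose_mul, Ed_T] at this
  · have := congrArg Matrix.transpose h2
    simpa only [Matrix.transpose_mul, Ed_T, Matrix.transpose_transpose] using this
  · have := congrArg Matrix.transpose h3
    simpa only [Matrix.transpose_mul, mul_assoc, Matrix.transpose_transpose] using this

variable (D) in
/-- Graded part. -/
noncomputable def gr (m : Matrix I I F) : Matrix I I F := rst (fun p q => D.v p = D.v q) m

lemma HS_gr (m : Matrix I I F) : HS D (fun _ _ => True) (gr D m) := by
  intro p q h
  have : D.v p ≠ D.v q := fun h' => h ⟨h', trivial⟩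
  simp [gr, rst, this]

lemma gr_mul {s : I → I → Prop} {f m : Matrix I I F} (hf : HS D s f) :
    gr D m * f = gr D (m * f) := by
  ext p q
  simp only [gr, rst, Matrix.mul_apply, Matrix.of_apply]
  split_ifs with h
  · refine Finset.sum_congr rfl fun r _ => ?_
    split_ifs with h1
    · rfl
    · rw [hf r q fun h2 => h1 (h.trans h2.1.symm)]; simp
  · refine Finset.sum_eq_zero fun r _ => ?_
    split_ifs with h1
    · rw [hf r q fun h2 => h (h1.trans h2.1)]; simp
    · simp

lemma mul_gr {s : I → I → Prop} {f m : Matrix I I F} (hf : HS D s f) :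
    f * gr D m = gr D (f * m) := by
  ext p q
  simp only [gr, rst, Matrix.mul_apply, Matrix.of_apply]
  split_ifs with h
  · refine Finset.sum_congr rfl fun r _ => ?_
    split_ifs with h1
    · rfl
    · rw [hf p r fun h2 => h1 (h2.1.symm.trans h)]; simp
  · refine Finset.sum_eq_zero fun r _ => ?_
    split_ifs with h1
    · rw [hf p r fun h2 => h (h2.1.trans h1)]; simp
    · simp

lemma HS_Ed (P : I → Prop) : HS D (fun p q => p = q ∧ P p) (Ed P : Matrix I I F) := by
  intro p q h
  by_cases hpq : p = q
  · subst hpq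
    have : ¬ P p := fun h' => h ⟨rfl, rfl, h'⟩
    simp [Ed, this]
  · simp [Ed, hpq]

lemma gr_eq {s : I → I → Prop} {f : Matrix I I F} (hf : HS D s f) : gr D f = f := by
  ext p q
  simp only [gr, rst, Matrix.of_apply]
  split_ifs with h
  · rfl
  · exact (hf p q fun h' => h h'.1).symm

theorem normal_form {P : I → Prop} {f : Matrix I I F} (hf : HS D (fun p q => ¬ P p ∧ P q) f) :
    ∃ (c : I → Fin 4) (h k g g' : Matrix I I F), (∀ q, P q ↔ c q ≤ 1) ∧
      HS D (fun p q => c p = 1 ∧ c q = 0) h ∧ HS D (fun p q => c p = 3 ∧ c q = 2) k ∧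
      HS D (fun p q => c p = 2 ∧ c q = 1) g ∧ HS D (fun p q => c p = 1 ∧ c q = 2) g' ∧
      f = (1 + k) * g * (1 + h) ∧ g' * g = Ed (fun p => c p = 1) ∧
      g * g' = Ed (fun p => c p = 2) := by
  classical
  obtain ⟨b, A0, a1, a2, a3⟩ := exists_col f
  obtain ⟨t, C0, c1, c2, c3⟩ := exists_row f
  set A := gr D A0 with hA
  set C := gr D C0 with hC
  have A1 : Ed b * A = A := by rw [hA, mul_gr (HS_Ed b), a1]
  have A2 : A * f * Ed b = Ed b := by
    rw [hA, gr_mul hf, gr_mul (HS_Ed b), a2, gr_eq (HS_Ed b)]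
  have A3 : f * A * f = f := by rw [hA, mul_gr hf, gr_mul hf, a3, gr_eq hf]
  have C1 : C * Ed t = C := by rw [hC, gr_mul (HS_Ed t), c1]
  have C2 : Ed t * (f * C) = Ed t := by
    rw [hC, mul_gr hf, mul_gr (HS_Ed t), c2, gr_eq (HS_Ed t)]
  have C3 : f * C * f = f := by rw [hC, mul_gr hf, gr_mul hf, c3, gr_eq hf]
  have hAs : HS D (fun p _ => b p) A := by
    intro p q hh
    by_cases hb : b p
    · exact HS_gr A0 p q fun h => hh ⟨h.1, hb⟩
    · rw [← A1, Ed_mul]; simp [rst, hb]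
  have hCs : HS D (fun _ q => t q) C := by
    intro p q hh
    by_cases hb : t q
    · exact HS_gr C0 p q fun h => hh ⟨h.1, hb⟩
    · rw [← C1, mul_Ed]; simp [rst, hb]
  have hAf : HS D (fun p q => b p ∧ P q) (A * f) :=
    (hAs.mul hf).mono fun p q ⟨r, h1, h2⟩ => ⟨h1, h2.2⟩
  have hfC : HS D (fun p q => ¬ P p ∧ t q) (f * C) :=
    (hf.mul hCs).mono fun p q ⟨r, h1, h2⟩ => ⟨h1.1, h2⟩
  have bP' : ∀ q, b q → P q := by
    intro q hq
    by_contra hP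
    have h1 := congrFun (congrFun A2 q) q
    rw [mul_Ed] at h1
    simp only [rst, Matrix.of_apply, hq, if_true, Ed, Matrix.diagonal_apply_eq] at h1
    rw [hAf q q fun h => hP h.2.2] at h1
    exact zero_ne_one h1
  have tP : ∀ q, t q → ¬ P q := by
    intro q hq hP
    have h1 := congrFun (congrFun C2 q) q
    rw [Ed_mul] at h1
    simp only [rst, Matrix.of_apply, hq, if_true, Ed, Matrix.diagonal_apply_eq] at h1
    rw [hfC q q fun h => h.2.1 hP] at h1
    exact zero_ne_one h1
  let c : I → Fin 4 := fun q => if P q then (if b q then 1 else 0) else (if t q then 2 else 3)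
  have hc0 : ∀ q, c q = 0 ↔ P q ∧ ¬ b q := by
    intro q; simp only [c]; split_ifs <;> simp [*]
  have hc1 : ∀ q, c q = 1 ↔ b q := by
    intro q; have hbq := bP' q; simp only [c]; split_ifs <;> simp <;> tauto
  have hc2 : ∀ q, c q = 2 ↔ t q := by
    intro q; have hbq := tP q; simp only [c]; split_ifs <;> simp <;> tauto
  have hc3 : ∀ q, c q = 3 ↔ ¬ P q ∧ ¬ t q := by
    intro q; simp only [c]; split_ifs <;> simp [*]
  have e1 : (fun p => c p = 1) = b := funext fun p => propext (hc1 p)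
  have e2 : (fun p => c p = 2) = t := funext fun p => propext (hc2 p)
  have hg : HS D (fun p q => c p = 2 ∧ c q = 1) (Ed t * f * Ed b) :=
    (((HS_Ed t).mul hf).mul (HS_Ed b)).mono fun p q ⟨r, ⟨r', h1, h2⟩, h3⟩ => by
      rw [hc2, hc1]; exact ⟨h1.2, h3.1 ▸ h3.2⟩
  have hg' : HS D (fun p q => c p = 1 ∧ c q = 2) (A * f * C) :=
    (hAf.mul hCs).mono fun p q ⟨r, h1, h2⟩ => by
      rw [hc2, hc1]; exact ⟨h1.1, h2⟩
  refine ⟨c, A * f - Ed b, f * C - Ed t, Ed t * f * Ed b, A * f * C, ?_, ?_, ?_, hg, hg',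
    ?_, ?_, ?_⟩
  · intro q
    simp only [c]; split_ifs <;> simp [*]
  · intro p q hh
    by_cases hq : b q
    · have h1 := congrFun (congrFun A2 p) q
      rw [mul_Ed] at h1
      simp only [rst, Matrix.of_apply, hq, if_true] at h1
      rw [Matrix.sub_apply, h1, sub_self]
    · rw [Matrix.sub_apply, HS_Ed (D := D) b p q (fun h => hq (h.2.1 ▸ h.2.2)), sub_zero]
      refine hAf p q fun h => hh ⟨h.1, (hc1 p).2 h.2.1, (hc0 q).2 ⟨h.2.2, hq⟩⟩
  · intro p q hh
    by_cases hq : t p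
    · have h1 := congrFun (congrFun C2 p) q
      rw [Ed_mul] at h1
      simp only [rst, Matrix.of_apply, hq, if_true] at h1
      rw [Matrix.sub_apply, h1, sub_self]
    · rw [Matrix.sub_apply, HS_Ed (D := D) t p q (fun h => hq h.2.2), sub_zero]
      refine hfC p q fun h => hh ⟨h.1, (hc3 p).2 ⟨h.2.1, hq⟩, (hc2 q).2 h.2.2⟩
  · have h1 : (1 + (f * C - Ed t)) * (Ed t * f * Ed b) = f * C * f * Ed b := by
      calc _ = Ed t * f * Ed b + f * (C * Ed t) * f * Ed b - Ed t * Ed t * f * Ed b := by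
            noncomm_ring
        _ = _ := by rw [C1, Ed_Ed]; abel
    have h2 : f * C * f * Ed b * (1 + (A * f - Ed b)) = f := by
      calc _ = (f * C * f) * Ed b + (f * C * f) * (Ed b * A) * f - (f * C * f) * (Ed b * Ed b) := by
            noncomm_ring
        _ = _ := by rw [C3, A1, Ed_Ed, A3]; abel
    rw [h1, h2]
  · rw [e1]
    calc A * f * C * (Ed t * f * Ed b) = A * (f * (C * Ed t) * f) * Ed b := by
          simp only [mul_assoc]
      _ = _ := by rw [C1, C3, A2]
  · rw [e2]
    calc Ed t * f * Ed b * (A * f * C) = Ed t * ((f * (Ed b * A) * f) * C) := by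
          simp only [mul_assoc]
      _ = _ := by rw [A1, A3, C2]

lemma class_card {P P' : I → Prop} {g g' : Matrix I I F} (hg : HS D (fun p q => P' p ∧ P q) g)
    (hg' : HS D (fun p q => P p ∧ P' q) g') (h1 : g' * g = Ed P) (h2 : g * g' = Ed P') (i : V) :
    Nat.card {q // D.v q = i ∧ P q} = Nat.card {q // D.v q = i ∧ P' q} := by
  classical
  have key : ∀ (A B : I → Prop) (x y : Matrix I I F), HS D (fun p q => A p ∧ B q) x →
      HS D (fun p q => B p ∧ A q) y → x * y = Ed A →
      (x.submatrix (Subtype.val : {q // D.v q = i ∧ A q} → I)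
        (Subtype.val : {q // D.v q = i ∧ B q} → I)) *
      (y.submatrix (Subtype.val : {q // D.v q = i ∧ B q} → I)
        (Subtype.val : {q // D.v q = i ∧ A q} → I)) = 1 := by
    intro A B x y hx hy h
    ext p q
    have h3 := congrFun (congrFun h p) q
    rw [Matrix.mul_apply] at h3 ⊢
    have h4 : ∑ j : {q // D.v q = i ∧ B q}, x p j * y j q = ∑ j, x p j * y j q := by
      refine Fintype.sum_of_injective (Subtype.val : {q // D.v q = i ∧ B q} → I)
        Subtype.val_injective _ _ ?_ (fun _ => rfl)
      intro r hr
      have hr' : ¬ (D.v r = i ∧ B r) := fun h => hr ⟨⟨r, h⟩, rfl⟩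
      rw [hx p r fun h => hr' ⟨h.1 ▸ p.2.1, h.2.2⟩, zero_mul]
    simp only [Matrix.submatrix_apply]
    rw [h4, h3]
    by_cases hpq : p = q
    · subst hpq; simp [Ed, p.2.2]
    · have : (p : I) ≠ q := fun h => hpq (Subtype.ext h)
      simp [Ed, this, hpq]
  rw [Nat.card_eq_fintype_card, Nat.card_eq_fintype_card]
  exact Matrix.square_of_invertible _ _ (key P P' g' g hg' hg h1) (key P' P g g' hg hg' h2)

end nf
end SchQ

namespace SchQ
open Finset
set_option linter.style.haveILetI false
set_option linter.unusedSectionVars false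
set_option linter.unusedDecidableInType false
set_option linter.unusedFintypeInType false

section count2
variable {I V Arr : Type} [Fintype I] [DecidableEq I] [Finite Arr] (D : QD I V Arr)

variable {D} in
lemma exists_equiv {P P' : I → Prop}
    (h : ∀ i, Nat.card {q // D.v q = i ∧ P q} = Nat.card {q // D.v q = i ∧ P' q}) :
    ∃ e : {q // P q} ≃ {q // P' q}, ∀ q, D.v (e q).1 = D.v q.1 := by
  classical
  have key : ∀ P : I → Prop, ∀ i, Nat.card {q : {q // P q} // D.v q.1 = i} =
      Nat.card {q // D.v q = i ∧ P q} := by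
    intro P i
    refine Nat.card_congr ⟨fun q => ⟨q.1.1, q.2, q.1.2⟩, fun q => ⟨⟨q.1, q.2.2⟩, q.2.1⟩,
      fun _ => rfl, fun _ => rfl⟩
  have h1 : ∀ i, Nonempty ({q : {q // P q} // D.v q.1 = i} ≃ {q : {q // P' q} // D.v q.1 = i}) := by
    intro i
    rw [← Finite.card_eq, key, key, h i]
  let e1 := Equiv.sigmaFiberEquiv (fun q : {q // P q} => D.v q.1)
  let e2 := Equiv.sigmaFiberEquiv (fun q : {q // P' q} => D.v q.1)
  let e3 := Equiv.sigmaCongrRight fun i => (h1 i).some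
  refine ⟨(e1.symm.trans e3).trans e2, fun q => ?_⟩
  have : ∀ x, D.v (e2 (e3 x)).1 = x.1 := fun x => (e3 x).2.2
  exact this (e1.symm q)

lemma card_HI_col (A : I → Prop) {P P' : I → Prop}
    (h : ∀ i, Nat.card {q // D.v q = i ∧ P q} = Nat.card {q // D.v q = i ∧ P' q}) :
    Nat.card (HI D fun p q => A p ∧ P q) = Nat.card (HI D fun p q => A p ∧ P' q) := by
  obtain ⟨e, he⟩ := exists_equiv h
  refine Nat.card_congr ⟨
    fun t => ⟨(t.1.1, e ⟨t.1.2, t.2.2.2⟩), (by rw [he]; exact t.2.1), t.2.2.1, (e _).2⟩,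
    fun t => ⟨(t.1.1, e.symm ⟨t.1.2, t.2.2.2⟩),
      (by rw [← he, Equiv.apply_symm_apply]; exact t.2.1), t.2.2.1, (e.symm _).2⟩, ?_, ?_⟩
  · intro t; simp
  · intro t; simp

lemma card_HI_row (A : I → Prop) {P P' : I → Prop}
    (h : ∀ i, Nat.card {q // D.v q = i ∧ P q} = Nat.card {q // D.v q = i ∧ P' q}) :
    Nat.card (HI D fun p q => P p ∧ A q) = Nat.card (HI D fun p q => P' p ∧ A q) := by
  obtain ⟨e, he⟩ := exists_equiv h
  refine Nat.card_congr ⟨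
    fun t => ⟨(e ⟨t.1.1, t.2.2.1⟩, t.1.2), (by rw [he]; exact t.2.1), (e _).2, t.2.2.2⟩,
    fun t => ⟨(e.symm ⟨t.1.1, t.2.2.1⟩, t.1.2),
      (by rw [← he, Equiv.apply_symm_apply]; exact t.2.1), (e.symm _).2, t.2.2.2⟩, ?_, ?_⟩
  · intro t; simp
  · intro t; simp

lemma card_AI_col (A : I → Prop) {P P' : I → Prop}
    (h : ∀ i, Nat.card {q // D.v q = i ∧ P q} = Nat.card {q // D.v q = i ∧ P' q}) :
    Nat.card (AI D fun p q => A p ∧ P q) = Nat.card (AI D fun p q => A p ∧ P' q) := by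
  obtain ⟨e, he⟩ := exists_equiv h
  refine Nat.card_congr ⟨
    fun t => ⟨(t.1.1, t.1.2.1, e ⟨t.1.2.2, t.2.2.2⟩),
      ⟨t.2.1.1, (by rw [he]; exact t.2.1.2)⟩, t.2.2.1, (e _).2⟩,
    fun t => ⟨(t.1.1, t.1.2.1, e.symm ⟨t.1.2.2, t.2.2.2⟩),
      ⟨t.2.1.1, (by rw [← he, Equiv.apply_symm_apply]; exact t.2.1.2)⟩,
      t.2.2.1, (e.symm _).2⟩, ?_, ?_⟩
  · intro t; simp
  · intro t; simp

lemma card_AI_row (A : I → Prop) {P P' : I → Prop}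
    (h : ∀ i, Nat.card {q // D.v q = i ∧ P q} = Nat.card {q // D.v q = i ∧ P' q}) :
    Nat.card (AI D fun p q => P p ∧ A q) = Nat.card (AI D fun p q => P' p ∧ A q) := by
  obtain ⟨e, he⟩ := exists_equiv h
  refine Nat.card_congr ⟨
    fun t => ⟨(t.1.1, e ⟨t.1.2.1, t.2.2.1⟩, t.1.2.2),
      ⟨(by rw [he]; exact t.2.1.1), t.2.1.2⟩, (e _).2, t.2.2.2⟩,
    fun t => ⟨(t.1.1, e.symm ⟨t.1.2.1, t.2.2.1⟩, t.1.2.2),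
      ⟨(by rw [← he, Equiv.apply_symm_apply]; exact t.2.1.1), t.2.1.2⟩,
      (e.symm _).2, t.2.2.2⟩, ?_, ?_⟩
  · intro t; simp
  · intro t; simp

end count2

section flag5
variable {I V Arr : Type} [Fintype I] [DecidableEq I] [Finite Arr] {D : QD I V Arr}
  {K F : Type} [Field K] [Field F] [Algebra K F]

lemma In_inv {L : Subfield F} {P P' : I → Prop} {g g' : Matrix I I F} (hg : In L g)
    (h1 : g' * g = Ed P) (h2 : g * g' = Ed P') (h3 : g' = Ed P * g') : In L g' := by
  classical
  let g0 : Matrix I I L := Matrix.of fun p q => ⟨g p q, hg p q⟩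
  have e : g0.map (algebraMap L F) = g := by ext p q; rfl
  obtain ⟨b, A, -, -, hA⟩ := exists_col g0
  have hA' : g * A.map (algebraMap L F) * g = g := by
    have := congrArg (fun m => m.map (algebraMap L F)) hA
    simpa only [Matrix.map_mul, e] using this
  have : g' = Ed P * A.map (algebraMap L F) * Ed P' := by
    rw [← h1, ← h2]
    calc g' = g' * g * g' := by rw [h1, ← h3]
      _ = g' * (g * A.map (algebraMap L F) * g) * g' := by rw [hA']
      _ = _ := by simp only [mul_assoc]
  have hE : ∀ P : I → Prop, In L (Ed P) := by
    intro P p q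
    simp only [Ed, Matrix.diagonal_apply]
    split_ifs
    exacts [L.one_mem, L.zero_mem, L.zero_mem]
  rw [this]
  exact ((hE P).mul fun p q => (A p q).2).mul (hE P')


theorem core {c : I → Fin 3} (hc02 : ∀ q, c q = 0 ∨ c q = 2)
    {w : Par D c → F} (hwM : AlgebraicIndependent K (Phi D c w))
    {ι : Type} [Finite ι] {t : ι → F} (hwt : AlgebraicIndependent K (Sum.elim w t))
    {f : Matrix I I F} (hf : HS D (lo c) f)
    (hfB : ∀ a p q, lo c p q → (f * bP D c w a) p q = (bP D c w a * f) p q)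
    (ht : ∀ k, t k ∈ Cl K (Set.range w ∪ Set.range fun x : I × I => f x.1 x.2)) :
    Nat.card ι + Nat.card (AI D (lo c)) ≤ Nat.card (HI D (lo c)) := by
  classical
  obtain ⟨c4, h, k, g, g', hP, hh, hk, hg, hg', ef, eg1, eg2⟩ :=
    normal_form (P := fun q => c q = 0) (hf.mono (s' := fun p q => ¬ c p = 0 ∧ c q = 0)
      fun p q h => by have := hc02 p; have := hc02 q; simp only [lo] at h; omega)
  have hP0 : ∀ q, c q = 0 ↔ (c4 q = 0 ∨ c4 q = 1) := fun q => by rw [hP]; omega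
  have hP2 : ∀ q, c q = 2 ↔ (c4 q = 2 ∨ c4 q = 3) := fun q => by
    have := hc02 q; have := hP0 q; omega
  have cls := class_card hg hg' eg1 eg2
  set n := mP D c w with hn_def
  set B := bP D c w with hB_def
  have hn : HS D (fun p q => (c4 p = 2 ∨ c4 p = 3) ∧ (c4 q = 0 ∨ c4 q = 1)) n :=
    (HS_hM _).mono fun p q h => by
      rw [← hP0, ← hP2]
      have := hc02 p; have := hc02 q; simp only [lo] at h; omega
  have hB : AS D (fun p q => (c4 p = 0 ∨ c4 p = 1) ∨ (c4 q = 2 ∨ c4 q = 3)) B :=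
    (AS_aM _).mono fun p q h => by
      rw [← hP0, ← hP2]
      have := hc02 p; have := hc02 q; simp only [up] at h; omega
  let N : Arr → Matrix I I F := fun a => rst (fun p q => c q = 0) (B a)
  let L : Arr → Matrix I I F := fun a => rst (fun p q => c p = 2) (B a)
  let E : Arr → Matrix I I F := fun a => rst (fun p q => c p = 0 ∧ c q = 2) (B a)
  have hN : AS D (fun p q => (c4 p = 0 ∨ c4 p = 1) ∧ (c4 q = 0 ∨ c4 q = 1)) N :=
    (hB.rst _).mono fun p q h => by rw [hP0] at h; omega
  have hL : AS D (fun p q => (c4 p = 2 ∨ c4 p = 3) ∧ (c4 q = 2 ∨ c4 q = 3)) L :=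
    (hB.rst _).mono fun p q h => by rw [hP2] at h; omega
  have hE : AS D (fun p q => (c4 p = 0 ∨ c4 p = 1) ∧ (c4 q = 2 ∨ c4 q = 3)) E :=
    (hB.rst _).mono fun p q h => by rw [hP2, hP0] at h; omega
  have eB : ∀ a, B a = N a + L a + E a := by
    intro a
    ext p q
    simp only [N, L, E, rst, Matrix.add_apply, Matrix.of_apply]
    by_cases hB0 : c p ≤ c q
    · have := hc02 p; have := hc02 q
      split_ifs <;> first | omega | simp
    · have : B a p q = 0 := AS_aM _ a p q fun h => hB0 h.2
      simp [this]
  have hf4 : HS D (fun p q => (c4 p = 2 ∨ c4 p = 3) ∧ (c4 q = 0 ∨ c4 q = 1)) f :=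
    hf.mono fun p q h => by
      rw [← hP0, ← hP2]
      have := hc02 p; have := hc02 q; simp only [lo] at h; omega
  have cross : ∀ a, f * N a = L a * f := by
    intro a
    have z1 := (AS.mul_left hf4 hL) a
    have z2 := (AS.mul_left hf4 hE) a
    have z3 := (AS.mul_right hf4 hN) a
    have z4 := (AS.mul_right hf4 hE) a
    have z5 := (AS.mul_left hf4 hN) a
    have z6 := (AS.mul_right hf4 hL) a
    ext p q
    by_cases hl : lo c p q
    · have := hfB a p q hl
      rw [eB, mul_add, mul_add, add_mul, add_mul] at this
      simp only [Matrix.add_apply] at this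
      have hq : c q = 0 := by have := hc02 p; have := hc02 q; simp only [lo] at hl; omega
      have hp : c p = 2 := by have := hc02 p; have := hc02 q; simp only [lo] at hl; omega
      have x1 : (f * L a) p q = 0 := z1 p q fun h => by obtain ⟨_, r, h1, h2⟩ := h; omega
      have x2 : (f * E a) p q = 0 := z2 p q fun h => by
        obtain ⟨_, r, h1, h2⟩ := h; rw [hP0] at hq; omega
      have x3 : (N a * f) p q = 0 := z3 p q fun h => by obtain ⟨_, r, h1, h2⟩ := h; omega
      have x4 : (E a * f) p q = 0 := z4 p q fun h => by
        obtain ⟨_, r, h1, h2⟩ := h; rw [hP2] at hp; omega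
      rw [x1, x2, x3, x4] at this
      simpa using this
    · have x5 : (f * N a) p q = 0 := z5 p q fun h => by
        obtain ⟨_, r, h1, h2⟩ := h; rw [← hP2] at h1; rw [← hP0 q] at h2
        simp only [lo] at hl; omega
      have x6 : (L a * f) p q = 0 := z6 p q fun h => by
        obtain ⟨_, r, h1, h2⟩ := h; rw [← hP2] at h1; rw [← hP0 q] at h2
        simp only [lo] at hl; omega
      rw [x5, x6]
  have hhh : h * h = 0 := hh.mul_eq_zero hh fun p r q h1 h2 => by omega
  have hkk : k * k = 0 := hk.mul_eq_zero hk fun p r q h1 h2 => by omega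
  let N' : Arr → Matrix I I F := fun a => (1 + h) * N a * (1 - h)
  let L' : Arr → Matrix I I F := fun a => (1 - k) * L a * (1 + k)
  have cross' : ∀ a, g * N' a = L' a * g := by
    intro a
    have h1 : (1 - k) * (f * N a) * (1 - h) = (1 - k) * (L a * f) * (1 - h) := by rw [cross]
    rw [ef] at h1
    have h2 : (1 - k) * ((1 + k) * g * (1 + h) * N a) * (1 - h) = g * N' a := by
      calc _ = ((1 - k) * (1 + k)) * g * ((1 + h) * N a * (1 - h)) := by simp only [mul_assoc]
        _ = _ := by rw [sq_inv2 hkk, one_mul]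
    have h3 : (1 - k) * (L a * ((1 + k) * g * (1 + h))) * (1 - h) = L' a * g := by
      calc _ = ((1 - k) * L a * (1 + k)) * g * ((1 + h) * (1 - h)) := by simp only [mul_assoc]
        _ = _ := by rw [sq_inv hhh, mul_one]
    rw [← h2, ← h3, h1]
  have hN'0 : AS D (fun p q => (c4 p = 0 ∨ c4 p = 1) ∧ (c4 q = 0 ∨ c4 q = 1)) N' := by
    refine (AS.mul_right hh.one_sub (AS.mul_left hh.one_add hN)).mono ?_
    rintro p q ⟨r, ⟨r', h1, h2⟩, h3⟩
    rcases h1 with rfl | h1 <;> rcases h3 with rfl | h3 <;> omega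
  have hL'0 : AS D (fun p q => (c4 p = 2 ∨ c4 p = 3) ∧ (c4 q = 2 ∨ c4 q = 3)) L' := by
    refine (AS.mul_right hk.one_add (AS.mul_left hk.one_sub hL)).mono ?_
    rintro p q ⟨r, ⟨r', h1, h2⟩, h3⟩
    rcases h1 with rfl | h1 <;> rcases h3 with rfl | h3 <;> omega
  have N'1 : ∀ a, rst (fun p _ => c4 p = 1) (N' a) = g' * L' a * g := by
    intro a
    rw [← Ed_mul, ← eg1, mul_assoc, cross', ← mul_assoc]
  have L'2 : ∀ a, rst (fun _ q => c4 q = 2) (L' a) = g * N' a * g' := by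
    intro a
    rw [← mul_Ed, ← eg2, ← mul_assoc, ← cross']
  have hN' : AS D (fun p q => (c4 p = 0 ∧ (c4 q = 0 ∨ c4 q = 1)) ∨ (c4 p = 1 ∧ c4 q = 1)) N' := by
    intro a p q hpq
    by_cases h1 : c4 p = 1 ∧ c4 q = 0
    · have h2 : (g' * L' a * g) p q = 0 := (AS.mul_right hg (AS.mul_left hg' hL'0)) a p q fun h => by
        obtain ⟨_, r, h3, h4⟩ := h; omega
      have h3 := congrFun (congrFun (N'1 a) p) q
      rw [h2] at h3
      simpa [rst, h1.1] using h3
    · exact hN'0 a p q fun h => hpq ⟨h.1, by have := h.2; omega⟩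
  have hL' : AS D (fun p q => (c4 p = 2 ∧ (c4 q = 2 ∨ c4 q = 3)) ∨ (c4 p = 3 ∧ c4 q = 3)) L' := by
    intro a p q hpq
    by_cases h1 : c4 p = 3 ∧ c4 q = 2
    · have h2 : (g * N' a * g') p q = 0 := (AS.mul_right hg' (AS.mul_left hg hN'0)) a p q fun h => by
        obtain ⟨_, r, ⟨r', h3, h5⟩, h4⟩ := h; omega
      have h3 := congrFun (congrFun (L'2 a) p) q
      rw [h2] at h3
      simpa [rst, h1.2] using h3
    · exact hL'0 a p q fun h => hpq ⟨h.1, by have := h.2; omega⟩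
  -- first count
  have count1 : Nat.card (HI D (lo c)) + Nat.card (AI D (up c)) + Nat.card ι ≤
      Nat.card (HI D (lo c)) + (Nat.card (AI D fun p q => c p = 0 ∧ c q = 2) +
      (Nat.card (HI D fun p q => c4 p = 1 ∧ c4 q = 0) +
      (Nat.card (HI D fun p q => c4 p = 2 ∧ c4 q = 1) +
      (Nat.card (HI D fun p q => c4 p = 3 ∧ c4 q = 2) +
      (Nat.card (AI D fun p q => (c4 p = 0 ∧ (c4 q = 0 ∨ c4 q = 1)) ∨ (c4 p = 1 ∧ c4 q = 1)) +
      Nat.card (AI D fun p q => (c4 p = 2 ∨ c4 p = 3) ∧ c4 q = 3)))))) := by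
    let W : HI D (lo c) ⊕ (AI D (fun p q => c p = 0 ∧ c q = 2)) ⊕
        (HI D (fun p q => c4 p = 1 ∧ c4 q = 0)) ⊕ (HI D (fun p q => c4 p = 2 ∧ c4 q = 1)) ⊕
        (HI D (fun p q => c4 p = 3 ∧ c4 q = 2)) ⊕
        (AI D (fun p q => (c4 p = 0 ∧ (c4 q = 0 ∨ c4 q = 1)) ∨ (c4 p = 1 ∧ c4 q = 1))) ⊕
        (AI D (fun p q => (c4 p = 2 ∨ c4 p = 3) ∧ c4 q = 3)) → F :=
      Sum.elim (fun x => n x.1.1 x.1.2) <| Sum.elim (fun x => E x.1.1 x.1.2.1 x.1.2.2) <|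
      Sum.elim (fun x => h x.1.1 x.1.2) <| Sum.elim (fun x => g x.1.1 x.1.2) <|
      Sum.elim (fun x => k x.1.1 x.1.2) <| Sum.elim (fun x => N' x.1.1 x.1.2.1 x.1.2.2) <|
      fun x => L' x.1.1 x.1.2.1 x.1.2.2
    set Z := Cl K (Set.range W) with hZ
    have s1 : ∀ x, W x ∈ Z := fun x => subset_Cl K _ ⟨x, rfl⟩
    have in_n : In Z n := In_of_HS (HS_hM _) fun x => s1 (Sum.inl x)
    have in_E : ∀ a, In Z (E a) := In_of_AS (s := fun p q => c p = 0 ∧ c q = 2)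
      (hE.mono fun p q h => by rw [hP0, hP2]; exact h) fun x => s1 (Sum.inr (Sum.inl x))
    have in_h : In Z h := In_of_HS hh fun x => s1 (Sum.inr (Sum.inr (Sum.inl x)))
    have in_g : In Z g := In_of_HS hg fun x => s1 (Sum.inr (Sum.inr (Sum.inr (Sum.inl x))))
    have in_k : In Z k := In_of_HS hk fun x =>
      s1 (Sum.inr (Sum.inr (Sum.inr (Sum.inr (Sum.inl x)))))
    have in_N' : ∀ a, In Z (N' a) := In_of_AS hN' fun x =>
      s1 (Sum.inr (Sum.inr (Sum.inr (Sum.inr (Sum.inr (Sum.inl x))))))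
    have in_g' : In Z g' := In_inv in_g eg1 eg2 (by
      rw [Ed_mul]; exact (hg'.rst_eq fun p q h => h.1).symm)
    have in_L' : ∀ a, In Z (L' a) := by
      intro a p q
      by_cases hq : c4 q = 2
      · have h3 := congrFun (congrFun (L'2 a) p) q
        simp only [rst, Matrix.of_apply, hq, if_true] at h3
        rw [h3]
        exact ((in_g.mul (in_N' a)).mul in_g') p q
      · by_cases hx : (D.v p = D.tgt a ∧ D.v q = D.src a) ∧ (c4 p = 2 ∨ c4 p = 3) ∧ c4 q = 3
        · exact s1 (Sum.inr (Sum.inr (Sum.inr (Sum.inr (Sum.inr (Sum.inr ⟨(a, p, q), hx⟩))))))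
        · rw [hL'0 a p q fun h => hx ⟨h.1, by have := h.2; omega⟩]
          exact Z.zero_mem
    have in_N : ∀ a, In Z (N a) := by
      intro a
      have : N a = (1 - h) * N' a * (1 + h) := by
        calc N a = ((1 - h) * (1 + h)) * N a * ((1 - h) * (1 + h)) := by
              rw [sq_inv2 hhh, one_mul, mul_one]
          _ = _ := by simp only [N', mul_assoc]
      rw [this]
      exact ((In_one.sub in_h).mul (in_N' a)).mul (In_one.add in_h)
    have in_L : ∀ a, In Z (L a) := by
      intro a
      have : L a = (1 + k) * L' a * (1 - k) := by
        calc L a = ((1 + k) * (1 - k)) * L a * ((1 + k) * (1 - k)) := by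
              rw [sq_inv hkk, one_mul, mul_one]
          _ = _ := by simp only [L', mul_assoc]
      rw [this]
      exact ((In_one.add in_k).mul (in_L' a)).mul (In_one.sub in_k)
    have in_B : ∀ a, In Z (B a) := fun a => by
      rw [eB]; exact ((in_N a).add (in_L a)).add (in_E a)
    have in_f : In Z f := by
      rw [ef]; exact ((In_one.add in_k).mul in_g).mul (In_one.add in_h)
    have in_w : ∀ i, w i ∈ Z := by
      rintro (x | x)
      · have := in_n x.1.1 x.1.2
        simp only [n, mP, hM, Matrix.of_apply, dif_pos x.2] at this
        exact this
      · have := in_B x.1.1 x.1.2.1 x.1.2.2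
        simp only [B, bP, aM, Matrix.of_apply, dif_pos x.2] at this
        exact this
    have in_t : ∀ i, t i ∈ Z := fun i => by
      refine Cl_le K ?_ (ht i)
      rintro y (⟨x, rfl⟩ | ⟨x, rfl⟩)
      · exact in_w x
      · exact in_f _ _
    have r1 : (Nat.card (Par D c ⊕ ι) : ℕ∞) ≤ rk K (Set.range W) := by
      refine le_rk K hwt ?_
      rintro y ⟨x | x, rfl⟩
      · exact in_w x
      · exact in_t x
    have r2 := Nat.cast_le.mp (r1.trans (rk_le K W (subset_Cl K _)))
    simpa only [Nat.card_sum, Par] using r2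
  have count2 : Nat.card (AI D fun p q => c4 p = 3 ∧ c4 q = 0) ≤
      Nat.card (HI D fun p q => c4 p = 3 ∧ c4 q = 0) := by
    let c3 : I → Fin 3 := fun q => if c4 q = 0 then 0 else if c4 q = 3 then 2 else 1
    have d0 : ∀ q, c3 q = 0 ↔ c4 q = 0 := fun q => by
      simp only [c3]; split_ifs <;> simp [*]
    have d1 : ∀ q, c3 q = 1 ↔ (c4 q = 1 ∨ c4 q = 2) := fun q => by
      simp only [c3]; split_ifs <;> omega
    have d2 : ∀ q, c3 q = 2 ↔ c4 q = 3 := fun q => by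
      simp only [c3]; split_ifs <;> omega
    have dup : ∀ p q, c4 p ≤ c4 q → c3 p ≤ c3 q := fun p q hpq => by
      have := d0 p; have := d1 p; have := d2 p; have := d0 q; have := d1 q; have := d2 q; omega
    have hcell : Cell D c3 (PhiM D c w) := by
      let n1 := rst (fun p q => c4 p = 2 ∧ c4 q = 1) n
      have hn1 : HS D (fun p q => c4 p = 2 ∧ c4 q = 1) n1 := (hn.rst _).mono fun p q h => h.2
      have hn2 : HS D (fun p q => (c4 p = 3 ∨ c4 q = 0) ∧ (c4 p = 2 ∨ c4 p = 3) ∧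
          (c4 q = 0 ∨ c4 q = 1)) (n - n1) := by
        intro p q hpq
        simp only [n1, rst, Matrix.sub_apply, Matrix.of_apply]
        split_ifs with h1
        · simp
        · rw [sub_zero]
          exact hn p q fun h2 => hpq ⟨h2.1, by have := h2.2; omega⟩
      have z1 : n1 * n1 = 0 := hn1.mul_eq_zero hn1 fun p r q h1 h2 => by omega
      have z2 : n * k = 0 := hn.mul_eq_zero hk fun p r q h1 h2 => by omega
      have z3 : k * h = 0 := hk.mul_eq_zero hh fun p r q h1 h2 => by omega
      have z4 : n * n1 = 0 := hn.mul_eq_zero hn1 fun p r q h1 h2 => by omega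
      have z5 : h * n1 = 0 := hh.mul_eq_zero hn1 fun p r q h1 h2 => by omega
      let X : Arr → Matrix I I F := fun a => (1 + h) * ((1 - k) * B a * (1 + k)) * (1 - h)
      have hX : AS D (fun p q => c4 p ≤ c4 q) X := by
        have eX : ∀ a, X a = N' a + L' a + (1 + h) * ((1 - k) * E a * (1 + k)) * (1 - h) := by
          intro a
          have k1 : k * N a = 0 := by
            ext p q; exact AS.mul_left hk hN a p q fun h => by obtain ⟨_, r, h1, h2⟩ := h; omega
          have k2 : N a * k = 0 := by
            ext p q; exact AS.mul_right hk hN a p q fun h => by obtain ⟨_, r, h1, h2⟩ := h; omega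
          have k3 : h * L' a = 0 := by
            ext p q; exact AS.mul_left hh hL'0 a p q fun h => by
              obtain ⟨_, r, h1, h2⟩ := h; omega
          have k4 : L' a * h = 0 := by
            ext p q; exact AS.mul_right hh hL'0 a p q fun h => by
              obtain ⟨_, r, h1, h2⟩ := h; omega
          have k5 : (1 - k) * N a * (1 + k) = N a := by
            rw [sub_mul, one_mul, k1, sub_zero, mul_add, mul_one, k2, add_zero]
          have k6 : (1 + h) * L' a * (1 - h) = L' a := by
            rw [add_mul, one_mul, k3, add_zero, mul_sub, mul_one, k4, sub_zero]
          calc X a = (1 + h) * ((1 - k) * N a * (1 + k)) * (1 - h) + (1 + h) * L' a * (1 - h) +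
                (1 + h) * ((1 - k) * E a * (1 + k)) * (1 - h) := by
                simp only [X, L']; rw [eB]; noncomm_ring
            _ = _ := by rw [k5, k6]
        have hE' : AS D (fun p q => (c4 p = 0 ∨ c4 p = 1) ∧ (c4 q = 2 ∨ c4 q = 3))
            fun a => (1 + h) * ((1 - k) * E a * (1 + k)) * (1 - h) := by
          refine (AS.mul_right hh.one_sub (AS.mul_left hh.one_add
            (AS.mul_right hk.one_add (AS.mul_left hk.one_sub hE)))).mono ?_
          rintro p q ⟨r, ⟨r', h1, ⟨r2, ⟨r3, h5, h6⟩, h4⟩⟩, h3⟩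
          rcases h1 with rfl | h1 <;> rcases h3 with rfl | h3 <;> rcases h4 with rfl | h4 <;>
            rcases h5 with rfl | h5 <;> omega
        have hX' := ((hN'.mono (s' := fun p q => c4 p ≤ c4 q) fun p q h => by omega).add
          (hL'.mono fun p q h => by omega)).add (hE'.mono fun p q h => by omega)
        rw [show X = _ from funext eX]
        exact hX'
      refine ⟨(n - n1) + k - h - n * h - k * n1, fun a => (1 + n1) * X a * (1 - n1), ?_, ?_, ?_⟩
      · have lo3 : ∀ p q, (c4 p = 3 ∧ c4 q ≠ 3 ∨ c4 p ≠ 0 ∧ c4 q = 0) → lo c3 p q := fun p q h => by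
          have := d0 p; have := d1 p; have := d2 p; have := d0 q; have := d1 q; have := d2 q
          simp only [lo]; omega
        refine HS.mono (s := fun p q => c4 p = 3 ∧ c4 q ≠ 3 ∨ c4 p ≠ 0 ∧ c4 q = 0) ?_ lo3
        refine ((((hn2.mono ?_).add (hk.mono ?_)).sub (hh.mono ?_)).sub
          ((hn.mul hh).mono ?_)).sub ((hk.mul hn1).mono ?_)
        · intro p q h; omega
        · intro p q h; omega
        · intro p q h; omega
        · rintro p q ⟨r, h1, h2⟩; omega
        · rintro p q ⟨r, h1, h2⟩; omega
      · refine (AS.mul_right hn1.one_sub (AS.mul_left hn1.one_add hX)).mono ?_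
        rintro p q ⟨r, ⟨r', h1, h2⟩, h3⟩
        have e0 := d0 p; have e1 := d1 p; have e2 := d2 p
        have e3 := d0 q; have e4 := d1 q; have e5 := d2 q
        simp only [up]
        rcases h1 with rfl | h1 <;> rcases h3 with rfl | h3 <;> omega
      · intro a
        have eu : 1 + ((n - n1) + k - h - n * h - k * n1) =
            (1 + n) * ((1 + k) * (1 - h)) * (1 - n1) := by
          have : (1 + n) * ((1 + k) * (1 - h)) * (1 - n1) =
            1 + ((n - n1) + k - h - n * h - k * n1) + n * k - k * h - (n * k) * h - n * n1
              + h * n1 + n * (h * n1) - (n * k) * n1 + (k * h) * n1 + n * (k * h) * n1 := by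
            noncomm_ring
          rw [this, z2, z3, z4, z5]; simp
        rw [eu]
        have hM1 : PhiM D c w a * (1 + n) = (1 + n) * B a := PhiM_mul c w a
        have hW : (1 + k) * (1 - h) * X a = B a * ((1 + k) * (1 - h)) := by
          calc (1 + k) * (1 - h) * X a = (1 + k) * (((1 - h) * (1 + h)) * (1 - k)) * B a *
                ((1 + k) * (1 - h)) := by simp only [X, mul_assoc]
            _ = _ := by rw [sq_inv2 hhh, one_mul, sq_inv hkk, one_mul]
        calc PhiM D c w a * ((1 + n) * ((1 + k) * (1 - h)) * (1 - n1))
            = (PhiM D c w a * (1 + n)) * ((1 + k) * (1 - h)) * (1 - n1) := by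
              simp only [mul_assoc]
          _ = (1 + n) * (B a * ((1 + k) * (1 - h))) * (1 - n1) := by
              rw [hM1]; simp only [mul_assoc]
          _ = (1 + n) * ((1 + k) * (1 - h) * X a) * (1 - n1) := by rw [hW]
          _ = (1 + n) * ((1 + k) * (1 - h) * (((1 - n1) * (1 + n1)) * X a)) * (1 - n1) := by
              rw [sq_inv2 z1, one_mul]
          _ = _ := by simp only [mul_assoc]
    rw [← aM_Phi] at hcell
    obtain ⟨w3, hw3⟩ := exists_Phi hcell
    have hc3 : AlgebraicIndependent K
        (Phi D c3 (MvPolynomial.X : Par D c3 → MvPolynomial (Par D c3) K)) := by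
      rw [algebraicIndependent_iff]
      intro p hp
      have := Phi_vanish hp w3
      rw [hw3] at this
      exact (algebraicIndependent_iff.mp hwM) p this
    have := flag_ineq hc3
    simpa only [d0, d2] using this
  have hcl := cls
  have q1 := card_AI_row D (fun q => c4 q = 0) hcl
  have q2 := card_AI_col D (fun q => c4 q = 2) hcl
  have q3 := card_AI_col D (fun q => c4 q = 3) hcl
  have q4 := card_HI_row D (fun q => c4 q = 0) hcl
  have q5 := card_HI_col D (fun q => c4 q = 3) hcl
  have lo4 : ∀ p q, lo c p q ↔ (c4 p = 2 ∨ c4 p = 3) ∧ (c4 q = 0 ∨ c4 q = 1) := fun p q => by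
    rw [← hP0, ← hP2]; have := hc02 p; have := hc02 q; simp only [lo]; omega
  have up4 : ∀ p q, up c p q ↔ ((c4 p = 0 ∨ c4 p = 1) ∨ (c4 q = 2 ∨ c4 q = 3)) := fun p q => by
    rw [← hP0, ← hP2]; have := hc02 p; have := hc02 q; simp only [up]; omega
  have a1 := card_AI_split D (s := lo c) (s1 := fun p q => c4 p = 2 ∧ (c4 q = 0 ∨ c4 q = 1))
    (s2 := fun p q => c4 p = 3 ∧ (c4 q = 0 ∨ c4 q = 1)) (by intro p q; rw [lo4]; omega)
    (by intro p q; omega)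
  have a2 := card_AI_split D (s := fun p q => c4 p = 2 ∧ (c4 q = 0 ∨ c4 q = 1))
    (s1 := fun p q => c4 p = 2 ∧ c4 q = 0) (s2 := fun p q => c4 p = 2 ∧ c4 q = 1)
    (by intro p q; omega) (by intro p q; omega)
  have a3 := card_AI_split D (s := fun p q => c4 p = 3 ∧ (c4 q = 0 ∨ c4 q = 1))
    (s1 := fun p q => c4 p = 3 ∧ c4 q = 0) (s2 := fun p q => c4 p = 3 ∧ c4 q = 1)
    (by intro p q; omega) (by intro p q; omega)
  have b1 := card_HI_split D (s := lo c) (s1 := fun p q => c4 p = 2 ∧ (c4 q = 0 ∨ c4 q = 1))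
    (s2 := fun p q => c4 p = 3 ∧ (c4 q = 0 ∨ c4 q = 1)) (by intro p q; rw [lo4]; omega)
    (by intro p q; omega)
  have b2 := card_HI_split D (s := fun p q => c4 p = 2 ∧ (c4 q = 0 ∨ c4 q = 1))
    (s1 := fun p q => c4 p = 2 ∧ c4 q = 0) (s2 := fun p q => c4 p = 2 ∧ c4 q = 1)
    (by intro p q; omega) (by intro p q; omega)
  have b3 := card_HI_split D (s := fun p q => c4 p = 3 ∧ (c4 q = 0 ∨ c4 q = 1))
    (s1 := fun p q => c4 p = 3 ∧ c4 q = 0) (s2 := fun p q => c4 p = 3 ∧ c4 q = 1)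
    (by intro p q; omega) (by intro p q; omega)
  have u1 := card_AI_split D (s := up c) (s1 := fun p q => c p = 0 ∧ c q = 2)
    (s2 := fun p q => (c4 p = 0 ∨ c4 p = 1) ∧ (c4 q = 0 ∨ c4 q = 1) ∨
      (c4 p = 2 ∨ c4 p = 3) ∧ (c4 q = 2 ∨ c4 q = 3))
    (by intro p q; rw [up4, hP0, hP2]; omega) (by intro p q; rw [hP0, hP2]; omega)
  have u2 := card_AI_split D (s := fun p q => (c4 p = 0 ∨ c4 p = 1) ∧ (c4 q = 0 ∨ c4 q = 1) ∨
      (c4 p = 2 ∨ c4 p = 3) ∧ (c4 q = 2 ∨ c4 q = 3))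
    (s1 := fun p q => (c4 p = 0 ∨ c4 p = 1) ∧ (c4 q = 0 ∨ c4 q = 1))
    (s2 := fun p q => (c4 p = 2 ∨ c4 p = 3) ∧ (c4 q = 2 ∨ c4 q = 3))
    (by intro p q; omega) (by intro p q; omega)
  have u3 := card_AI_split D (s := fun p q => (c4 p = 0 ∨ c4 p = 1) ∧ (c4 q = 0 ∨ c4 q = 1))
    (s1 := fun p q => (c4 p = 0 ∧ (c4 q = 0 ∨ c4 q = 1)) ∨ (c4 p = 1 ∧ c4 q = 1))
    (s2 := fun p q => c4 p = 1 ∧ c4 q = 0)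
    (by intro p q; omega) (by intro p q; omega)
  have u4 := card_AI_split D (s := fun p q => (c4 p = 2 ∨ c4 p = 3) ∧ (c4 q = 2 ∨ c4 q = 3))
    (s1 := fun p q => (c4 p = 2 ∨ c4 p = 3) ∧ c4 q = 3)
    (s2 := fun p q => (c4 p = 2 ∨ c4 p = 3) ∧ c4 q = 2)
    (by intro p q; omega) (by intro p q; omega)
  have u5 := card_AI_split D (s := fun p q => (c4 p = 2 ∨ c4 p = 3) ∧ c4 q = 2)
    (s1 := fun p q => c4 p = 2 ∧ c4 q = 2)
    (s2 := fun p q => c4 p = 3 ∧ c4 q = 2)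
    (by intro p q; omega) (by intro p q; omega)
  omega

end flag5
end SchQ

namespace SchQ
open Finset
set_option linter.style.haveILetI false
set_option linter.unusedSectionVars false
set_option linter.unusedDecidableInType false
set_option linter.unusedFintypeInType false

section dl
variable {I V Arr : Type} [Fintype I] [DecidableEq I] [Finite Arr] (D : QD I V Arr)

/-- the infinitesimal action map -/
noncomputable def dl {R : Type} [CommRing R] (c : I → Fin 3) (B : Arr → Matrix I I R) :
    (HI D (lo c) → R) →ₗ[R] (AI D (lo c) → R) where
  toFun x := fun t =>
    (hM D (lo c) x * B t.1.1 - B t.1.1 * hM D (lo c) x) t.1.2.1 t.1.2.2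
  map_add' x y := by
    have : hM D (lo c) (x + y) = hM D (lo c) x + hM D (lo c) y := by
      ext p q
      by_cases h : D.v p = D.v q ∧ lo c p q <;> simp [hM, h]
    funext t
    rw [this, add_mul, mul_add]
    simp only [Matrix.sub_apply, Matrix.add_apply, Pi.add_apply]
    ring
  map_smul' k x := by
    have : hM D (lo c) (k • x) = k • hM D (lo c) x := by
      ext p q
      by_cases h : D.v p = D.v q ∧ lo c p q <;> simp [hM, h]
    funext t
    rw [this, smul_mul_assoc, mul_smul_comm]
    simp only [Matrix.sub_apply, Matrix.smul_apply, Pi.smul_apply, smul_eq_mul, RingHom.id_apply]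
    ring

variable {D}
variable {R S : Type} [CommRing R] [CommRing S]

lemma dl_apply (c : I → Fin 3) (B : Arr → Matrix I I R) (x : HI D (lo c) → R) (t : AI D (lo c)) :
    dl D c B x t =
    (hM D (lo c) x * B t.1.1 - B t.1.1 * hM D (lo c) x) t.1.2.1 t.1.2.2 := rfl

lemma dl_map (f : R →+* S) (c : I → Fin 3) (B : Arr → Matrix I I R) (x : HI D (lo c) → R)
    (t : AI D (lo c)) :
    dl D c (fun a => (B a).map f) (fun i => f (x i)) t = f (dl D c B x t) := by
  rw [dl_apply, dl_apply, ← hM_map f]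
  simp only [← RingHom.mapMatrix_apply, ← map_mul, ← map_sub]
  simp [RingHom.mapMatrix_apply]

lemma bP_map (f : R →+* S) (c : I → Fin 3) (w : Par D c → R) (a : Arr) :
    (bP D c w a).map f = bP D c (fun i => f (w i)) a := aM_map f _ _ _

variable {K F0 : Type} [Field K] [Field F0] [Algebra K F0]

lemma dl_surj {c : I → Fin 3} (hc02 : ∀ q, c q = 0 ∨ c q = 2)
    {w0 : Par D c → F0} (hw : AlgebraicIndependent K w0)
    (hwM : AlgebraicIndependent K (Phi D c w0))
    (hgen : ∀ L : Subfield F0, (∀ k, algebraMap K F0 k ∈ L) → (∀ i, w0 i ∈ L) → ∀ x, x ∈ L) :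
    Function.Surjective (dl D c (bP D c w0)) := by
  classical
  have : Fintype Arr := Fintype.ofFinite _
  let W := LinearMap.ker (dl D c (bP D c w0))
  let n := Module.finrank F0 W
  let b : Module.Basis (Fin n) F0 W := Module.finBasis F0 W
  let A := MvPolynomial (Fin n) F0
  let F := FractionRing A
  let al : F0 →+* F := algebraMap F0 F
  have hal : Function.Injective al := al.injective
  let w : Par D c → F := fun i => al (w0 i)
  let t : Fin n → F := fun k => algebraMap A F (MvPolynomial.X k)
  have ht : AlgebraicIndependent F0 t :=
    (MvPolynomial.algebraicIndependent_X (Fin n) F0).map'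
      (f := (IsScalarTower.toAlgHom F0 A F)) (IsFractionRing.injective A F)
  have hwt : AlgebraicIndependent K (Sum.elim w t) := by
    have h1 := (hw.sumElim_comp ht).comp (Equiv.sumComm _ _) (Equiv.injective _)
    convert h1 using 1
    funext i
    rcases i with i | i <;> rfl
  have hwM' : AlgebraicIndependent K (Phi D c w) := by
    have h1 := hwM.map' (f := (IsScalarTower.toAlgHom K F0 F)) hal
    convert h1 using 1
    funext s
    exact (Phi_map al c w0 s).symm
  let xi : HI D (lo c) → F := fun s => ∑ k, t k * al ((b k : HI D (lo c) → F0) s)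
  have hxi : xi = ∑ k, t k • (fun s => al ((b k : HI D (lo c) → F0) s)) := by
    funext s; simp [xi]
  have hdl : dl D c (bP D c w) xi = 0 := by
    rw [hxi, map_sum]
    apply Finset.sum_eq_zero
    intro k _
    rw [map_smul]
    have h2 : dl D c (bP D c w) (fun s => al ((b k : HI D (lo c) → F0) s)) = 0 := by
      funext s
      have h3 := dl_map al c (bP D c w0) (b k : HI D (lo c) → F0) s
      have h4 : (fun a => (bP D c w0 a).map al) = bP D c w := by
        funext a; exact bP_map al c w0 a
      rw [h4] at h3
      rw [h3]
      have h5 : dl D c (bP D c w0) (b k : HI D (lo c) → F0) = 0 := (b k).2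
      rw [h5]; simp
    rw [h2, smul_zero]
  let f := hM D (lo c) xi
  have hf : HS D (lo c) f := HS_hM _
  have hB : AS D (up c) (bP D c w) := AS_aM _
  have hfB : ∀ a p q, lo c p q → (f * bP D c w a) p q = (bP D c w a * f) p q := by
    intro a p q hpq
    by_cases hh : D.v p = D.tgt a ∧ D.v q = D.src a
    · have h2 := congrFun hdl ⟨(a, p, q), hh, hpq⟩
      rw [dl_apply] at h2
      simp only [Matrix.sub_apply, Pi.zero_apply] at h2
      exact sub_eq_zero.mp h2
    · rw [Matrix.mul_apply, Matrix.mul_apply]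
      rw [Finset.sum_eq_zero, Finset.sum_eq_zero]
      · intro r _
        by_cases h1 : D.v r = D.v q ∧ lo c r q
        · rw [hB a p r (fun h2 => hh ⟨h2.1.1, h1.1 ▸ h2.1.2⟩), zero_mul]
        · rw [hf r q h1, mul_zero]
      · intro r _
        by_cases h1 : D.v p = D.v r ∧ lo c p r
        · rw [hB a r q (fun h2 => hh ⟨h1.1 ▸ h2.1.1, h2.1.2⟩), mul_zero]
        · rw [hf p r h1, zero_mul]
  have hal2 : ∀ x, al x ∈ Cl K (Set.range w ∪ Set.range fun x : I × I => f x.1 x.2) := by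
    intro x
    apply hgen ((Cl K (Set.range w ∪ Set.range fun x : I × I => f x.1 x.2)).comap al)
    · intro k
      rw [Subfield.mem_comap]
      have := algebraMap_mem_Cl (K := K) (Set.range w ∪ Set.range fun x : I × I => f x.1 x.2) k
      rwa [IsScalarTower.algebraMap_apply K F0 F] at this
    · intro i
      rw [Subfield.mem_comap]
      exact subset_Cl K _ (Or.inl ⟨i, rfl⟩)
  have htm : ∀ k, t k ∈ Cl K (Set.range w ∪ Set.range fun x : I × I => f x.1 x.2) := by
    intro k
    obtain ⟨g, hg⟩ := LinearMap.exists_extend (b.coord k)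
    have hg2 : ∀ l, g (b l : HI D (lo c) → F0) = if l = k then 1 else 0 := by
      intro l
      have := LinearMap.congr_fun hg (b l)
      simp only [LinearMap.comp_apply, Submodule.subtype_apply] at this
      rw [this, Module.Basis.coord_apply, Module.Basis.repr_self, Finsupp.single_apply]
    have e : t k = ∑ s, al (g (Pi.single s 1)) * xi s := by
      have e0 : ∀ s, al (g (Pi.single s 1)) * xi s =
          ∑ l, al (g (Pi.single s 1)) * (t l * al ((b l : HI D (lo c) → F0) s)) := by
        intro s
        exact Finset.mul_sum _ _ _
      rw [Finset.sum_congr rfl fun s _ => e0 s, Finset.sum_comm]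
      rw [Finset.sum_eq_single k]
      · have := hg2 k
        rw [if_pos rfl, LinearMap.pi_apply_eq_sum_univ g] at this
        have h2 := congrArg al this
        rw [map_sum, map_one] at h2
        calc t k = t k * 1 := (mul_one _).symm
          _ = _ := by
            rw [← h2, Finset.mul_sum]
            refine Finset.sum_congr rfl fun s _ => ?_
            rw [smul_eq_mul, map_mul]
            rw [show (Pi.single s (1:F0) : HI D (lo c) → F0) = fun j => if s = j then 1 else 0 from by
              funext j; simp [Pi.single_apply, eq_comm]]
            ring
      · intro l _ hl
        have := hg2 l
        rw [if_neg hl, LinearMap.pi_apply_eq_sum_univ g] at this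
        have h2 := congrArg al this
        rw [map_sum, map_zero] at h2
        rw [← mul_zero (t l), ← h2, Finset.mul_sum]
        refine Finset.sum_congr rfl fun s _ => ?_
        rw [smul_eq_mul, map_mul]
        rw [show (Pi.single s (1:F0) : HI D (lo c) → F0) = fun j => if s = j then 1 else 0 from by
              funext j; simp [Pi.single_apply, eq_comm]]
        ring
      · simp
    rw [e]
    refine Subfield.sum_mem _ fun s _ => Subfield.mul_mem _ (hal2 _) ?_
    refine subset_Cl K _ (Or.inr ⟨s.1, ?_⟩)
    simp [f, hM, s.2]
  have key := core hc02 hwM' hwt hf hfB htm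
  rw [← LinearMap.range_eq_top]
  apply Submodule.eq_top_of_finrank_eq
  have rn := LinearMap.finrank_range_add_finrank_ker (dl D c (bP D c w0))
  rw [Module.finrank_pi] at rn ⊢
  have hle := Submodule.finrank_le (LinearMap.range (dl D c (bP D c w0)))
  rw [Module.finrank_pi] at hle
  rw [Nat.card_eq_fintype_card, Nat.card_eq_fintype_card, Nat.card_eq_fintype_card,
    Fintype.card_fin] at key
  have : n = Module.finrank F0 (LinearMap.ker (dl D c (bP D c w0))) := rfl
  omega

theorem surj_of_algInd [Infinite K] {c : I → Fin 3} (hc02 : ∀ q, c q = 0 ∨ c q = 2)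
    (hc : AlgebraicIndependent K (Phi D c (MvPolynomial.X : Par D c → MvPolynomial (Par D c) K))) :
    ∃ X : Arr → Matrix I I K, AS D (up c) X ∧ SurjAt D c X := by
  classical
  have : Fintype Arr := Fintype.ofFinite _
  let A := MvPolynomial (Par D c) K
  let F := FractionRing A
  let w : Par D c → F := fun i => algebraMap A F (MvPolynomial.X i)
  have hw : AlgebraicIndependent K w :=
    (MvPolynomial.algebraicIndependent_X (Par D c) K).map'
      (f := (IsScalarTower.toAlgHom K A F)) (IsFractionRing.injective A F)
  have hPh : AlgebraicIndependent K (Phi D c w) := by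
    have h1 := hc.map' (f := (IsScalarTower.toAlgHom K A F)) (IsFractionRing.injective A F)
    convert h1 using 1
    funext t
    exact (Phi_map (algebraMap A F) c MvPolynomial.X t).symm
  have hsurj := dl_surj hc02 hw hPh (by
    intro L hK hL x
    have hA : ∀ a : A, algebraMap A F a ∈ L := by
      intro a
      induction a using MvPolynomial.induction_on with
      | C k =>
        have := hK k
        rwa [IsScalarTower.algebraMap_apply K A F] at this
      | add p q hp hq => rw [map_add]; exact L.add_mem hp hq
      | mul_X p i hp => rw [map_mul]; exact L.mul_mem hp (hL i)
    obtain ⟨p, q, hq, rfl⟩ := IsFractionRing.div_surjective (A := A) x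
    exact L.div_mem (hA p) (hA q))
  choose x hx using fun t : AI D (lo c) => hsurj (Pi.single t 1)
  obtain ⟨s, hs⟩ := IsLocalization.exist_integer_multiples_of_finite (nonZeroDivisors A)
    (fun i : AI D (lo c) × HI D (lo c) => x i.1 i.2)
  choose xi hxi using hs
  have hs0 : (s : A) ≠ 0 := nonZeroDivisors.coe_ne_zero s
  have h1 : ∀ t t', dl D c (bP D c (MvPolynomial.X : Par D c → A)) (fun h => xi (t, h)) t' =
      if t = t' then (s : A) else 0 := by
    intro t t'
    apply IsFractionRing.injective A F
    rw [← dl_map (algebraMap A F)]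
    have e1 : (fun a => (bP D c (MvPolynomial.X : Par D c → A) a).map (algebraMap A F)) =
      bP D c w := by funext a; exact bP_map _ c _ a
    have e2 : (fun h => algebraMap A F (xi (t, h))) = (algebraMap A F s) • x t := by
      funext h
      rw [hxi (t, h)]
      simp [Algebra.smul_def]
    rw [e1, e2, map_smul, hx]
    by_cases h : t = t' <;> simp [h]
  obtain ⟨u, hu⟩ : ∃ u : Par D c → K, MvPolynomial.eval u (s : A) ≠ 0 := by
    by_contra! h
    exact hs0 (MvPolynomial.funext fun u => by rw [h u, map_zero])
  let ev : A →+* K := MvPolynomial.eval u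
  refine ⟨bP D c u, AS_aM _, ?_⟩
  have h2 : ∀ t t', dl D c (bP D c u) (fun h => ev (xi (t, h))) t' =
      if t = t' then ev (s : A) else 0 := by
    intro t t'
    have e1 : bP D c u =
      (fun a => (bP D c (MvPolynomial.X : Par D c → A) a).map ev) := by
      funext a; rw [bP_map]; simp [ev]
    rw [e1, dl_map ev, h1]
    split_ifs <;> simp
  intro y
  let x' : HI D (lo c) → K := ∑ t : AI D (lo c), (y ⟨t.1, t.2.1, trivial⟩ / ev s) • (fun h => ev (xi (t, h)))
  refine ⟨hM D (lo c) x', HS_hM _, ?_⟩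
  intro t ht
  have hlo : lo c t.1.2.1 t.1.2.2 := by simpa [lo, up] using ht
  have := dl_apply c (bP D c u) x' ⟨t.1, t.2.1, hlo⟩
  rw [← this]
  simp only [x', map_sum, map_smul, Finset.sum_apply, Pi.smul_apply, h2, smul_eq_mul]
  rw [Finset.sum_eq_single ⟨t.1, t.2.1, hlo⟩]
  · rw [if_pos rfl, div_mul_cancel₀ _ hu]
  · intro b _ hb; rw [if_neg hb, mul_zero]
  · simp

end dl
end SchQ

namespace SchQ
open Finset
set_option linter.style.haveILetI false
set_option linter.unusedSectionVars false
set_option linter.unusedDecidableInType false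
set_option linter.unusedFintypeInType false

section cell
variable {I V Arr : Type} [Fintype I] [DecidableEq I] [DecidableEq V] {D : QD I V Arr}
variable {K : Type} [Field K]

lemma exists_coords (N : Submodule K (I → K)) :
    ∃ S : I → Prop, (∀ n ∈ N, (∀ p, S p → n p = 0) → n = 0) ∧
      ∀ u : I → K, ∃ n ∈ N, ∀ p, S p → n p = u p := by
  classical
  let φ : I → Module.Dual K N := fun p => (LinearMap.proj p : (I → K) →ₗ[K] K) ∘ₗ N.subtype
  obtain ⟨κ, a, ha, hspan, hli⟩ := exists_linearIndependent' K φ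
  have : Finite κ := Finite.of_injective a ha
  have : Fintype κ := Fintype.ofFinite κ
  have hinj : ∀ n : N, (∀ k, n.1 (a k) = 0) → n = 0 := by
    intro n hn
    have h1 : Submodule.span K (Set.range (φ ∘ a)) ≤ LinearMap.ker (Module.Dual.eval K N n) := by
      rw [Submodule.span_le]
      rintro _ ⟨k, rfl⟩
      exact hn k
    rw [hspan, Submodule.span_le] at h1
    ext p
    exact h1 ⟨p, rfl⟩
  let ρ : N →ₗ[K] (κ → K) :=
    { toFun := fun n k => n.1 (a k)
      map_add' := fun _ _ => rfl
      map_smul' := fun _ _ => rfl }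
  have hρ : Function.Injective ρ := by
    rw [← LinearMap.ker_eq_bot, LinearMap.ker_eq_bot']
    intro n hn
    exact hinj n fun k => congrFun hn k
  have hcard : Module.finrank K N = Module.finrank K (κ → K) := by
    apply le_antisymm (LinearMap.finrank_le_finrank_of_injective hρ)
    rw [Module.finrank_pi]
    have := hli.fintype_card_le_finrank
    rwa [Subspace.dual_finrank_eq] at this
  have hsurj : Function.Surjective ρ :=
    (LinearMap.injective_iff_surjective_of_finrank_eq_finrank hcard).mp hρ
  refine ⟨fun p => p ∈ Set.range a, ?_, ?_⟩
  · intro n hn h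
    have := hinj ⟨n, hn⟩ fun k => h _ ⟨k, rfl⟩
    exact congrArg Subtype.val this
  · intro u
    obtain ⟨n, hn⟩ := hsurj fun k => u (a k)
    refine ⟨n.1, n.2, ?_⟩
    rintro _ ⟨k, rfl⟩
    exact congrFun hn k

lemma cell_of_sub {X : Arr → Matrix I I K} (hX : AS D (fun _ _ => True) X)
    (P : V → (I → K) →ₗ[K] (I → K)) (hP : ∀ i n p, P i n p = if D.v p = i then n p else 0)
    {N : Submodule K (I → K)} (hN : ∀ a, ∀ n ∈ N, Matrix.mulVec (X a) n ∈ N)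
    (hg : ∀ i, ∀ n ∈ N, P i n ∈ N) :
    ∃ c : I → Fin 3, (∀ q, c q = 0 ∨ c q = 2) ∧ Cell D c X ∧
      ∀ i, Nat.card {p // D.v p = i ∧ c p = 0} = Module.finrank K (N.map (P i)) := by
  classical
  obtain ⟨S, hS1, hS2⟩ := exists_coords N
  have hinj : ∀ n ∈ N, ∀ n' ∈ N, (∀ p, S p → n p = n' p) → n = n' := by
    intro n hn n' hn' h
    have := hS1 (n - n') (N.sub_mem hn hn') fun p hp => by simp [h p hp]
    exact sub_eq_zero.mp this
  choose z hzN hz using fun q : I => hS2 (Pi.single q 1)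
  have hzg : ∀ q, S q → ∀ p, D.v p ≠ D.v q → z q p = 0 := by
    intro q hq p hp
    have : P (D.v q) (z q) = z q := by
      apply hinj _ (hg _ _ (hzN q)) _ (hzN q)
      intro r hr
      rw [hP]
      split_ifs with h
      · rfl
      · rw [hz q r hr, Pi.single_apply, if_neg]
        rintro rfl
        exact h rfl
    rw [← this, hP, if_neg hp]
  let c : I → Fin 3 := fun p => if S p then 0 else 2
  have hc0 : ∀ p, c p = 0 ↔ S p := by
    intro p; by_cases h : S p <;> simp [c, h]
  have hc2 : ∀ p, c p = 0 ∨ c p = 2 := by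
    intro p; by_cases h : S p <;> simp [c, h]
  have hlo : ∀ p q, lo c p q ↔ ¬ S p ∧ S q := by
    intro p q; by_cases h : S p <;> by_cases h' : S q <;> simp [c, h, h', lo]
  let m : Matrix I I K := Matrix.of fun p q => if ¬ S p ∧ S q then z q p else 0
  have hm : HS D (lo c) m := by
    intro p q h
    rw [hlo] at h
    by_cases h1 : ¬ S p ∧ S q
    · simp only [m, Matrix.of_apply, if_pos h1]
      exact hzg q h1.2 p fun h2 => h ⟨h2, h1⟩
    · simp only [m, Matrix.of_apply, if_neg h1]
  have hmm : m * m = 0 := by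
    ext p q
    rw [Matrix.mul_apply]
    apply Finset.sum_eq_zero
    intro r _
    simp only [m, Matrix.of_apply]
    by_cases h : S r <;> simp [h]
  have hcol : ∀ q, S q → ∀ p, (1 + m) p q = z q p := by
    intro q hq p
    by_cases h : S p
    · simp [m, h, hz q p h, Matrix.one_apply, Pi.single_apply]
    · have : p ≠ q := fun e => h (e ▸ hq)
      simp [m, h, hq, this]
  have hexp : ∀ n ∈ N, ∀ p, ¬ S p → Matrix.mulVec (1 - m) n p = 0 := by
    intro n hn p hp
    let u : I → K := fun q => if S q then n q else 0
    have e1 : Matrix.mulVec (1 + m) u = n := by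
      have e2 : Matrix.mulVec (1 + m) u = ∑ q, u q • (if S q then z q else 0) := by
        funext p
        simp only [Matrix.mulVec, dotProduct, Finset.sum_apply, Pi.smul_apply, smul_eq_mul]
        refine Finset.sum_congr rfl fun q _ => ?_
        by_cases h : S q
        · rw [hcol q h]; simp [h]; ring
        · simp [u, h]
      apply hinj _ _ _ hn
      · intro r hr
        rw [e2]
        simp only [Finset.sum_apply, Pi.smul_apply, smul_eq_mul]
        rw [Finset.sum_eq_single r]
        · simp [u, hr, hz r r hr]
        · intro q _ hq
          by_cases h : S q
          · simp [h, hz q r hr, hq.symm]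
          · simp [h]
        · simp
      · rw [e2]
        refine N.sum_mem fun q _ => N.smul_mem _ ?_
        split_ifs
        · exact hzN q
        · exact N.zero_mem
    rw [← e1, Matrix.mulVec_mulVec, sq_inv2 hmm, Matrix.one_mulVec]
    simp [u, hp]
  refine ⟨c, hc2, ⟨m, fun a => (1 - m) * X a * (1 + m), hm, ?_, ?_⟩, ?_⟩
  · have h1 : HS D (fun _ _ => True) (1 + m) :=
      (HS_one.mono fun _ _ _ => trivial).add (hm.mono fun _ _ _ => trivial)
    have h2 : HS D (fun _ _ => True) (1 - m) :=
      (HS_one.mono fun _ _ _ => trivial).sub (hm.mono fun _ _ _ => trivial)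
    have h3 : AS D (fun _ _ => True) (fun a => (1 - m) * X a * (1 + m)) :=
      ((hX.mul_left h2).mul_right h1).mono fun _ _ _ => trivial
    intro a p q h
    by_cases h4 : D.v p = D.tgt a ∧ D.v q = D.src a
    · have h5 : lo c p q := by
        have : ¬ up c p q := fun h6 => h ⟨h4, h6⟩
        simpa [lo, up] using this
      rw [hlo] at h5
      have h6 : Matrix.mulVec (X a) (z q) ∈ N := hN a _ (hzN q)
      have h7 := hexp _ h6 p h5.1
      change ((1 - m) * X a * (1 + m)) p q = 0
      rw [← h7, Matrix.mulVec_mulVec, Matrix.mul_apply]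
      simp only [Matrix.mulVec, dotProduct]
      refine Finset.sum_congr rfl fun r _ => ?_
      rw [hcol q h5.2]
    · exact h3 a p q fun h5 => h4 h5.1
  · intro a
    change X a * (1 + m) = (1 + m) * ((1 - m) * X a * (1 + m))
    rw [mul_assoc, ← mul_assoc (1 + m), sq_inv hmm, one_mul]
  · intro i
    let ρ : N.map (P i) →ₗ[K] ({p // D.v p = i ∧ c p = 0} → K) :=
      { toFun := fun n k => n.1 k.1
        map_add' := fun _ _ => rfl
        map_smul' := fun _ _ => rfl }
    have hbij : Function.Bijective ρ := by
      constructor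
      · rw [← LinearMap.ker_eq_bot, LinearMap.ker_eq_bot']
        rintro ⟨_, n, hn, rfl⟩ h
        apply Subtype.ext
        apply hS1 _ (hg i n hn)
        intro p hp
        by_cases hv : D.v p = i
        · exact congrFun h ⟨p, hv, (hc0 p).mpr hp⟩
        · rw [hP, if_neg hv]
      · intro u
        obtain ⟨n, hn, hnu⟩ := hS2 fun p => if h : D.v p = i ∧ c p = 0 then u ⟨p, h⟩ else 0
        refine ⟨⟨P i n, n, hn, rfl⟩, ?_⟩
        funext ⟨p, hp⟩
        change P i n p = _
        rw [hP, if_pos hp.1, hnu p ((hc0 p).mp hp.2), dif_pos hp]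
    rw [(LinearEquiv.ofBijective ρ hbij).finrank_eq, Module.finrank_pi, Nat.card_eq_fintype_card]

/-- If every nonvanishing locus of a nonzero polynomial meets the union of the cells, then one
of the cells is dominant. -/
lemma exists_dominant (C : (I → Fin 3) → Prop)
    (h : ∀ p : MvPolynomial (Co D) K, p ≠ 0 → ∃ x : Co D → K, MvPolynomial.eval x p ≠ 0 ∧
      ∃ c, C c ∧ Cell D c (aM D (fun _ _ => True) x)) :
    ∃ c, C c ∧ AlgebraicIndependent K
      (Phi D c (MvPolynomial.X : Par D c → MvPolynomial (Par D c) K)) := by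
  classical
  by_contra! hcon
  have h1 : ∀ c, ∃ p : MvPolynomial (Co D) K, p ≠ 0 ∧ (C c →
      MvPolynomial.aeval (Phi D c (MvPolynomial.X : Par D c → MvPolynomial (Par D c) K)) p = 0) := by
    intro c
    by_cases hc : C c
    · have := hcon c hc
      rw [algebraicIndependent_iff] at this
      push Not at this
      obtain ⟨p, hp, hp0⟩ := this
      exact ⟨p, hp0, fun _ => hp⟩
    · exact ⟨1, one_ne_zero, fun h => absurd h hc⟩
  choose p hp0 hp using h1
  obtain ⟨x, hx, c, hc, hcell⟩ := h (∏ c, p c) (Finset.prod_ne_zero_iff.mpr fun c _ => hp0 c)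
  obtain ⟨w, hw⟩ := exists_Phi hcell
  have h2 := Phi_vanish (hp c hc) w
  rw [hw] at h2
  apply hx
  rw [map_prod]
  apply Finset.prod_eq_zero (Finset.mem_univ c)
  exact h2

end cell
end SchQ

namespace SchQ
open Finset
set_option linter.style.haveILetI false
set_option linter.unusedSectionVars false
set_option linter.unusedDecidableInType false
set_option linter.unusedFintypeInType false

section tr
open QuiverData
variable {Q : QuiverData} {K : Type} [Field K] {d dx dy : Fin Q.n → ℕ}

lemma proj_apply (i : Fin Q.n) (m : Carrier Q d K) (p : Σ i : Fin Q.n, Fin (d i)) :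
    proj Q d K i m p = if p.1 = i then m p else 0 := rfl

lemma proj_single (i : Fin Q.n) (p : Σ i : Fin Q.n, Fin (d i)) (k : K) :
    proj Q d K i (Pi.single p k) = if p.1 = i then Pi.single p k else 0 := by
  funext q
  rw [proj_apply]
  by_cases h : q = p
  · subst h; by_cases h2 : q.1 = i <;> simp [h2]
  · by_cases h2 : q.1 = i <;> by_cases h3 : p.1 = i <;> simp [h2, h3, h]

lemma proj_proj (i j : Fin Q.n) :
    proj Q d K i ∘ₗ proj Q d K j = if i = j then proj Q d K i else 0 := by
  refine LinearMap.ext fun m => ?_; funext p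
  rw [LinearMap.comp_apply, proj_apply, proj_apply]
  by_cases h : i = j
  · subst h; by_cases h2 : p.1 = i <;> simp [h2, proj_apply]
  · by_cases h2 : p.1 = i
    · have : p.1 ≠ j := fun h3 => h (h2.symm.trans h3)
      simp [h, h2]
    · simp [h, h2]

lemma sum_proj : ∑ i, proj Q d K i = LinearMap.id := by
  refine LinearMap.ext fun m => ?_; funext p
  simp [LinearMap.sum_apply, proj_apply]

/-- graded linear maps between carriers along the arrow `a` -/
def GrA (a : Fin Q.numArrows) (e : Carrier Q dx K →ₗ[K] Carrier Q dy K) : Prop :=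
  ∀ p q, ¬ (p.1 = Q.tgt a ∧ q.1 = Q.src a) → e (Pi.single q 1) p = 0

def GrV (e : Carrier Q dx K →ₗ[K] Carrier Q dy K) : Prop :=
  ∀ i, e ∘ₗ proj Q dx K i = proj Q dy K i ∘ₗ e

lemma GrV_iff (e : Carrier Q dx K →ₗ[K] Carrier Q dy K) :
    GrV e ↔ ∀ p q, p.1 ≠ q.1 → e (Pi.single q 1) p = 0 := by
  constructor
  · intro h p q hpq
    have := congrFun (LinearMap.congr_fun (h q.1) (Pi.single q 1)) p
    simp only [LinearMap.comp_apply, proj_single, if_true, proj_apply, if_neg hpq] at this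
    exact this
  · intro h i
    apply LinearMap.pi_ext'
    intro q
    ext1
    funext p
    simp only [LinearMap.comp_apply, LinearMap.single_apply, proj_single, proj_apply]
    by_cases h1 : q.1 = i
    · by_cases h2 : p.1 = i
      · simp [h1, h2]
      · simp only [h1, h2, if_true, if_false]
        exact h p q (by rw [h1]; exact h2)
    · by_cases h2 : p.1 = i
      · simp only [h1, h2, if_true, if_false, map_zero, Pi.zero_apply]
        exact (h p q (by rw [h2]; exact fun h3 => h1 h3.symm)).symm
      · simp [h1, h2]

lemma GrA_arrowMap (x : RepSpace Q d K) (a : Fin Q.numArrows) : GrA a (arrowMap Q d K x a) := by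
  intro p q h
  simp only [arrowMap, LinearMap.coe_mk, AddHom.coe_mk]
  split_ifs with h1
  · apply Finset.sum_eq_zero
    intro w _
    rw [Pi.single_apply, if_neg, mul_zero]
    intro h2
    exact h ⟨h1, by rw [← h2]⟩
  · rfl

lemma arrowMap_entry (x : RepSpace Q d K) (a : Fin Q.numArrows) (p : Fin (d (Q.tgt a)))
    (q : Fin (d (Q.src a))) :
    arrowMap Q d K x a (Pi.single ⟨Q.src a, q⟩ 1) ⟨Q.tgt a, p⟩ = x ⟨a, (p, q)⟩ := by
  simp only [arrowMap, LinearMap.coe_mk, AddHom.coe_mk, dif_pos]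
  rw [Finset.sum_eq_single q]
  · simp
  · intro w _ hw
    rw [Pi.single_apply, if_neg, mul_zero]
    intro h; apply hw; simpa using h
  · simp

lemma lin_ext {e e' : Carrier Q dx K →ₗ[K] Carrier Q dy K}
    (h : ∀ p q, e (Pi.single q 1) p = e' (Pi.single q 1) p) : e = e' := by
  apply LinearMap.pi_ext'
  intro q
  ext1
  funext p
  exact h p q

lemma exists_rep (T : Fin Q.numArrows → Carrier Q d K →ₗ[K] Carrier Q d K) (hT : ∀ a, GrA a (T a)) :
    ∃ x : RepSpace Q d K, ∀ a, arrowMap Q d K x a = T a := by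
  refine ⟨fun t => T t.1 (Pi.single ⟨Q.src t.1, t.2.2⟩ 1) ⟨Q.tgt t.1, t.2.1⟩, fun a => ?_⟩
  apply lin_ext
  intro p q
  by_cases h : p.1 = Q.tgt a ∧ q.1 = Q.src a
  · obtain ⟨i, p⟩ := p
    obtain ⟨j, q⟩ := q
    obtain ⟨rfl, rfl⟩ : i = Q.tgt a ∧ j = Q.src a := h
    rw [arrowMap_entry]
  · rw [GrA_arrowMap _ a p q h, hT a p q h]

variable {d1 d2 d3 : Fin Q.n → ℕ}

lemma lin_expand (e : Carrier Q dx K →ₗ[K] Carrier Q dy K) (u : Carrier Q dx K) (p) :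
    e u p = ∑ q, u q * e (Pi.single q 1) p := by
  have h : u = ∑ q, u q • (Pi.single q 1 : Carrier Q dx K) := by
    funext r
    simp [Finset.sum_apply, Pi.single_apply]
  conv_lhs => rw [h]
  rw [map_sum, Finset.sum_apply]
  simp

lemma comp_entry (e : Carrier Q d1 K →ₗ[K] Carrier Q d2 K) (f : Carrier Q d2 K →ₗ[K] Carrier Q d3 K)
    (p q) : (f ∘ₗ e) (Pi.single q 1) p = ∑ r, e (Pi.single q 1) r * f (Pi.single r 1) p := by
  rw [LinearMap.comp_apply, lin_expand]

lemma GrA.comp_left {a : Fin Q.numArrows} {e : Carrier Q d1 K →ₗ[K] Carrier Q d2 K} (he : GrA a e)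
    {f : Carrier Q d2 K →ₗ[K] Carrier Q d3 K} (hf : GrV f) : GrA a (f ∘ₗ e) := by
  rw [GrV_iff] at hf
  intro p q h
  rw [comp_entry]
  apply Finset.sum_eq_zero
  intro r _
  by_cases h1 : p.1 = r.1
  · rw [he r q (fun h2 => h ⟨h1.trans h2.1, h2.2⟩), zero_mul]
  · rw [hf p r h1, mul_zero]

lemma GrA.comp_right {a : Fin Q.numArrows} {e : Carrier Q d2 K →ₗ[K] Carrier Q d3 K} (he : GrA a e)
    {f : Carrier Q d1 K →ₗ[K] Carrier Q d2 K} (hf : GrV f) : GrA a (e ∘ₗ f) := by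
  rw [GrV_iff] at hf
  intro p q h
  rw [comp_entry]
  apply Finset.sum_eq_zero
  intro r _
  by_cases h1 : r.1 = q.1
  · rw [he p r (fun h2 => h ⟨h2.1, h1 ▸ h2.2⟩), mul_zero]
  · rw [hf r q h1, zero_mul]

lemma GrA.add {a : Fin Q.numArrows} {e f : Carrier Q dx K →ₗ[K] Carrier Q dy K} (he : GrA a e)
    (hf : GrA a f) : GrA a (e + f) := fun p q h => by
  simp [he p q h, hf p q h]

lemma GrA.sub {a : Fin Q.numArrows} {e f : Carrier Q dx K →ₗ[K] Carrier Q dy K} (he : GrA a e)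
    (hf : GrA a f) : GrA a (e - f) := fun p q h => by
  simp [he p q h, hf p q h]

lemma GrV.comp {f : Carrier Q d2 K →ₗ[K] Carrier Q d3 K} {e : Carrier Q d1 K →ₗ[K] Carrier Q d2 K}
    (hf : GrV f) (he : GrV e) : GrV (f ∘ₗ e) := fun i => by
  rw [LinearMap.comp_assoc, he i, ← LinearMap.comp_assoc, hf i, LinearMap.comp_assoc]

lemma GrV.add {f e : Carrier Q d1 K →ₗ[K] Carrier Q d2 K}
    (hf : GrV f) (he : GrV e) : GrV (f + e) := fun i => by
  rw [LinearMap.add_comp, LinearMap.comp_add, hf i, he i]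

/-- The map `f ↦ f y - z f` is onto. -/
def SurjL (y : RepSpace Q dx K) (z : RepSpace Q dy K) : Prop :=
  ∀ e : Fin Q.numArrows → Carrier Q dx K →ₗ[K] Carrier Q dy K, (∀ a, GrA a (e a)) →
    ∃ f : Carrier Q dx K →ₗ[K] Carrier Q dy K, GrV f ∧
      ∀ a, f ∘ₗ arrowMap Q dx K y a - arrowMap Q dy K z a ∘ₗ f = e a

/-- splitting data -/
structure Spl (dx dy d : Fin Q.n → ℕ) where
  E : (Σ i, Fin (dx i)) ⊕ (Σ i, Fin (dy i)) ≃ (Σ i, Fin (d i))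
  h1 : ∀ p, (E (Sum.inl p)).1 = p.1
  h2 : ∀ p, (E (Sum.inr p)).1 = p.1

lemma exists_Spl (h : ∀ i, d i = dx i + dy i) : Nonempty (Spl dx dy d) := by
  let E0 : ∀ i, Fin (dx i) ⊕ Fin (dy i) ≃ Fin (d i) := fun i =>
    finSumFinEquiv.trans (finCongr (h i).symm)
  exact ⟨⟨(Equiv.sigmaSumDistrib _ _).symm.trans (Equiv.sigmaCongrRight E0), fun p => rfl, fun p => rfl⟩⟩

namespace Spl
variable (s : Spl dx dy d) (K)

noncomputable def p1 : Carrier Q d K →ₗ[K] Carrier Q dx K := LinearMap.funLeft K K (s.E ∘ Sum.inl)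
noncomputable def p2 : Carrier Q d K →ₗ[K] Carrier Q dy K := LinearMap.funLeft K K (s.E ∘ Sum.inr)
noncomputable def i1 : Carrier Q dx K →ₗ[K] Carrier Q d K where
  toFun u := fun r => Sum.elim u (fun _ => 0) (s.E.symm r)
  map_add' u v := by
    funext r; simp only [Pi.add_apply]; rcases s.E.symm r with q | q <;> simp
  map_smul' k u := by
    funext r; simp only [Pi.smul_apply]; rcases s.E.symm r with q | q <;> simp
noncomputable def i2 : Carrier Q dy K →ₗ[K] Carrier Q d K where
  toFun u := fun r => Sum.elim (fun _ => 0) u (s.E.symm r)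
  map_add' u v := by
    funext r; simp only [Pi.add_apply]; rcases s.E.symm r with q | q <;> simp
  map_smul' k u := by
    funext r; simp only [Pi.smul_apply]; rcases s.E.symm r with q | q <;> simp

lemma p1_apply (m : Carrier Q d K) (p) : s.p1 K m p = m (s.E (Sum.inl p)) := rfl
lemma p2_apply (m : Carrier Q d K) (p) : s.p2 K m p = m (s.E (Sum.inr p)) := rfl
lemma i1_apply (m : Carrier Q dx K) (r) : s.i1 K m r = Sum.elim m (fun _ => 0) (s.E.symm r) := rfl
lemma i2_apply (m : Carrier Q dy K) (r) : s.i2 K m r = Sum.elim (fun _ => 0) m (s.E.symm r) := rfl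

lemma p1_i1 : s.p1 K ∘ₗ s.i1 K = LinearMap.id := by
  refine LinearMap.ext fun m => ?_; funext p; simp [p1_apply, i1_apply]
lemma p2_i2 : s.p2 K ∘ₗ s.i2 K = LinearMap.id := by
  refine LinearMap.ext fun m => ?_; funext p; simp [p2_apply, i2_apply]
lemma p1_i2 : s.p1 K ∘ₗ s.i2 K = 0 := by
  refine LinearMap.ext fun m => ?_; funext p; simp [p1_apply, i2_apply]
lemma p2_i1 : s.p2 K ∘ₗ s.i1 K = 0 := by
  refine LinearMap.ext fun m => ?_; funext p; simp [p2_apply, i1_apply]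
lemma sum_ip : s.i1 K ∘ₗ s.p1 K + s.i2 K ∘ₗ s.p2 K = LinearMap.id := by
  refine LinearMap.ext fun m => ?_; funext r
  obtain ⟨t, rfl⟩ := s.E.surjective r
  rcases t with t | t <;> simp [p1_apply, i1_apply, p2_apply, i2_apply]

lemma Gr_p1 : GrV (s.p1 K) := fun i => by
  refine LinearMap.ext fun m => ?_; funext p; simp [p1_apply, proj_apply, s.h1]
lemma Gr_p2 : GrV (s.p2 K) := fun i => by
  refine LinearMap.ext fun m => ?_; funext p; simp [p2_apply, proj_apply, s.h2]
lemma Gr_i1 : GrV (s.i1 K) := fun i => by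
  refine LinearMap.ext fun m => ?_; funext r
  obtain ⟨t, rfl⟩ := s.E.surjective r
  rcases t with t | t <;> simp [i1_apply, proj_apply, s.h1]
lemma Gr_i2 : GrV (s.i2 K) := fun i => by
  refine LinearMap.ext fun m => ?_; funext r
  obtain ⟨t, rfl⟩ := s.E.surjective r
  rcases t with t | t <;> simp [i2_apply, proj_apply, s.h2]

lemma i1_single (q) : s.i1 K (Pi.single q 1) = Pi.single (s.E (Sum.inl q)) 1 := by
  funext r
  obtain ⟨t, rfl⟩ := s.E.surjective r
  rcases t with t | t <;> simp [i1_apply, Pi.single_apply]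

/-- entries of the lower left block -/
lemma ent (A : Carrier Q d K →ₗ[K] Carrier Q d K) (p q) :
    (s.p2 K ∘ₗ A ∘ₗ s.i1 K) (Pi.single q 1) p =
      A (Pi.single (s.E (Sum.inl q)) 1) (s.E (Sum.inr p)) := by
  simp only [LinearMap.comp_apply, i1_single, p2_apply]

end Spl

lemma surjL_of_ext {y : RepSpace Q dx K} {z : RepSpace Q dy K}
    (h : Ext1Zero Q K (fun _ => Set.univ) dx dy y z) : SurjL y z := by
  intro e he
  obtain ⟨s⟩ := exists_Spl (dx := dx) (dy := dy) (d := fun i => dx i + dy i) fun _ => rfl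
  let Y := arrowMap Q dx K y
  let Z := arrowMap Q dy K z
  have hYd : ∀ a, GrA a (Y a) := GrA_arrowMap y
  have hZd : ∀ a, GrA a (Z a) := GrA_arrowMap z
  obtain ⟨w, hw⟩ := exists_rep (d := fun i => dx i + dy i)
    (fun a => s.i1 K ∘ₗ Y a ∘ₗ s.p1 K + s.i2 K ∘ₗ Z a ∘ₗ s.p2 K + s.i2 K ∘ₗ e a ∘ₗ s.p1 K)
    (fun a => ((((hYd a).comp_right (s.Gr_p1 K)).comp_left (s.Gr_i1 K)).add
      (((hZd a).comp_right (s.Gr_p2 K)).comp_left (s.Gr_i2 K))).add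
      (((he a).comp_right (s.Gr_p1 K)).comp_left (s.Gr_i2 K)))
  have a11 := fun u => LinearMap.congr_fun (s.p1_i1 K) u
  have a12 := fun u => LinearMap.congr_fun (s.p1_i2 K) u
  have a21 := fun u => LinearMap.congr_fun (s.p2_i1 K) u
  have a22 := fun u => LinearMap.congr_fun (s.p2_i2 K) u
  have asum := fun u => LinearMap.congr_fun (s.sum_ip K) u
  simp only [LinearMap.comp_apply, LinearMap.id_apply, LinearMap.zero_apply, LinearMap.add_apply]
    at a11 a12 a21 a22 asum
  obtain ⟨σ, hσ, hπ⟩ := h w trivial (s.i2 K) (s.p1 K)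
    ⟨fun a => by rw [hw]; refine LinearMap.ext fun u => ?_; simp [a12, a22, Z], s.Gr_i2 K⟩
    ⟨fun a => by rw [hw]; refine LinearMap.ext fun u => ?_; simp [a12, a11, Y], s.Gr_p1 K⟩
    (fun u v huv => by rw [← a22 u, huv, a22])
    (fun u => ⟨s.i1 K u, a11 u⟩)
    (by
      ext u
      rw [LinearMap.mem_ker, LinearMap.mem_range]
      constructor
      · intro hu
        refine ⟨s.p2 K u, ?_⟩
        conv_rhs => rw [← asum u, hu]
        simp
      · rintro ⟨v, rfl⟩
        exact a12 v)
  refine ⟨s.p2 K ∘ₗ σ, (s.Gr_p2 K).comp hσ.2, fun a => ?_⟩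
  have h3 := hσ.1 a
  rw [hw] at h3
  refine LinearMap.ext fun u => ?_
  have h4 := congrArg (s.p2 K) (LinearMap.congr_fun h3 u)
  have h5 := LinearMap.congr_fun hπ u
  simp only [LinearMap.comp_apply, LinearMap.id_apply, LinearMap.add_apply, map_add, a21, a22] at h4 h5
  simp only [LinearMap.sub_apply, LinearMap.comp_apply]
  rw [h4, h5]
  simp [Z]

lemma ext_of_surjL {y : RepSpace Q dx K} {z : RepSpace Q dy K} (h : SurjL y z) :
    Ext1Zero Q K (fun _ => Set.univ) dx dy y z := by
  intro w _ ι π hι hπ hinj hsurj hker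
  obtain ⟨s0, hs0⟩ := LinearMap.exists_rightInverse_of_surjective π (LinearMap.range_eq_top.mpr hsurj)
  obtain ⟨r, hr⟩ := LinearMap.exists_leftInverse_of_injective ι (LinearMap.ker_eq_bot.mpr hinj)
  let s : Carrier Q dx K →ₗ[K] Carrier Q (fun i => dx i + dy i) K :=
    ∑ i, proj Q _ K i ∘ₗ s0 ∘ₗ proj Q _ K i
  have hsg : GrV s := by
    intro j
    refine LinearMap.ext fun u => ?_
    have e1 : ∀ i j, ∀ u : Carrier Q dx K, proj Q dx K i (proj Q dx K j u) =
        if i = j then proj Q dx K i u else 0 := by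
      intro i j u
      have := LinearMap.congr_fun (proj_proj (d := dx) (K := K) i j) u
      rw [LinearMap.comp_apply] at this
      rw [this]; split_ifs <;> rfl
    have e2 : ∀ i j, ∀ u : Carrier Q (fun i => dx i + dy i) K,
        proj Q (fun i => dx i + dy i) K i (proj Q (fun i => dx i + dy i) K j u) =
        if i = j then proj Q (fun i => dx i + dy i) K i u else 0 := by
      intro i j u
      have := LinearMap.congr_fun (proj_proj (d := fun i => dx i + dy i) (K := K) i j) u
      rw [LinearMap.comp_apply] at this
      rw [this]; split_ifs <;> rfl
    simp only [s, LinearMap.comp_apply, LinearMap.sum_apply, map_sum, e1, e2]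
    refine Finset.sum_congr rfl fun i _ => ?_
    by_cases hij : i = j
    · subst hij; simp
    · simp [hij, Ne.symm hij]
  have hsπ : ∀ u, π (s u) = u := by
    intro u
    have e1 : ∀ i u, π (proj Q _ K i u) = proj Q _ K i (π u) := fun i u =>
      LinearMap.congr_fun (hπ.2 i) u
    have e3 : ∀ u, π (s0 u) = u := fun u => LinearMap.congr_fun hs0 u
    have e4 : ∀ i u, proj Q dx K i (proj Q dx K i u) = proj Q dx K i u := by
      intro i u
      have := LinearMap.congr_fun (proj_proj (d := dx) (K := K) i i) u
      simpa using this
    simp only [s, LinearMap.comp_apply, LinearMap.sum_apply, map_sum, e1, e3, e4]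
    have := LinearMap.congr_fun (sum_proj (Q := Q) (d := dx) (K := K)) u
    simpa [LinearMap.sum_apply] using this
  let W := arrowMap Q (fun i => dx i + dy i) K w
  let Y := arrowMap Q dx K y
  let Z := arrowMap Q dy K z
  have hιr : ∀ v, π v = 0 → ι (r v) = v := by
    intro v hv
    have : v ∈ LinearMap.range ι := by rw [← hker]; exact hv
    obtain ⟨u, rfl⟩ := this
    rw [show r (ι u) = u from LinearMap.congr_fun hr u]
  have hπW : ∀ a v, π (W a v) = Y a (π v) := fun a v => LinearMap.congr_fun (hπ.1 a) v
  have hιZ : ∀ a v, ι (Z a v) = W a (ι v) := fun a v => LinearMap.congr_fun (hι.1 a) v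
  let e : Fin Q.numArrows → Carrier Q dx K →ₗ[K] Carrier Q dy K := fun a =>
    r ∘ₗ (W a ∘ₗ s - s ∘ₗ Y a)
  have hιe : ∀ a u, ι (e a u) = W a (s u) - s (Y a u) := by
    intro a u
    apply hιr
    change π (W a (s u) - s (Y a u)) = 0
    rw [map_sub, hπW, hsπ, hsπ, sub_self]
  have hιg : GrV ι := hι.2
  have heg : ∀ a, GrA a (e a) := by
    intro a p q hpq
    have g1 : GrA a (W a ∘ₗ s - s ∘ₗ Y a) :=
      ((GrA_arrowMap w a).comp_right hsg).sub ((GrA_arrowMap y a).comp_left hsg)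
    have g2 : ι (proj Q _ K p.1 (e a (Pi.single q 1))) = 0 := by
      have : ι (proj Q _ K p.1 (e a (Pi.single q 1))) =
        proj Q _ K p.1 (ι (e a (Pi.single q 1))) := LinearMap.congr_fun (hιg p.1) _
      rw [this, hιe]
      funext t
      rw [proj_apply]
      split_ifs with ht
      · exact g1 t q fun h2 => hpq ⟨ht ▸ h2.1, h2.2⟩
      · rfl
    have g3 : proj Q _ K p.1 (e a (Pi.single q 1)) = 0 := hinj (by rw [g2, map_zero])
    have g4 := congrFun g3 p
    rw [proj_apply, if_pos rfl] at g4
    exact g4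
  obtain ⟨f, hf, hfe⟩ := h e heg
  have hfe' : ∀ a u, f (Y a u) - Z a (f u) = e a u := fun a u => LinearMap.congr_fun (hfe a) u
  refine ⟨s + ι ∘ₗ f, ⟨fun a => ?_, hsg.add (hιg.comp hf)⟩, ?_⟩
  · refine LinearMap.ext fun u => ?_
    change s (Y a u) + ι (f (Y a u)) = W a (s u + ι (f u))
    rw [map_add, ← hιZ]
    have h1 := hιe a u
    rw [← hfe', map_sub] at h1
    have h2 : W a (s u) = s (Y a u) + (ι (f (Y a u)) - ι (Z a (f u))) := by rw [h1]; abel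
    rw [h2]; abel
  · refine LinearMap.ext fun u => ?_
    have : π (ι (f u)) = 0 := by
      have : ι (f u) ∈ LinearMap.ker π := by rw [hker]; exact ⟨_, rfl⟩
      exact this
    simp [hsπ, this]

end tr
end SchQ

namespace SchQ
open Finset
set_option linter.style.haveILetI false
set_option linter.unusedSectionVars false
set_option linter.unusedDecidableInType false
set_option linter.unusedFintypeInType false

section fin
open QuiverData
variable {Q : QuiverData} {K : Type} [Field K] {d dx dy : Fin Q.n → ℕ}

def DQ (Q : QuiverData) (d : Fin Q.n → ℕ) :
    QD (Σ i : Fin Q.n, Fin (d i)) (Fin Q.n) (Fin Q.numArrows) := ⟨Sigma.fst, Q.src, Q.tgt⟩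

def eC (Q : QuiverData) (d : Fin Q.n → ℕ) : Co (DQ Q d) → Coords Q d := fun t =>
  ⟨t.1.1, (Fin.cast (congrArg d t.2.1.1) t.1.2.1.2, Fin.cast (congrArg d t.2.1.2) t.1.2.2.2)⟩

lemma eC_inj : Function.Injective (eC Q d) := by
  rintro ⟨⟨a, ⟨i, p⟩, ⟨j, q⟩⟩, ⟨h1, h2⟩, k1⟩ ⟨⟨a', ⟨i', p'⟩, ⟨j', q'⟩⟩, ⟨h1', h2'⟩, k2⟩ h
  obtain rfl : i = Q.tgt a := h1
  obtain rfl : j = Q.src a := h2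
  obtain rfl : i' = Q.tgt a' := h1'
  obtain rfl : j' = Q.src a' := h2'
  have ha : a = a' := congrArg Sigma.fst h
  subst ha
  have h3 := eq_of_heq (Sigma.mk.inj h).2
  have h4 : p = p' := congrArg Prod.fst h3
  have h5 : q = q' := congrArg Prod.snd h3
  subst h4 h5
  rfl

lemma toM_apply (f : Carrier Q d K →ₗ[K] Carrier Q d K) (p q) :
    LinearMap.toMatrix' f p q = f (Pi.single q 1) p := by
  rw [LinearMap.toMatrix'_apply]

lemma toL_apply (m : Matrix (Σ i : Fin Q.n, Fin (d i)) (Σ i : Fin Q.n, Fin (d i)) K) (p q) :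
    Matrix.toLin' m (Pi.single q 1) p = m p q := by
  rw [← toM_apply, LinearMap.toMatrix'_toLin']

lemma aM_eC (x : RepSpace Q d K) (a : Fin Q.numArrows) :
    aM (DQ Q d) (fun _ _ => True) (x ∘ eC Q d) a = LinearMap.toMatrix' (arrowMap Q d K x a) := by
  ext p q
  rw [toM_apply]
  by_cases h : p.1 = Q.tgt a ∧ q.1 = Q.src a
  · have h' : ((DQ Q d).v p = (DQ Q d).tgt a ∧ (DQ Q d).v q = (DQ Q d).src a) ∧ True := ⟨h, trivial⟩
    simp only [aM, Matrix.of_apply, dif_pos h']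
    obtain ⟨i, p⟩ := p
    obtain ⟨j, q⟩ := q
    obtain ⟨rfl, rfl⟩ : i = Q.tgt a ∧ j = Q.src a := h
    rw [arrowMap_entry]
    rfl
  · have h' : ¬ (((DQ Q d).v p = (DQ Q d).tgt a ∧ (DQ Q d).v q = (DQ Q d).src a) ∧ True) :=
      fun h2 => h h2.1
    simp only [aM, Matrix.of_apply, dif_neg h']
    rw [GrA_arrowMap x a p q h]

lemma GrA_toLin {s} {X : Fin Q.numArrows → Matrix (Σ i : Fin Q.n, Fin (d i)) (Σ i : Fin Q.n, Fin (d i)) K}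
    (hX : AS (DQ Q d) s X) (a) : GrA a (Matrix.toLin' (X a)) := by
  intro p q h
  rw [toL_apply]
  exact hX a p q fun h2 => h h2.1

lemma surjL_of_surjAt {c : (Σ i : Fin Q.n, Fin (d i)) → Fin 3} (s : Spl dx dy d)
    (hc1 : ∀ p, c (s.E (Sum.inl p)) = 0) (hc2 : ∀ p, c (s.E (Sum.inr p)) = 2)
    {X : Fin Q.numArrows → Matrix (Σ i : Fin Q.n, Fin (d i)) (Σ i : Fin Q.n, Fin (d i)) K}
    (hX : AS (DQ Q d) (up c) X) (hs : SurjAt (DQ Q d) c X) :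
    ∃ (y : RepSpace Q dx K) (z : RepSpace Q dy K), SurjL y z := by
  let XL := fun a => Matrix.toLin' (X a)
  have hXL : ∀ a, GrA a (XL a) := GrA_toLin hX
  obtain ⟨y, hy⟩ := exists_rep (d := dx) (fun a => s.p1 K ∘ₗ XL a ∘ₗ s.i1 K)
    fun a => ((hXL a).comp_right (s.Gr_i1 K)).comp_left (s.Gr_p1 K)
  obtain ⟨z, hz⟩ := exists_rep (d := dy) (fun a => s.p2 K ∘ₗ XL a ∘ₗ s.i2 K)
    fun a => ((hXL a).comp_right (s.Gr_i2 K)).comp_left (s.Gr_p2 K)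
  refine ⟨y, z, fun e he => ?_⟩
  let A := fun a => s.i2 K ∘ₗ e a ∘ₗ s.p1 K
  obtain ⟨m, hm, hmX⟩ := hs fun t => A t.1.1 (Pi.single t.1.2.2 1) t.1.2.1
  let M := Matrix.toLin' m
  have hM1 : s.p1 K ∘ₗ M = 0 := by
    apply lin_ext
    intro p q
    rw [LinearMap.comp_apply, Spl.p1_apply, toL_apply]
    apply hm
    rintro ⟨-, h2⟩
    simp only [lo, hc1] at h2
    omega
  have hM2 : M ∘ₗ s.i2 K = 0 := by
    apply lin_ext
    intro p q
    rw [LinearMap.comp_apply]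
    have : s.i2 K (Pi.single q 1) = Pi.single (s.E (Sum.inr q)) 1 := by
      funext r
      obtain ⟨t, rfl⟩ := s.E.surjective r
      rcases t with t | t <;> simp [Spl.i2_apply, Pi.single_apply]
    rw [this, toL_apply]
    apply hm
    rintro ⟨-, h2⟩
    simp only [lo, hc2] at h2
    omega
  have hMg : GrV M := by
    rw [GrV_iff]
    intro p q hpq
    rw [toL_apply]
    exact hm p q fun h => hpq h.1
  have hfg : GrV (s.p2 K ∘ₗ M ∘ₗ s.i1 K) := (s.Gr_p2 K).comp (hMg.comp (s.Gr_i1 K))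
  refine ⟨s.p2 K ∘ₗ M ∘ₗ s.i1 K, hfg, fun a => ?_⟩
  have hg : GrA a ((s.p2 K ∘ₗ M ∘ₗ s.i1 K) ∘ₗ arrowMap Q dx K y a -
      arrowMap Q dy K z a ∘ₗ s.p2 K ∘ₗ M ∘ₗ s.i1 K) :=
    ((GrA_arrowMap y a).comp_left hfg).sub ((GrA_arrowMap z a).comp_right hfg)
  have key : (s.p2 K ∘ₗ M ∘ₗ s.i1 K) ∘ₗ arrowMap Q dx K y a -
      arrowMap Q dy K z a ∘ₗ s.p2 K ∘ₗ M ∘ₗ s.i1 K =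
      s.p2 K ∘ₗ (M ∘ₗ XL a - XL a ∘ₗ M) ∘ₗ s.i1 K := by
    have asum := fun u => LinearMap.congr_fun (s.sum_ip K) u
    have b1 := fun u => LinearMap.congr_fun hM1 u
    have b2 := fun u => LinearMap.congr_fun hM2 u
    simp only [LinearMap.comp_apply, LinearMap.id_apply, LinearMap.zero_apply, LinearMap.add_apply]
      at asum b1 b2
    rw [hy, hz]
    refine LinearMap.ext fun u => ?_
    simp only [LinearMap.sub_apply, LinearMap.comp_apply, map_sub]
    congr 1
    · conv_rhs => rw [← asum (XL a (s.i1 K u)), map_add, b2, add_zero]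
    · conv_rhs => rw [← asum (M (s.i1 K u)), b1, map_zero, zero_add]
  apply lin_ext
  intro p q
  by_cases h : p.1 = Q.tgt a ∧ q.1 = Q.src a
  · rw [key, s.ent K]
    have h2 := hmX ⟨(a, s.E (Sum.inr p), s.E (Sum.inl q)),
      ⟨⟨(s.h2 p).trans h.1, (s.h1 q).trans h.2⟩, trivial⟩⟩ (by simp [up, hc1, hc2])
    simp only at h2
    rw [← s.ent K] at h2
    have h3 : s.p2 K ∘ₗ A a ∘ₗ s.i1 K = e a := by
      refine LinearMap.ext fun u => ?_
      have a11 := LinearMap.congr_fun (s.p1_i1 K) u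
      have a22 := LinearMap.congr_fun (s.p2_i2 K) (e a u)
      simp only [LinearMap.comp_apply, LinearMap.id_apply] at a11 a22
      simp only [A, LinearMap.comp_apply, a11, a22]
    rw [h3] at h2
    have h4 := toL_apply (m * X a - X a * m) (s.E (Sum.inr p)) (s.E (Sum.inl q))
    rw [map_sub, Matrix.toLin'_mul, Matrix.toLin'_mul] at h4
    exact h4.trans h2
  · rw [hg p q h, he a p q h]

lemma algInd_of_surjL [Infinite K] {c : (Σ i : Fin Q.n, Fin (d i)) → Fin 3} (s : Spl dx dy d)
    (hc1 : ∀ p, c (s.E (Sum.inl p)) = 0) (hc2 : ∀ p, c (s.E (Sum.inr p)) = 2)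
    {y : RepSpace Q dx K} {z : RepSpace Q dy K} (h : SurjL y z) :
    AlgebraicIndependent K
      (Phi (DQ Q d) c (MvPolynomial.X : Par (DQ Q d) c → MvPolynomial (Par (DQ Q d) c) K)) := by
  let Y := arrowMap Q dx K y
  let Z := arrowMap Q dy K z
  have hYd : ∀ a, GrA a (Y a) := GrA_arrowMap y
  have hZd : ∀ a, GrA a (Z a) := GrA_arrowMap z
  let XL := fun a => s.i1 K ∘ₗ Y a ∘ₗ s.p1 K + s.i2 K ∘ₗ Z a ∘ₗ s.p2 K
  have hXL : ∀ a, GrA a (XL a) := fun a =>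
    (((hYd a).comp_right (s.Gr_p1 K)).comp_left (s.Gr_i1 K)).add
      (((hZd a).comp_right (s.Gr_p2 K)).comp_left (s.Gr_i2 K))
  have a11 := fun u => LinearMap.congr_fun (s.p1_i1 K) u
  have a12 := fun u => LinearMap.congr_fun (s.p1_i2 K) u
  have a21 := fun u => LinearMap.congr_fun (s.p2_i1 K) u
  have a22 := fun u => LinearMap.congr_fun (s.p2_i2 K) u
  simp only [LinearMap.comp_apply, LinearMap.id_apply, LinearMap.zero_apply]
    at a11 a12 a21 a22
  have hlo : ∀ p q, ¬ up c p q → ∃ p' q', p = s.E (Sum.inr p') ∧ q = s.E (Sum.inl q') := by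
    intro p q hpq
    obtain ⟨p, rfl⟩ := s.E.surjective p
    obtain ⟨q, rfl⟩ := s.E.surjective q
    rcases p with p | p <;> rcases q with q | q <;> simp [up, hc1, hc2] at hpq ⊢
  have hlo2 : ∀ p q, lo c (s.E (Sum.inr p)) (s.E (Sum.inl q)) := by
    intro p q; simp [lo, hc1, hc2]
  refine algInd_of_surj (X := fun a => LinearMap.toMatrix' (XL a)) ?_ ?_
  · intro a p q hpq
    change LinearMap.toMatrix' (XL a) p q = 0
    rw [toM_apply]
    by_cases h1 : p.1 = Q.tgt a ∧ q.1 = Q.src a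
    · obtain ⟨p', q', rfl, rfl⟩ := hlo p q fun h2 => hpq ⟨h1, h2⟩
      rw [← s.ent K]
      simp [XL, a11, a12, a21, a22]
    · exact hXL a p q h1
  · intro y0
    obtain ⟨f, hf, hfe⟩ := h
      (fun a => s.p2 K ∘ₗ Matrix.toLin' (aM (DQ Q d) (fun _ _ => True) y0 a) ∘ₗ s.i1 K)
      (fun a => ((GrA_toLin (AS_aM y0) a).comp_right (s.Gr_i1 K)).comp_left (s.Gr_p2 K))
    let M := s.i2 K ∘ₗ f ∘ₗ s.p1 K
    have hMg : GrV M := (s.Gr_i2 K).comp (hf.comp (s.Gr_p1 K))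
    refine ⟨LinearMap.toMatrix' M, ?_, ?_⟩
    · intro p q hpq
      rw [toM_apply]
      by_cases h1 : p.1 = q.1
      · have h2 : ¬ lo c p q := fun h2 => hpq ⟨h1, h2⟩
        obtain ⟨p, rfl⟩ := s.E.surjective p
        obtain ⟨q, rfl⟩ := s.E.surjective q
        rcases p with p | p
        · simp [M, LinearMap.comp_apply, Spl.i2_apply]
        · rcases q with q | q
          · exact absurd (hlo2 p q) h2
          · have : s.p1 K (Pi.single (s.E (Sum.inr q)) 1) = 0 := by
              funext r; simp [Spl.p1_apply, Pi.single_apply]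
            simp [M, LinearMap.comp_apply, this]
      · exact (GrV_iff M).mp hMg p q h1
    · rintro ⟨⟨a, p, q⟩, h1, k1⟩ ht
      obtain ⟨p, q, rfl, rfl⟩ := hlo p q ht
      simp only
      rw [← LinearMap.toMatrix'_comp, ← LinearMap.toMatrix'_comp, ← map_sub, toM_apply, ← s.ent K]
      have h3 : s.p2 K ∘ₗ (M ∘ₗ XL a - XL a ∘ₗ M) ∘ₗ s.i1 K = f ∘ₗ Y a - Z a ∘ₗ f := by
        refine LinearMap.ext fun u => ?_
        simp [M, XL, a11, a12, a21, a22]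
      rw [h3, hfe, s.ent K, toL_apply]
      simp only [aM, Matrix.of_apply]
      rw [dif_pos ⟨h1, trivial⟩]

lemma sub_of_algInd [IsAlgClosed K] {c : (Σ i : Fin Q.n, Fin (d i)) → Fin 3}
    (hc : AlgebraicIndependent K
      (Phi (DQ Q d) c (MvPolynomial.X : Par (DQ Q d) c → MvPolynomial (Par (DQ Q d) c) K)))
    (x : RepSpace Q d K) : ∃ N, Stable Q d K x N ∧
      ∀ i, vdim Q d K N i = Nat.card {q : J0 c // q.1.1 = i} := by
  classical
  obtain ⟨e, z, b, he, hz, hez, hb⟩ := exists_sub hc (x ∘ eC Q d)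
  have hzm : ∀ i (u : J0 c → K), proj Q d K i (z.mulVec u) =
      z.mulVec (fun q => if q.1.1 = i then u q else 0) := by
    intro i u
    funext p
    rw [proj_apply]
    simp only [Matrix.mulVec, dotProduct]
    split_ifs with h
    · refine Finset.sum_congr rfl fun q _ => ?_
      split_ifs with h2
      · rfl
      · rw [hz p q (fun h3 => h2 (h3.symm.trans h)), zero_mul, zero_mul]
    · symm
      apply Finset.sum_eq_zero
      intro q _
      split_ifs with h2
      · rw [hz p q (fun h3 => h (h3.trans h2)), zero_mul]
      · rw [mul_zero]
  have hinj : Function.Injective (Matrix.toLin' z) := by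
    intro u v huv
    have h1 : ∀ u : J0 c → K, u = fun q => Matrix.toLin' z u (e q) := by
      intro u
      have h2 : (z.submatrix e id).mulVec u = u := by rw [hez, Matrix.one_mulVec]
      conv_lhs => rw [← h2]
      rfl
    rw [h1 u, h1 v, huv]
  refine ⟨LinearMap.range (Matrix.toLin' z), ⟨?_, ?_⟩, ?_⟩
  · rintro a _ ⟨_, ⟨u, rfl⟩, rfl⟩
    refine ⟨(b a).mulVec u, ?_⟩
    have h1 := hb a
    rw [aM_eC] at h1
    have h2 := LinearMap.toMatrix'_mulVec (arrowMap Q d K x a) (z.mulVec u)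
    rw [Matrix.toLin'_apply, Matrix.toLin'_apply, ← h2, Matrix.mulVec_mulVec, Matrix.mulVec_mulVec,
      h1]
  · rintro i _ ⟨_, ⟨u, rfl⟩, rfl⟩
    rw [Matrix.toLin'_apply, hzm]
    exact ⟨_, rfl⟩
  · intro i
    let ex : ({q : J0 c // q.1.1 = i} → K) →ₗ[K] (J0 c → K) :=
      { toFun := fun u q => if h : q.1.1 = i then u ⟨q, h⟩ else 0
        map_add' := fun u v => by funext q; by_cases h : q.1.1 = i <;> simp [h]
        map_smul' := fun k v => by funext q; by_cases h : q.1.1 = i <;> simp [h] }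
    have hex : Function.Injective ex := by
      intro u v huv
      funext q
      have := congrFun huv q.1
      simpa [ex, q.2] using this
    have hr : (LinearMap.range (Matrix.toLin' z)).map (proj Q d K i) =
        LinearMap.range (Matrix.toLin' z ∘ₗ ex) := by
      ext v
      constructor
      · rintro ⟨_, ⟨u, rfl⟩, rfl⟩
        refine ⟨fun q => u q.1, ?_⟩
        rw [LinearMap.comp_apply, Matrix.toLin'_apply, Matrix.toLin'_apply, hzm]
        congr 1
      · rintro ⟨u, rfl⟩
        refine ⟨Matrix.toLin' z (ex u), ⟨_, rfl⟩, ?_⟩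
        rw [LinearMap.comp_apply, Matrix.toLin'_apply, hzm]
        congr 1
        funext q
        by_cases h : q.1.1 = i <;> simp [ex, h]
    rw [vdim, hr, LinearMap.finrank_range_of_inj
      (f := Matrix.toLin' z ∘ₗ ex) (by rw [LinearMap.coe_comp]; exact hinj.comp hex), Module.finrank_pi,
      Nat.card_eq_fintype_card]

theorem c_to_b [IsAlgClosed K] (hd : ∀ i, d i = dx i + dy i) {y : RepSpace Q dx K}
    {z : RepSpace Q dy K} (h : SurjL y z) (x : RepSpace Q d K) :
    ∃ N, Stable Q d K x N ∧ ∀ i, vdim Q d K N i = dx i := by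
  have : Infinite K := IsAlgClosed.instInfinite
  obtain ⟨s⟩ := exists_Spl hd
  let c : (Σ i : Fin Q.n, Fin (d i)) → Fin 3 := fun p =>
    Sum.elim (fun _ => 0) (fun _ => 2) (s.E.symm p)
  have hc1 : ∀ p, c (s.E (Sum.inl p)) = 0 := fun p => by simp [c]
  have hc2 : ∀ p, c (s.E (Sum.inr p)) = 2 := fun p => by simp [c]
  obtain ⟨N, hN, hv⟩ := sub_of_algInd (algInd_of_surjL s hc1 hc2 h) x
  refine ⟨N, hN, fun i => ?_⟩
  rw [hv]
  let g : Fin (dx i) → {q : J0 c // q.1.1 = i} := fun k => ⟨⟨s.E (Sum.inl ⟨i, k⟩), hc1 _⟩, s.h1 _⟩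
  have hg : Function.Bijective g := by
    constructor
    · intro k l hkl
      have h1 := congrArg (fun t => t.1.1) hkl
      simpa [g] using h1
    · rintro ⟨⟨q, hq0⟩, hqi⟩
      obtain ⟨t, rfl⟩ := s.E.surjective q
      rcases t with ⟨j, t⟩ | t
      · obtain rfl : j = i := (s.h1 _).symm.trans hqi
        exact ⟨t, rfl⟩
      · rw [hc2] at hq0; simp at hq0
  rw [← Nat.card_congr (Equiv.ofBijective g hg), Nat.card_eq_fintype_card, Fintype.card_fin]

theorem a_to_c [IsAlgClosed K] (hd : ∀ i, d i = dx i + dy i) {U : Set (RepSpace Q d K)}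
    (hU : Dense U) (hsub : ∀ x ∈ U, ∃ N, Stable Q d K x N ∧ ∀ i, vdim Q d K N i = dx i) :
    ∃ (y : RepSpace Q dx K) (z : RepSpace Q dy K), SurjL y z := by
  classical
  have : Infinite K := IsAlgClosed.instInfinite
  obtain ⟨c, ⟨hc02, hcard⟩, hc⟩ := exists_dominant (D := DQ Q d) (K := K)
    (fun c => (∀ q, c q = 0 ∨ c q = 2) ∧ ∀ i, Nat.card {p // (DQ Q d).v p = i ∧ c p = 0} = dx i) (by
      intro p hp
      let p' := MvPolynomial.rename (eC Q d) p
      have hp' : p' ≠ 0 := fun h => hp (MvPolynomial.rename_injective _ eC_inj (by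
        rw [map_zero]; exact h))
      have hopen : IsOpen {x : RepSpace Q d K | MvPolynomial.eval x p' ≠ 0} :=
        TopologicalSpace.isOpen_generateFrom_of_mem ⟨p', rfl⟩
      have hne : {x : RepSpace Q d K | MvPolynomial.eval x p' ≠ 0}.Nonempty := by
        by_contra hcon
        apply hp'
        apply MvPolynomial.funext
        intro x
        by_contra h2
        exact hcon ⟨x, by simpa using h2⟩
      obtain ⟨x, hx, hxU⟩ := hU.inter_open_nonempty _ hopen hne
      obtain ⟨N, hN, hv⟩ := hsub x hxU
      refine ⟨x ∘ eC Q d, ?_, ?_⟩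
      · rw [← MvPolynomial.eval_rename]; exact hx
      · obtain ⟨c, h1, h2, h3⟩ := cell_of_sub (D := DQ Q d)
          (X := aM (DQ Q d) (fun _ _ => True) (x ∘ eC Q d)) (AS_aM _) (proj Q d K)
          (fun i n p => rfl) (N := N)
          (fun a n hn => by
            rw [aM_eC, LinearMap.toMatrix'_mulVec]
            exact hN.1 a ⟨n, hn, rfl⟩)
          (fun i n hn => hN.2 i ⟨n, hn, rfl⟩)
        exact ⟨c, ⟨h1, fun i => (h3 i).trans (hv i)⟩, h2⟩)
  obtain ⟨X, hX, hs⟩ := surj_of_algInd hc02 hc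
  have h1 : ∀ i, Fintype.card {k : Fin (d i) // c ⟨i, k⟩ = 0} = dx i := by
    intro i
    rw [← hcard i, ← Nat.card_eq_fintype_card]
    refine Nat.card_congr (Equiv.ofBijective (fun k => ⟨⟨i, k.1⟩, rfl, k.2⟩) ⟨?_, ?_⟩)
    · intro k l hkl
      have := congrArg Subtype.val hkl
      apply Subtype.ext
      simpa using this
    · rintro ⟨⟨j, k⟩, hj, hk⟩
      obtain rfl : j = i := hj
      exact ⟨⟨k, hk⟩, rfl⟩
  have h2 : ∀ i, Fintype.card {k : Fin (d i) // ¬ c ⟨i, k⟩ = 0} = dy i := by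
    intro i
    rw [Fintype.card_subtype_compl, h1, Fintype.card_fin, hd i]
    omega
  let α := fun i => (Fintype.equivFinOfCardEq (h1 i)).symm
  let β := fun i => (Fintype.equivFinOfCardEq (h2 i)).symm
  let s : Spl dx dy d :=
    ⟨(Equiv.sigmaSumDistrib _ _).symm.trans (Equiv.sigmaCongrRight fun i =>
      ((α i).sumCongr (β i)).trans (Equiv.sumCompl fun k => c ⟨i, k⟩ = 0)),
      fun p => rfl, fun p => rfl⟩
  exact surjL_of_surjAt s (fun p => (α p.1 p.2).2)
    (fun p => (hc02 _).resolve_left (β p.1 p.2).2) hX hs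

end fin
end SchQ

open QuiverData in
/-- Schofield. For an acyclic quiver `Q` and dimension vectors
`d' ≤ d`, the following are equivalent: (a) generically, `d`-dimensional representations
of `KQ` have a subrepresentation of dimension vector `d'`; (b) every `d`-dimensional
representation has a subrepresentation of dimension vector `d'`;
(c) `ext(d', d − d') = 0`. (Stated as (a) ↔ (c) and (b) ↔ (c).) -/
theorem statement_6 (K : Type) [Field K] [IsAlgClosed K]
    (Q : QuiverData) (hacyc : Acyclic Q)
    (d d' : Fin Q.n → ℕ) (hle : ∀ i, d' i ≤ d i) :
    ((∃ U : Set (RepSpace Q d K), IsOpen U ∧ Dense U ∧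
        ∀ x ∈ U, ∃ N, Stable Q d K x N ∧ ∀ i, vdim Q d K N i = d' i)
      ↔ ∃ (y : RepSpace Q d' K) (z : RepSpace Q (fun i => d i - d' i) K),
          Ext1Zero Q K (fun _ => Set.univ) d' (fun i => d i - d' i) y z) ∧
    ((∀ x : RepSpace Q d K, ∃ N, Stable Q d K x N ∧ ∀ i, vdim Q d K N i = d' i)
      ↔ ∃ (y : RepSpace Q d' K) (z : RepSpace Q (fun i => d i - d' i) K),
          Ext1Zero Q K (fun _ => Set.univ) d' (fun i => d i - d' i) y z) := by
  have hd : ∀ i, d i = d' i + (fun i => d i - d' i) i := by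
    intro i
    have := hle i
    simp only
    omega
  refine ⟨⟨?_, ?_⟩, ⟨?_, ?_⟩⟩
  · rintro ⟨U, _, hU, hsub⟩
    obtain ⟨y, z, h⟩ := SchQ.a_to_c hd hU hsub
    exact ⟨y, z, SchQ.ext_of_surjL h⟩
  · rintro ⟨y, z, h⟩
    exact ⟨Set.univ, isOpen_univ, dense_univ,
      fun x _ => SchQ.c_to_b hd (SchQ.surjL_of_ext h) x⟩
  · intro hall
    obtain ⟨y, z, h⟩ := SchQ.a_to_c hd dense_univ (fun x _ => hall x)
    exact ⟨y, z, SchQ.ext_of_surjL h⟩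
  · rintro ⟨y, z, h⟩ x
    exact SchQ.c_to_b hd (SchQ.surjL_of_ext h) x
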